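/- arXiv:2308.10817 — 9 statements merged into one kernel-verified Lean document; each statement's English description precedes it below -/
import Mathlib

section
/- For every natural number N ≥ 1, the number of primes less than or equal to N is at least (1/2)·log₂ N. In particular, the prime counting function is unbounded, so there are infinitely many primes. -/
/-!
Every `1 ≤ n ≤ N` factors as `n = m² * ∏ p ∈ s, p` with `s` a set of primes `≤ N` and `m ≤ √N`, so
the pairs `(s, m)` encode all of `1, …, N` and `N ≤ 2 ^ π(N) * √N`
(`Nat.smoothNumbersUpTo_card_le`, applied with the vacuous smoothness bound `N + 1`).
Squaring and cancelling gives `N ≤ 4 ^ π(N)`. Were there only `c` primes, `N = 4 ^ (c + 1)` would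
violate this.
-/

theorem le_two_pow_primeCounting_mul_sqrt (N : ℕ) :
    N ≤ 2 ^ Nat.primeCounting N * Nat.sqrt N := by
  have h := Nat.smoothNumbersUpTo_card_le N (N + 1)
  rw [Nat.primesBelow_card_eq_primeCounting', ← Nat.primeCounting_eq_primeCounting'_succ] at h
  refine le_trans ?_ h
  have hsub : Finset.Icc 1 N ⊆ Nat.smoothNumbersUpTo N (N + 1) := by
    intro n hn
    rw [Finset.mem_Icc] at hn
    exact Nat.mem_smoothNumbersUpTo.mpr
      ⟨hn.2, Nat.mem_smoothNumbers_of_lt (by omega) (by omega)⟩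
  simpa using Finset.card_le_card hsub

theorem le_four_pow_primeCounting {N : ℕ} (hN : 1 ≤ N) : N ≤ 4 ^ Nat.primeCounting N := by
  have h := le_two_pow_primeCounting_mul_sqrt N
  have hsq : N * N ≤ 4 ^ Nat.primeCounting N * N :=
    calc N * N ≤ (2 ^ Nat.primeCounting N * Nat.sqrt N) * (2 ^ Nat.primeCounting N * Nat.sqrt N) :=
          Nat.mul_le_mul h h
      _ = 4 ^ Nat.primeCounting N * (Nat.sqrt N * Nat.sqrt N) := by
          rw [mul_mul_mul_comm, ← mul_pow, show 2 * 2 = 4 from rfl]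
      _ ≤ 4 ^ Nat.primeCounting N * N := Nat.mul_le_mul_left _ (Nat.sqrt_le N)
  exact Nat.le_of_mul_le_mul_right hsq hN

/-- Erdős–Euclid theorem: for every `N ≥ 1`, the number of primes `≤ N` is at least
`(1/2) · log₂ N`; in particular there are infinitely many primes. -/
theorem erdos_euclid :
    (∀ N : ℕ, 1 ≤ N → (1 / 2 : ℝ) * Real.logb 2 N ≤ (Nat.primeCounting N : ℝ)) ∧
      {p : ℕ | p.Prime}.Infinite := by
  constructor
  · intro N hN
    have h : (N : ℝ) ≤ (2 : ℝ) ^ (2 * Nat.primeCounting N) := by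
      rw [pow_mul]
      norm_num
      exact_mod_cast le_four_pow_primeCounting hN
    have hlog := Real.logb_le_logb_of_le (b := 2) (by norm_num) (by exact_mod_cast hN) h
    rw [Real.logb_pow, Real.logb_self_eq_one (by norm_num)] at hlog
    push_cast at hlog
    linarith
  · intro hfin
    set c := hfin.toFinset.card
    have hle : Nat.primeCounting (4 ^ (c + 1)) ≤ c := by
      rw [← Nat.primesLE_card_eq_primeCounting]
      refine Finset.card_le_card fun p hp => ?_
      simpa using Nat.prime_of_mem_primesLE hp
    have h := le_four_pow_primeCounting (N := 4 ^ (c + 1)) (Nat.one_le_pow _ _ (by norm_num))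
    have := (Nat.pow_le_pow_iff_right (by norm_num : 1 < 4)).mp h
    omega
end

section
/- For every natural number N ≥ 1, one has N ≤ 2^{π(N)} · √N (as real numbers). -/
/-- Counting core of the Erdős–Euclid argument: for every `N ≥ 1`,
`N ≤ 2 ^ π(N) · √N` as real numbers. -/
theorem counting_core_erdos_euclid :
    ∀ N : ℕ, 1 ≤ N → (N : ℝ) ≤ 2 ^ (Nat.primeCounting N) * Real.sqrt N := by
  intro N _
  -- Every `n ≤ N` is `(N + 1)`-smooth, and Mathlib bounds the number of smooth numbers up to `N`
  -- by counting the decompositions `n = s * y ^ 2` with `s` squarefree.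
  have hsub : Finset.Icc 1 N ⊆ Nat.smoothNumbersUpTo N (N + 1) := by
    intro n hn
    rw [Finset.mem_Icc] at hn
    exact Nat.mem_smoothNumbersUpTo.mpr
      ⟨hn.2, Nat.mem_smoothNumbers_of_lt (by omega) (by omega)⟩
  have hcard : N ≤ 2 ^ Nat.primeCounting N * N.sqrt := by
    have h := (Finset.card_le_card hsub).trans (Nat.smoothNumbersUpTo_card_le N (N + 1))
    rwa [Nat.card_Icc, Nat.add_sub_cancel, Nat.primesBelow_card_eq_primeCounting'] at h
  calc (N : ℝ) ≤ 2 ^ Nat.primeCounting N * (N.sqrt : ℝ) := by exact_mod_cast hcard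
    _ ≤ 2 ^ Nat.primeCounting N * Real.sqrt N := by
      gcongr
      exact Real.nat_sqrt_le_real_sqrt
end

section
/- The sum over primes p ≤ N of 1/p is asymptotically equal to log log N; that is, the ratio (∑_{p ≤ N, p prime} 1/p) / (log log N) tends to 1 as N → ∞. -/
/-!
Legendre's formula `log n! = ∑_{p ≤ n} v_p(n!) log p`, with `n / p - 1 ≤ v_p(n!) ≤ n / (p - 1)`,
Stirling's lower bound for `n!` and Chebyshev's bound `θ(n) = O(n)` together give Mertens' first
theorem `∑_{p ≤ n} log p / p = log n + O(1)` (`exists_abs_logSum_sub_log_le`).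

Since `log n` is the sum of the increments `log k - log (k - 1)`, this says that the sequence
`1_{k prime} log k / k - (log k - log (k - 1))` has bounded partial sums. By Dirichlet's test,
weighting it by the decreasing null sequence `1 / log k` yields a convergent series, so
`∑_{p ≤ n} 1 / p` differs by `O(1)` from `∑_{k ≤ n} (log k - log (k - 1)) / log k`. The latter is a
Riemann sum for `∫ du / u` with `u = log k`, and it is within `O(1)` of `log (log n)`
(`sum_increment_div_log_bounds`). As `log (log n) → ∞`, the bounded error is negligible.
-/

open Filter

namespace MertensSecond

/-- The sum `∑_{p ≤ n} log p / p` of Mertens' first theorem. -/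
noncomputable def logSum (n : ℕ) : ℝ := ∑ p ∈ n.primesLE, Real.log p / p

/-- The logarithmic form of the prime factorization of `n!`. -/
lemma log_factorial_eq (n : ℕ) :
    Real.log (n.factorial : ℝ) =
      ∑ p ∈ n.primesLE, (n.factorial.factorization p : ℝ) * Real.log p := by
  rw [Real.log_nat_eq_sum_factorization]
  apply Finsupp.sum_of_support_subset
  · intro p hp
    rw [Nat.support_factorization] at hp
    have hpp := Nat.prime_of_mem_primeFactors hp
    exact Nat.mem_primesLE.2
      ⟨hpp.dvd_factorial.1 (Nat.dvd_of_mem_primeFactors hp), hpp⟩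
  · simp

lemma div_sub_one_le_factorization {n p : ℕ} (hp : p.Prime) (hpn : p ≤ n) :
    (n : ℝ) / p - 1 ≤ (n.factorial.factorization p : ℝ) := by
  have h1 : n / p ≤ n.factorial.factorization p := by
    rw [Nat.factorization_factorial hp (Nat.lt_add_one _)]
    have hmem : 1 ∈ Finset.Ico 1 (Nat.log p n + 1) := by
      have := Nat.log_pos hp.one_lt hpn
      simp only [Finset.mem_Ico]
      omega
    simpa using Finset.single_le_sum (f := fun i => n / p ^ i) (fun _ _ => Nat.zero_le _) hmem
  have h2 : (n : ℝ) / p < ((n / p : ℕ) : ℝ) + 1 := by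
    have := Nat.lt_floor_add_one ((n : ℝ) / p)
    rwa [Nat.floor_div_eq_div] at this
  have h3 : ((n / p : ℕ) : ℝ) ≤ (n.factorial.factorization p : ℝ) := by exact_mod_cast h1
  linarith

lemma factorization_le_div {n p : ℕ} (hp : p.Prime) :
    (n.factorial.factorization p : ℝ) ≤ (n : ℝ) / ((p : ℝ) - 1) := by
  have h := Nat.factorization_factorial_le_div_pred hp n
  have h' : (n.factorial.factorization p : ℝ) ≤ ((n / (p - 1) : ℕ) : ℝ) := by exact_mod_cast h
  refine h'.trans (Nat.cast_div_le.trans ?_)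
  rw [Nat.cast_sub hp.one_le, Nat.cast_one]

lemma logSum_le (n : ℕ) (hn : 0 < n) : logSum n ≤ Real.log n + Real.log 4 := by
  have hn' : (0 : ℝ) < n := by exact_mod_cast hn
  have h1 : n * logSum n - Chebyshev.theta n ≤ Real.log (n.factorial : ℝ) := by
    rw [log_factorial_eq, Chebyshev.theta_eq_sum_primesLE_log, logSum, Finset.mul_sum,
      ← Finset.sum_sub_distrib]
    refine Finset.sum_le_sum fun p hp => ?_
    obtain ⟨hpn, hpp⟩ := Nat.mem_primesLE.1 hp
    have hl : 0 ≤ Real.log p := Real.log_natCast_nonneg p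
    calc (n : ℝ) * (Real.log p / p) - Real.log p = ((n : ℝ) / p - 1) * Real.log p := by ring
      _ ≤ _ := mul_le_mul_of_nonneg_right (div_sub_one_le_factorization hpp hpn) hl
  have h2 := Chebyshev.theta_le_log4_mul_x hn'.le
  have h3 : Real.log (n.factorial : ℝ) ≤ n * Real.log n := by
    rw [← Real.log_pow]
    exact Real.log_le_log (by exact_mod_cast n.factorial_pos)
      (by exact_mod_cast Nat.factorial_le_pow n)
  have h4 : n * logSum n ≤ n * (Real.log n + Real.log 4) := by linarith
  exact le_of_mul_le_mul_left h4 hn'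

/-- Comparison with `∑ k ^ (-3/2)`. -/
lemma summable_log_div : Summable fun k : ℕ => Real.log k / ((k : ℝ) * (k - 1)) := by
  have hs : Summable fun k : ℕ => 4 * (k : ℝ) ^ (-(3 / 2) : ℝ) :=
    (Real.summable_nat_rpow.2 (by norm_num)).mul_left 4
  refine Summable.of_nonneg_of_le (fun k => ?_) (fun k => ?_) hs
  · rcases Nat.eq_zero_or_pos k with rfl | hk
    · simp
    · have : (1 : ℝ) ≤ k := by exact_mod_cast hk
      exact div_nonneg (Real.log_nonneg this) (mul_nonneg (by linarith) (by linarith))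
  · rcases Nat.lt_or_ge k 2 with hk | hk
    · interval_cases k <;> simp
    · have hk2 : (2 : ℝ) ≤ k := by exact_mod_cast hk
      have hk0 : (0 : ℝ) < k := by linarith
      have hl : Real.log k ≤ (k : ℝ) ^ (1 / 2 : ℝ) / (1 / 2) :=
        Real.log_le_rpow_div hk0.le (by norm_num)
      rw [div_le_iff₀ (mul_pos hk0 (by linarith))]
      have e : (k : ℝ) ^ (1 / 2 : ℝ) = (k : ℝ) ^ (-(3 / 2) : ℝ) * ((k : ℝ) * k) := by
        rw [← sq, ← Real.rpow_natCast, ← Real.rpow_add hk0]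
        norm_num
      have hr : 0 ≤ (k : ℝ) ^ (-(3 / 2) : ℝ) := by positivity
      rw [e] at hl
      have : (k : ℝ) ^ (-(3 / 2) : ℝ) * ((k : ℝ) * k) ≤
          (k : ℝ) ^ (-(3 / 2) : ℝ) * (2 * (k * (k - 1))) :=
        mul_le_mul_of_nonneg_left (by nlinarith) hr
      linarith

lemma le_logSum (n : ℕ) (hn : 0 < n) :
    Real.log n - 1 - ∑' k : ℕ, Real.log k / ((k : ℝ) * (k - 1)) ≤ logSum n := by
  have hn' : (0 : ℝ) < n := by exact_mod_cast hn
  have hn1 : (1 : ℝ) ≤ n := by exact_mod_cast hn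
  have h1 : Real.log (n.factorial : ℝ) ≤
      n * (logSum n + ∑ p ∈ n.primesLE, Real.log p / ((p : ℝ) * (p - 1))) := by
    rw [log_factorial_eq, logSum, ← Finset.sum_add_distrib, Finset.mul_sum]
    refine Finset.sum_le_sum fun p hp => ?_
    obtain ⟨-, hpp⟩ := Nat.mem_primesLE.1 hp
    have hp2 : (2 : ℝ) ≤ p := by exact_mod_cast hpp.two_le
    have hp0 : (p : ℝ) ≠ 0 := by linarith
    have hp1 : (p : ℝ) - 1 ≠ 0 := by linarith
    refine (mul_le_mul_of_nonneg_right (factorization_le_div hpp)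
      (Real.log_natCast_nonneg p)).trans (le_of_eq ?_)
    field_simp
    ring
  have h2 : ∑ p ∈ n.primesLE, Real.log p / ((p : ℝ) * (p - 1)) ≤
      ∑' k : ℕ, Real.log k / ((k : ℝ) * (k - 1)) := by
    refine summable_log_div.sum_le_tsum _ fun k _ => ?_
    rcases Nat.eq_zero_or_pos k with rfl | hk
    · simp
    · have : (1 : ℝ) ≤ k := by exact_mod_cast hk
      exact div_nonneg (Real.log_nonneg this) (mul_nonneg (by linarith) (by linarith))
  have h3 := Stirling.le_log_factorial_stirling hn.ne'
  have h4 : 0 ≤ Real.log n := Real.log_nonneg hn1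
  have h5 : 0 ≤ Real.log (2 * Real.pi) :=
    Real.log_nonneg (by linarith [Real.pi_gt_three])
  have h6 : (n : ℝ) * (Real.log n - 1) ≤
      n * (logSum n + ∑ p ∈ n.primesLE, Real.log p / ((p : ℝ) * (p - 1))) := by linarith
  have h7 := le_of_mul_le_mul_left h6 hn'
  linarith

/-- Mertens' first theorem. -/
lemma exists_abs_logSum_sub_log_le :
    ∃ C : ℝ, ∀ n : ℕ, 0 < n → |logSum n - Real.log n| ≤ C := by
  refine ⟨max (Real.log 4) (1 + ∑' k : ℕ, Real.log k / ((k : ℝ) * (k - 1))), fun n hn => ?_⟩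
  rw [abs_le]
  have h1 := logSum_le n hn
  have h2 := le_logSum n hn
  have h3 := le_max_left (Real.log 4) (1 + ∑' k : ℕ, Real.log k / ((k : ℝ) * (k - 1)))
  have h4 := le_max_right (Real.log 4) (1 + ∑' k : ℕ, Real.log k / ((k : ℝ) * (k - 1)))
  constructor <;> linarith

/-- The increment `log k - log (k - 1)` at `k = i + 2`. -/
noncomputable def increment (i : ℕ) : ℝ := Real.log (i + 2 : ℕ) - Real.log (i + 1 : ℕ)

/-- The summand of `logSum` at `k = i + 2`, extended by zero to composite `k`. -/
noncomputable def primeTerm (i : ℕ) : ℝ :=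
  if (i + 2).Prime then Real.log (i + 2 : ℕ) / (i + 2 : ℕ) else 0

lemma sum_increment (N : ℕ) :
    ∑ i ∈ Finset.range N, increment i = Real.log (N + 1 : ℕ) := by
  have := Finset.sum_range_sub (fun i : ℕ => Real.log (i + 1 : ℕ)) N
  simpa [increment, add_assoc, one_add_one_eq_two] using this

/-- Sums over the primes up to `N + 1`, reindexed by `p = i + 2`. -/
lemma sum_primesLE_eq (g : ℕ → ℝ) (N : ℕ) :
    ∑ p ∈ (N + 1).primesLE, g p =
      ∑ i ∈ Finset.range N, if (i + 2).Prime then g (i + 2) else 0 := by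
  rw [Nat.primesLE_eq_filter_range, Finset.sum_filter, Finset.sum_range_succ',
    Finset.sum_range_succ']
  simp [Nat.not_prime_zero, Nat.not_prime_one]

lemma log_pos_of_add_two (i : ℕ) : 0 < Real.log (i + 2 : ℕ) :=
  Real.log_pos (by exact_mod_cast (by omega : 1 < i + 2))

lemma increment_nonneg (i : ℕ) : 0 ≤ increment i :=
  sub_nonneg.2 (Real.log_le_log (by positivity) (by exact_mod_cast (by omega : i + 1 ≤ i + 2)))

lemma increment_le_one (i : ℕ) : increment i ≤ 1 := by
  have h0 : (0 : ℝ) < (i + 1 : ℕ) := by positivity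
  have h1 : (0 : ℝ) < (i + 2 : ℕ) := by positivity
  rw [increment, ← Real.log_div h1.ne' h0.ne']
  refine (Real.log_le_sub_one_of_pos (div_pos h1 h0)).trans ?_
  rw [sub_le_iff_le_add, div_le_iff₀ h0]
  push_cast
  have : (0 : ℝ) ≤ i := by positivity
  linarith

/-- For `a ≤ b`, the integral `log b - log a` of `1 / u` over `[a, b]` lies between the areas of
the inscribed and the circumscribed rectangle; the inequalities persist for `b < a`. -/
lemma sub_div_le_log_sub {a b : ℝ} (ha : 0 < a) (hb : 0 < b) :
    (b - a) / b ≤ Real.log b - Real.log a ∧ Real.log b - Real.log a ≤ (b - a) / a := by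
  constructor
  · have := Real.log_le_sub_one_of_pos (div_pos ha hb)
    rw [Real.log_div ha.ne' hb.ne'] at this
    rw [sub_div, div_self hb.ne']
    linarith
  · have := Real.log_le_sub_one_of_pos (div_pos hb ha)
    rw [Real.log_div hb.ne' ha.ne'] at this
    rw [sub_div, div_self ha.ne']
    linarith

/-- The Riemann sum `∑ (log k - log (k - 1)) / log k` over `2 ≤ k ≤ n`, with `n = M + 2`, is within
`O(1)` of `log (log n)`. The term `1 / log n` in the lower bound makes the induction work. -/
lemma sum_increment_div_log_bounds (M : ℕ) :
    ∑ i ∈ Finset.range (M + 1), increment i / Real.log (i + 2 : ℕ) ≤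
        1 + Real.log (Real.log (M + 2 : ℕ)) - Real.log (Real.log 2) ∧
      Real.log (Real.log (M + 2 : ℕ)) - Real.log (Real.log 2) + 1 / Real.log (M + 2 : ℕ)
          - 1 / Real.log 2 ≤
        ∑ i ∈ Finset.range (M + 1), increment i / Real.log (i + 2 : ℕ) := by
  induction M with
  | zero =>
    have h2 : Real.log 2 ≠ 0 := (Real.log_pos one_lt_two).ne'
    simp [increment, div_self h2]
  | succ M ih =>
    rw [Finset.sum_range_succ]
    have ha := log_pos_of_add_two M
    have hb := log_pos_of_add_two (M + 1)
    have h := sub_div_le_log_sub ha hb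
    have he : increment (M + 1) = Real.log (M + 1 + 2 : ℕ) - Real.log (M + 2 : ℕ) := rfl
    rw [← he] at h
    refine ⟨by linarith [ih.1, h.1], ?_⟩
    -- The circumscribed and inscribed rectangles differ in area by at most
    -- `1 / log (M + 2) - 1 / log (M + 3)`, which telescopes.
    have hle : 1 / Real.log (M + 1 + 2 : ℕ) ≤ 1 / Real.log (M + 2 : ℕ) :=
      one_div_le_one_div_of_le ha (by linarith [increment_nonneg (M + 1)])
    have hm := mul_le_mul_of_nonneg_right (increment_le_one (M + 1)) (sub_nonneg.2 hle)
    rw [mul_sub, mul_one_div, mul_one_div] at hm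
    linarith [ih.2, h.2]

/-- Dirichlet's test: passing from weights `log p / p` to weights `1 / p` keeps the error bounded. -/
lemma exists_abs_sum_sub_le :
    ∃ C : ℝ, ∀ N : ℕ,
      |∑ p ∈ (N + 1).primesLE, (1 : ℝ) / p -
        ∑ i ∈ Finset.range N, increment i / Real.log (i + 2 : ℕ)| ≤ C := by
  obtain ⟨C, hC⟩ := exists_abs_logSum_sub_log_le
  have hanti : Antitone fun i : ℕ => 1 / Real.log (i + 2 : ℕ) := fun i j hij =>
    one_div_le_one_div_of_le (log_pos_of_add_two i)
      (Real.log_le_log (by positivity) (by exact_mod_cast Nat.add_le_add_right hij 2))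
  have hlim : Tendsto (fun i : ℕ => 1 / Real.log (i + 2 : ℕ)) atTop (nhds 0) := by
    simp only [one_div]
    exact (Real.tendsto_log_atTop.comp
      (tendsto_natCast_atTop_atTop.comp (tendsto_add_atTop_nat 2))).inv_tendsto_atTop
  have hbd : ∀ N, ‖∑ i ∈ Finset.range N, (primeTerm i - increment i)‖ ≤ C := fun N => by
    rw [Finset.sum_sub_distrib, sum_increment, Real.norm_eq_abs]
    have := hC (N + 1) N.succ_pos
    rwa [logSum, sum_primesLE_eq (fun p => Real.log p / p)] at this
  have hcs := hanti.cauchySeq_series_mul_of_tendsto_zero_of_bounded hlim hbd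
  obtain ⟨l, hl⟩ := cauchySeq_tendsto_of_complete hcs
  obtain ⟨B, hB⟩ := hl.abs.bddAbove_range
  refine ⟨B, fun N => ?_⟩
  refine le_of_eq_of_le (congrArg abs ?_) (hB (Set.mem_range_self N))
  rw [sum_primesLE_eq (fun p => (1 : ℝ) / p), ← Finset.sum_sub_distrib]
  refine Finset.sum_congr rfl fun i _ => ?_
  have hi := (log_pos_of_add_two i).ne'
  rw [smul_eq_mul, mul_sub, primeTerm]
  split_ifs
  · field_simp
  · ring

end MertensSecond

open MertensSecond

/-- Mertens' second theorem (asymptotic form):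
`∑_{p ≤ N, p prime} 1 / p ∼ log log N` as `N → ∞`. -/
theorem mertens_second_asymptotic :
    Tendsto
      (fun N : ℕ =>
        (∑ p ∈ (Finset.range (N + 1)).filter Nat.Prime, (1 : ℝ) / p) /
          Real.log (Real.log N))
      atTop (nhds 1) := by
  obtain ⟨C, hC⟩ := exists_abs_sum_sub_le
  rw [← tendsto_add_atTop_iff_nat 2]
  have hL : Tendsto (fun M : ℕ => Real.log (Real.log (M + 2 : ℕ))) atTop atTop :=
    Real.tendsto_log_atTop.comp (Real.tendsto_log_atTop.comp
      (tendsto_natCast_atTop_atTop.comp (tendsto_add_atTop_nat 2)))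
  set K : ℝ := C + 1 + |Real.log (Real.log 2)| + 1 / Real.log 2 with hK
  have hbound : ∀ M : ℕ, |∑ p ∈ (M + 2).primesLE, (1 : ℝ) / p -
      Real.log (Real.log (M + 2 : ℕ))| ≤ K := fun M => by
    have h1 := abs_le.1 (hC (M + 1))
    have h2 := sum_increment_div_log_bounds M
    have h3 : 0 < 1 / Real.log (M + 2 : ℕ) := one_div_pos.2 (log_pos_of_add_two M)
    have h4 : 0 < 1 / Real.log 2 := one_div_pos.2 (Real.log_pos one_lt_two)
    have h5 := le_abs_self (Real.log (Real.log 2))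
    have h6 := neg_abs_le (Real.log (Real.log 2))
    rw [abs_le]
    constructor <;> linarith [h1.1, h1.2, h2.1, h2.2]
  have herr : Tendsto (fun M : ℕ => (∑ p ∈ (M + 2).primesLE, (1 : ℝ) / p -
      Real.log (Real.log (M + 2 : ℕ))) / Real.log (Real.log (M + 2 : ℕ))) atTop (nhds 0) := by
    refine squeeze_zero_norm' ?_ (hL.const_div_atTop K)
    filter_upwards [hL.eventually_gt_atTop 0] with M hM
    rw [norm_div, Real.norm_eq_abs, Real.norm_of_nonneg hM.le]
    exact div_le_div_of_nonneg_right (hbound M) hM.le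
  have hsum := herr.add_const 1
  rw [zero_add] at hsum
  refine hsum.congr' ?_
  filter_upwards [hL.eventually_gt_atTop 0] with M hM
  rw [sub_div, div_self hM.ne', sub_add_cancel, Nat.primesLE_eq_filter_range]
end

section
/- The sum over primes p ≤ N of −(1 − 1/p)·log(1 − 1/p) is asymptotically equal to log log N; that is, the ratio (∑_{p ≤ N, p prime} −(1 − 1/p)·log(1 − 1/p)) / (log log N) tends to 1 as N → ∞. -/
/-!
Since `-(1 - x) log (1 - x) = x + O(x ^ 2)` and `∑ 1 / n ^ 2` converges, the sum in question differs
from `∑_{p ≤ N} 1 / p` by a bounded amount, so it suffices to have Mertens' second theorem in the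
form `∑_{p ≤ N} 1 / p = log log N + O(1)`.

This is derived from Mertens' first theorem, `∑_{p ≤ N} log p / p = log N + O(1)`
(`mertens_first`). For the latter, `∑_{n ≤ N} Λ n ⌊N / n⌋ = log N!` lies between `N log N - N` and
`N log N`, and removing the floor costs at most `ψ N = O(N)` (Chebyshev), which gives
`∑_{n ≤ N} Λ n / n = log N + O(1)`; the proper prime powers contribute a convergent series.

The passage from the first theorem to the second (`mertens_second`) is a discrete partial summation
against the weight `1 / log n`, whose error terms telescope (`abel_step`).
-/

open Filter

open Finset in
/-- Summing `Λ * ζ = log` over `n ≤ N`. -/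
lemma sum_vonMangoldt_mul_div (N : ℕ) :
    ∑ n ∈ Ioc 0 N, ArithmeticFunction.vonMangoldt n * ((N / n : ℕ) : ℝ)
      = Real.log (N.factorial : ℝ) := by
  rw [← ArithmeticFunction.sum_Ioc_mul_zeta_eq_sum, ArithmeticFunction.vonMangoldt_mul_zeta]
  induction N with
  | zero => simp
  | succ n ih =>
    rw [← Finset.insert_Ioc_right_eq_Ioc_add_one (Nat.zero_le n), Finset.sum_insert (by simp), ih,
      Nat.factorial_succ]
    push_cast
    rw [Real.log_mul (by positivity) (by positivity)]
    simp [ArithmeticFunction.log_apply]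

lemma log_factorial_le (N : ℕ) : Real.log (N.factorial : ℝ) ≤ N * Real.log N := by
  rw [← Real.log_pow]
  apply Real.log_le_log (by positivity)
  exact_mod_cast Nat.factorial_le_pow N

/-- The elementary half of Stirling's formula, from `N ^ N / N! ≤ exp N`. -/
lemma le_log_factorial {N : ℕ} (hN : 0 < N) :
    N * Real.log N - N ≤ Real.log (N.factorial : ℝ) := by
  have h := Real.pow_div_factorial_le_exp (x := (N : ℝ)) (by positivity) N
  have h2 := Real.log_le_log (by positivity) h
  rw [Real.log_exp, Real.log_div (by positivity) (by positivity), Real.log_pow] at h2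
  linarith

open Finset in
/-- `∑_{n ≤ N} Λ n / n = log N + O(1)`. -/
lemma sum_vonMangoldt_div {N : ℕ} (hN : 0 < N) :
    |∑ n ∈ Ioc 0 N, ArithmeticFunction.vonMangoldt n / n - Real.log N| ≤ Real.log 4 + 4 := by
  have hN' : (0 : ℝ) < N := by exact_mod_cast hN
  set S := ∑ n ∈ Ioc 0 N, ArithmeticFunction.vonMangoldt n / (n : ℝ) with hS
  have h1 := sum_vonMangoldt_mul_div N
  have h2 := log_factorial_le N
  have h3 := le_log_factorial hN
  have hpsi : ∑ n ∈ Ioc 0 N, ArithmeticFunction.vonMangoldt n ≤ (Real.log 4 + 4) * N := by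
    simpa [Chebyshev.psi] using Chebyshev.psi_le_const_mul_self (x := (N : ℝ)) hN'.le
  have hlow : ∑ n ∈ Ioc 0 N, ArithmeticFunction.vonMangoldt n * ((N / n : ℕ) : ℝ) ≤ N * S := by
    rw [hS, mul_sum]
    refine sum_le_sum fun n _ => ?_
    calc _ ≤ ArithmeticFunction.vonMangoldt n * ((N : ℝ) / n) :=
          mul_le_mul_of_nonneg_left Nat.cast_div_le ArithmeticFunction.vonMangoldt_nonneg
      _ = _ := by ring
  have hup : N * S ≤ ∑ n ∈ Ioc 0 N, ArithmeticFunction.vonMangoldt n * ((N / n : ℕ) : ℝ)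
      + ∑ n ∈ Ioc 0 N, ArithmeticFunction.vonMangoldt n := by
    rw [hS, mul_sum, ← sum_add_distrib]
    refine sum_le_sum fun n _ => ?_
    have hfl : (N : ℝ) / n ≤ ((N / n : ℕ) : ℝ) + 1 := by
      rw [← Nat.floor_div_eq_div (K := ℝ)]
      exact (Nat.lt_floor_add_one _).le
    calc _ = ArithmeticFunction.vonMangoldt n * ((N : ℝ) / n) := by ring
      _ ≤ ArithmeticFunction.vonMangoldt n * (((N / n : ℕ) : ℝ) + 1) :=
          mul_le_mul_of_nonneg_left hfl ArithmeticFunction.vonMangoldt_nonneg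
      _ = _ := by ring
  have h4 : 0 ≤ Real.log 4 := Real.log_nonneg (by norm_num)
  rw [abs_le]
  constructor
  · have : N * (Real.log N - 1) ≤ N * S := by linarith
    have := le_of_mul_le_mul_left this hN'
    linarith
  · have : N * S ≤ N * (Real.log N + (Real.log 4 + 4)) := by linarith
    have := le_of_mul_le_mul_left this hN'
    linarith

open Finset in
/-- Mertens' first theorem: `∑_{p ≤ N} log p / p = log N + O(1)`. -/
lemma mertens_first : ∃ C : ℝ, 0 ≤ C ∧ ∀ N : ℕ, 0 < N →
    |∑ p ∈ (range (N + 1)).filter Nat.Prime, Real.log p / p - Real.log N| ≤ C := by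
  -- modulo `1` the residue class is everything, so this bounds `∑ Λ n / n` over all non-primes
  have hsum := ArithmeticFunction.vonMangoldt.summable_residueClass_non_primes_div (q := 1) 0
  set g : ℕ → ℝ := fun n =>
    (if n.Prime then 0 else ArithmeticFunction.vonMangoldt.residueClass (0 : ZMod 1) n) / n with hg
  have hg0 : ∀ n, 0 ≤ g n := fun n => by
    simp only [hg]
    split_ifs
    · simp
    · exact div_nonneg (ArithmeticFunction.vonMangoldt.residueClass_nonneg _ _) (by positivity)
  have hgv : ∀ n, g n = (if n.Prime then 0 else ArithmeticFunction.vonMangoldt n) / n := fun n => by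
    simp only [hg, ArithmeticFunction.vonMangoldt.residueClass, Set.indicator]
    simp [Subsingleton.elim (n : ZMod 1) 0]
  refine ⟨Real.log 4 + 4 + ∑' n, g n, ?_, fun N hN => ?_⟩
  · have h4 : 0 ≤ Real.log 4 := Real.log_nonneg (by norm_num)
    have : 0 ≤ ∑' n, g n := tsum_nonneg hg0
    linarith
  have hle : ∑ n ∈ Ioc 0 N, g n ≤ ∑' n, g n := hsum.sum_le_tsum _ fun n _ => hg0 n
  have hge : 0 ≤ ∑ n ∈ Ioc 0 N, g n := sum_nonneg fun n _ => hg0 n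
  have hsplit : ∑ p ∈ (range (N + 1)).filter Nat.Prime, Real.log p / p
      = ∑ n ∈ Ioc 0 N, ArithmeticFunction.vonMangoldt n / n - ∑ n ∈ Ioc 0 N, g n := by
    have hset : (range (N + 1)).filter Nat.Prime = (Ioc 0 N).filter Nat.Prime := by
      ext p
      simp only [mem_filter, mem_range, mem_Ioc]
      exact ⟨fun h => ⟨⟨h.2.pos, by omega⟩, h.2⟩, fun h => ⟨by omega, h.2⟩⟩
    rw [hset, sum_filter, ← sum_sub_distrib]
    refine sum_congr rfl fun n _ => ?_
    rw [hgv]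
    split_ifs with h
    · simp [ArithmeticFunction.vonMangoldt_apply_prime h]
    · simp
  have h := abs_le.1 (sum_vonMangoldt_div hN)
  rw [hsplit, abs_le]
  constructor <;> linarith [h.1, h.2]

/-- One step of the partial summation. With `L = log n`, `L' = log (n + 1)` and `D`, `D'` the
consecutive errors in Mertens' first theorem, the prime `n + 1` (if it is one) adds
`(D' - D + L' - L) / L'` to `∑ 1 / p`; up to the telescoping terms `log log n` and `D / L` this
is bounded by a multiple of `1 / L - 1 / L'`. -/
lemma abel_step {L L' D D' C : ℝ} (hL : 0 < L) (hLL : L ≤ L') (h1 : L' - L ≤ 1) (hD : |D| ≤ C) :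
    |(D' - D + L' - L) / L' - (Real.log L' - Real.log L) - (D' / L' - D / L)|
      ≤ (C + 1) * (1 / L - 1 / L') := by
  have hL' : 0 < L' := hL.trans_le hLL
  have hw : 0 ≤ 1 / L - 1 / L' := by
    have := one_div_le_one_div_of_le hL hLL
    linarith
  have hup : Real.log L' - Real.log L ≤ L' / L - 1 := by
    rw [← Real.log_div hL'.ne' hL.ne']
    exact Real.log_le_sub_one_of_pos (by positivity)
  have hlo : 1 - L / L' ≤ Real.log L' - Real.log L := by
    have := Real.log_le_sub_one_of_pos (x := L / L') (by positivity)
    rw [Real.log_div hL.ne' hL'.ne'] at this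
    linarith
  have hb : (L' / L - 1) - (1 - L / L') = (L' - L) * (1 / L - 1 / L') := by
    field_simp
  have hb' : (L' - L) * (1 / L - 1 / L') ≤ 1 * (1 / L - 1 / L') :=
    mul_le_mul_of_nonneg_right h1 hw
  have hD1 : |D * (1 / L - 1 / L')| ≤ C * (1 / L - 1 / L') := by
    rw [abs_mul, abs_of_nonneg hw]
    exact mul_le_mul_of_nonneg_right hD hw
  have heq : (D' - D + L' - L) / L' - (Real.log L' - Real.log L) - (D' / L' - D / L)
      = D * (1 / L - 1 / L') + ((1 - L / L') - (Real.log L' - Real.log L)) := by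
    field_simp
    ring
  rw [heq]
  have := abs_le.1 hD1
  rw [abs_le]
  constructor <;> linarith [this.1, this.2]

open Finset in
/-- Mertens' second theorem without the constant: `∑_{p ≤ N} 1 / p = log log N + O(1)`. -/
lemma mertens_second : ∃ C : ℝ, ∀ N : ℕ, 2 ≤ N →
    |∑ p ∈ (range (N + 1)).filter Nat.Prime, 1 / (p : ℝ) - Real.log (Real.log N)| ≤ C := by
  obtain ⟨C, hC0, hC⟩ := mertens_first
  set A : ℕ → ℝ := fun N => ∑ p ∈ (range (N + 1)).filter Nat.Prime, Real.log p / p with hA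
  set R : ℕ → ℝ := fun N => ∑ p ∈ (range (N + 1)).filter Nat.Prime, 1 / (p : ℝ) with hR
  set D : ℕ → ℝ := fun N => A N - Real.log N with hDdef
  set E : ℕ → ℝ := fun N => R N - Real.log (Real.log N) - D N / Real.log N with hE
  have hstep : ∀ N : ℕ, 2 ≤ N → |E (N + 1) - E N| ≤
      (C + 1) * (1 / Real.log N - 1 / Real.log (N + 1 : ℕ)) := by
    intro N hN
    have hN' : (2 : ℝ) ≤ N := by exact_mod_cast hN
    have hL : 0 < Real.log N := Real.log_pos (by linarith)
    have hLL : Real.log N ≤ Real.log (N + 1 : ℕ) :=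
      Real.log_le_log (by linarith) (by push_cast; linarith)
    have h1 : Real.log (N + 1 : ℕ) - Real.log N ≤ 1 := by
      rw [← Real.log_div (by positivity) (by positivity)]
      refine (Real.log_le_sub_one_of_pos (by positivity)).trans ?_
      push_cast
      rw [sub_le_iff_le_add, div_le_iff₀ (by linarith)]
      linarith
    have hinc : R (N + 1) - R N = (A (N + 1) - A N) / Real.log (N + 1 : ℕ) := by
      have hL' : Real.log (N + 1 : ℕ) ≠ 0 := (hL.trans_le hLL).ne'
      simp only [hR, hA]
      rw [range_add_one (n := N + 1), filter_insert]
      split_ifs with hp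
      · rw [sum_insert (by simp), sum_insert (by simp)]
        have : ((N + 1 : ℕ) : ℝ) ≠ 0 := by positivity
        field_simp
        ring
      · simp
    have := abel_step (D' := D (N + 1)) hL hLL h1 (hC N (by omega))
    have heq : E (N + 1) - E N = (D (N + 1) - D N + Real.log (N + 1 : ℕ) - Real.log N)
        / Real.log (N + 1 : ℕ) - (Real.log (Real.log (N + 1 : ℕ)) - Real.log (Real.log N))
        - (D (N + 1) / Real.log (N + 1 : ℕ) - D N / Real.log N) := by
      have : D (N + 1) - D N + Real.log (N + 1 : ℕ) - Real.log N = A (N + 1) - A N := by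
        simp only [hDdef]
        ring
      rw [this, ← hinc]
      simp only [hE]
      ring
    rw [heq]
    exact this
  have hind : ∀ N : ℕ, 2 ≤ N →
      |E N| ≤ |E 2| + (C + 1) * (1 / Real.log 2 - 1 / Real.log N) := by
    intro N hN
    induction N, hN using Nat.le_induction with
    | base => simp
    | succ n hn ih =>
      have h1 := hstep n hn
      have h2 : |E (n + 1)| ≤ |E n| + |E (n + 1) - E n| := by
        have := abs_add_le (E n) (E (n + 1) - E n)
        rwa [add_sub_cancel] at this
      linarith
  refine ⟨|E 2| + (C + 1) * (1 / Real.log 2) + C / Real.log 2, fun N hN => ?_⟩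
  have hN' : (2 : ℝ) ≤ N := by exact_mod_cast hN
  have hl2 : 0 < Real.log 2 := Real.log_pos (by norm_num)
  have hL2 : Real.log 2 ≤ Real.log N := Real.log_le_log (by norm_num) hN'
  have hL : 0 < Real.log N := hl2.trans_le hL2
  have hDN : |D N / Real.log N| ≤ C / Real.log 2 := by
    rw [abs_div, abs_of_pos hL]
    exact div_le_div₀ hC0 (hC N (by omega)) hl2 hL2
  have hEN : |E N| ≤ |E 2| + (C + 1) * (1 / Real.log 2) := by
    have : 0 ≤ (C + 1) * (1 / Real.log N) := by positivity
    linarith [hind N hN]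
  have heq : R N - Real.log (Real.log N) = E N + D N / Real.log N := by
    simp only [hE]
    ring
  change |R N - Real.log (Real.log N)| ≤ _
  rw [heq]
  exact (abs_add_le _ _).trans (by linarith)

/-- The summand agrees with `x = 1 / p` up to `x ^ 2`. -/
lemma abs_negMulLog_one_sub_sub_le {x : ℝ} (h1 : x < 1) :
    |-((1 - x) * Real.log (1 - x)) - x| ≤ x ^ 2 := by
  have hpos : 0 < 1 - x := by linarith
  have hup := Real.log_le_sub_one_of_pos hpos
  have hlo := Real.one_sub_inv_le_log_of_pos hpos
  have a1 := mul_le_mul_of_nonneg_left hup hpos.le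
  have a2 := mul_le_mul_of_nonneg_left hlo hpos.le
  rw [mul_sub, mul_inv_cancel₀ hpos.ne'] at a2
  rw [abs_le]
  constructor <;> nlinarith

/-- The entropy of the event of having no small prime factor:
`∑_{p ≤ N, p prime} −(1 − 1/p)·log(1 − 1/p) ∼ log log N` as `N → ∞`. -/
theorem entropy_no_small_prime_factor_asymptotic :
    Tendsto
      (fun N : ℕ =>
        (∑ p ∈ (Finset.range (N + 1)).filter Nat.Prime,
            -((1 - 1 / p) * Real.log (1 - 1 / (p : ℝ)))) /
          Real.log (Real.log N))
      atTop (nhds 1) := by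
  obtain ⟨C, hC⟩ := mertens_second
  have hsum : Summable fun n : ℕ => (1 / (n : ℝ)) ^ 2 := by
    simp
  set S : ℕ → ℝ := fun N => ∑ p ∈ (Finset.range (N + 1)).filter Nat.Prime,
    -((1 - 1 / p) * Real.log (1 - 1 / (p : ℝ))) with hS
  have hbound : ∀ N : ℕ, 2 ≤ N →
      |S N - Real.log (Real.log N)| ≤ ∑' n : ℕ, (1 / (n : ℝ)) ^ 2 + C := by
    intro N hN
    have h1 : |S N - ∑ p ∈ (Finset.range (N + 1)).filter Nat.Prime, 1 / (p : ℝ)|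
        ≤ ∑' n : ℕ, (1 / (n : ℝ)) ^ 2 := by
      simp only [hS]
      rw [← Finset.sum_sub_distrib]
      refine (Finset.abs_sum_le_sum_abs _ _).trans ?_
      refine le_trans (Finset.sum_le_sum fun p hp => ?_)
        (hsum.sum_le_tsum _ fun n _ => by positivity)
      have hp1 : (1 : ℝ) < p := by exact_mod_cast (Finset.mem_filter.1 hp).2.one_lt
      exact abs_negMulLog_one_sub_sub_le ((div_lt_one (by linarith)).2 hp1)
    exact (abs_sub_le _ _ _).trans (add_le_add h1 (hC N hN))
  have hlim : Tendsto (fun N : ℕ => Real.log (Real.log N)) atTop atTop :=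
    Real.tendsto_log_atTop.comp (Real.tendsto_log_atTop.comp tendsto_natCast_atTop_atTop)
  have herr : Tendsto (fun N : ℕ => (S N - Real.log (Real.log N)) / Real.log (Real.log N))
      atTop (nhds 0) := by
    refine squeeze_zero_norm' ?_ (hlim.const_div_atTop (∑' n : ℕ, (1 / (n : ℝ)) ^ 2 + C))
    filter_upwards [eventually_ge_atTop 2, hlim.eventually_gt_atTop 0] with N hN hpos
    rw [Real.norm_eq_abs, abs_div, abs_of_pos hpos]
    exact div_le_div_of_nonneg_right (hbound N hN) hpos.le
  have h := herr.const_add 1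
  rw [add_zero] at h
  refine h.congr' ?_
  filter_upwards [hlim.eventually_gt_atTop 0] with N hpos
  field_simp
  ring
end

section
/- The variance of the number of distinct prime factors of a uniform random integer in [1,N] is asymptotic to log log N: the ratio ((1/N)·∑_{n=1}^{N} (ω(n) − log log N)²) / (log log N) tends to 1 as N → ∞. -/
open Filter

/-!
The proof is Turán's. Let `A = ∑_{p ≤ √N} 1 / p` and let `S n` count the primes `p ≤ √N` dividing
`n`. For `n ≤ N` at most one prime factor of `n` exceeds `√N`, so `ω n - S n ∈ {0, 1}`
(`abs_omega_sub_truncated_le`), and it suffices to study `S - A`, the sum over `p ≤ √N` of the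
centred indicators `1_{p ∣ n} - 1 / p`. Summed over `n ≤ N`, the product of two of these for
distinct primes is `O(1)`, while the square of one is `N / p + O(1 + N / p ^ 2)`. There are at most
`N` pairs of primes up to `√N`, whence `∑_{n ≤ N} (S n - A) ^ 2 = N A + O(N)`
(`exists_truncated_variance_bound`).

The remaining input is Mertens' estimate `∑_{p ≤ x} 1 / p = log log x + O(1)`
(`exists_recipSum_bound`). It follows by partial summation from
`∑_{p ≤ x} log p / p = log x + O(1)` (`exists_logSum_bound`), which in turn comes from Legendre's
formula for the prime factorization of `n!` and Chebyshev's bound `θ x ≤ x log 4`. Hence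
`A = log log N + O(1)`, and replacing `S - A` by `ω - log log N` moves each term by `O(1)`, which
by the inequality `2 |X| K ≤ η X ^ 2 + K ^ 2 / η` costs only `O(√(log log N))` in the mean square.
-/

namespace TuranOmega

open Finset
open Nat (primesLE)

/-! ### Mertens' theorems -/

/-- `∑_{p ≤ n} 1 / p` over primes. -/
noncomputable def recipSum (n : ℕ) : ℝ := ∑ p ∈ primesLE n, 1 / (p : ℝ)

/-- `∑_{p ≤ n} log p / p` over primes. -/
noncomputable def logSum (n : ℕ) : ℝ := ∑ p ∈ primesLE n, Real.log p / (p : ℝ)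

lemma log_factorial_eq (n : ℕ) :
    Real.log (n.factorial) =
      ∑ p ∈ primesLE n, (n.factorial.factorization p : ℝ) * Real.log p := by
  have h0 : n.factorial ≠ 0 := n.factorial_ne_zero
  have h : n.factorial = ∏ p ∈ primesLE n, p ^ n.factorial.factorization p := by
    conv_lhs => rw [← Nat.prod_factorization_pow_eq_self h0]
    refine Finsupp.prod_of_support_subset _ ?_ _ (by simp)
    intro p hp
    rw [Nat.support_factorization, Nat.mem_primeFactors] at hp
    exact Nat.mem_primesLE.2 ⟨(hp.1.dvd_factorial).1 hp.2.1, hp.1⟩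
  conv_lhs => rw [h]
  push_cast
  rw [Real.log_prod]
  · simp
  · intro p hp
    have := (Nat.prime_of_mem_primesLE hp).pos
    positivity

lemma log_factorial_ge (n : ℕ) (hn : 1 ≤ n) :
    n * Real.log n - n ≤ Real.log (n.factorial) := by
  have h := Real.pow_div_factorial_le_exp (n : ℝ) (by positivity) n
  have hn' : (0 : ℝ) < n := by exact_mod_cast hn
  have hf : (0 : ℝ) < n.factorial := by exact_mod_cast n.factorial_pos
  have h2 := Real.log_le_log (by positivity) h
  rw [Real.log_exp, Real.log_div (by positivity) (by positivity), Real.log_pow] at h2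
  linarith

lemma log_factorial_le (n : ℕ) :
    Real.log (n.factorial) ≤ n * Real.log n := by
  rw [← Real.log_pow]
  have hf : (0 : ℝ) < n.factorial := by exact_mod_cast n.factorial_pos
  exact Real.log_le_log hf (by exact_mod_cast Nat.factorial_le_pow n)

/-- The contribution `log p / (p (p - 1))` of the higher prime powers is dominated by a
convergent series. -/
lemma prime_power_tail_le {p : ℕ} (hp : 2 ≤ p) :
    Real.log p / ((p : ℝ) - 1) ≤ Real.log p / p + 4 * (1 / (p : ℝ) ^ (3 / 2 : ℝ)) := by
  have hp' : (2 : ℝ) ≤ p := by exact_mod_cast hp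
  have hp0 : (0 : ℝ) < p := by linarith
  have hl : Real.log p ≤ 2 * (p : ℝ) ^ (1 / 2 : ℝ) := by
    have := Real.log_le_rpow_div hp0.le (ε := 1 / 2) (by norm_num)
    linarith
  have hl0 : 0 ≤ Real.log p := Real.log_nonneg (by linarith)
  have h1 : Real.log p / ((p : ℝ) - 1) ≤ Real.log p / p + 2 * Real.log p / p ^ 2 := by
    rw [div_le_iff₀ (by linarith)]
    have : (Real.log p / p + 2 * Real.log p / p ^ 2) * (p - 1)
        = Real.log p + Real.log p * (p - 2) / p ^ 2 := by field_simp; ring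
    rw [this]
    have : 0 ≤ Real.log p * (p - 2) / (p : ℝ) ^ 2 :=
      div_nonneg (mul_nonneg hl0 (by linarith)) (by positivity)
    linarith
  have h2 : (p : ℝ) ^ (1 / 2 : ℝ) * (p : ℝ) ^ (3 / 2 : ℝ) = p ^ 2 := by
    rw [← Real.rpow_add hp0]; norm_num
  have h3 : 2 * Real.log p / (p : ℝ) ^ 2 ≤ 4 * (1 / (p : ℝ) ^ (3 / 2 : ℝ)) := by
    rw [← h2, mul_one_div, div_le_div_iff₀ (by positivity) (by positivity)]
    have : 0 < (p : ℝ) ^ (3 / 2 : ℝ) := by positivity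
    nlinarith
  linarith

/-- Mertens' first theorem: `∑_{p ≤ n} log p / p = log n + O(1)`, obtained by comparing
`log n!` with its prime factorization. -/
lemma exists_logSum_bound :
    ∃ C : ℝ, ∀ n : ℕ, 1 ≤ n → |logSum n - Real.log n| ≤ C := by
  have hs : Summable (fun n : ℕ => 1 / (n : ℝ) ^ (3 / 2 : ℝ)) :=
    Real.summable_one_div_nat_rpow.2 (by norm_num)
  set B := ∑' n : ℕ, 1 / (n : ℝ) ^ (3 / 2 : ℝ) with hB
  have hB0 : 0 ≤ B := tsum_nonneg fun n => by positivity
  have hlog4 : 0 ≤ Real.log 4 := Real.log_nonneg (by norm_num)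
  refine ⟨Real.log 4 + 1 + 4 * B, fun n hn => ?_⟩
  have hn' : (0 : ℝ) < n := by exact_mod_cast hn
  have hup : logSum n ≤ Real.log n + Real.log 4 := by
    have h1 : n * logSum n - Chebyshev.theta n ≤ Real.log (n.factorial) := by
      rw [log_factorial_eq, Chebyshev.theta_eq_sum_primesLE_log, logSum, mul_sum,
        ← sum_sub_distrib]
      refine sum_le_sum fun p hp => ?_
      have hpp := Nat.prime_of_mem_primesLE hp
      have hpn := Nat.le_of_mem_primesLE hp
      have hl : 0 ≤ Real.log p := Real.log_natCast_nonneg p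
      have hv : n / p ≤ n.factorial.factorization p := by
        rw [Nat.factorization_factorial hpp (Nat.lt_add_one (Nat.log p n))]
        have hmem : 1 ∈ Ico 1 (Nat.log p n + 1) := by
          have := Nat.log_pos hpp.one_lt hpn
          simp only [Finset.mem_Ico]; omega
        have := single_le_sum (f := fun i => n / p ^ i) (fun i _ => Nat.zero_le _) hmem
        simpa using this
      have hfl : (n : ℝ) / p - 1 ≤ (n.factorial.factorization p : ℝ) := by
        have h2 : (n : ℝ) / p < (n / p : ℕ) + 1 := by
          rw [← Nat.floor_div_eq_div (K := ℝ)]; exact Nat.lt_floor_add_one _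
        have h3 : ((n / p : ℕ) : ℝ) ≤ n.factorial.factorization p := by exact_mod_cast hv
        linarith
      calc (n : ℝ) * (Real.log p / p) - Real.log p = ((n : ℝ) / p - 1) * Real.log p := by ring
        _ ≤ _ := mul_le_mul_of_nonneg_right hfl hl
    have h2 := Chebyshev.theta_le_log4_mul_x hn'.le
    have h3 := log_factorial_le n
    have : n * logSum n ≤ n * (Real.log n + Real.log 4) := by linarith
    exact le_of_mul_le_mul_left this hn'
  have hlo : Real.log n - 1 - 4 * B ≤ logSum n := by
    have h1 : Real.log (n.factorial) ≤ n * (logSum n + 4 * B) := by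
      calc Real.log (n.factorial)
          ≤ ∑ p ∈ primesLE n,
            n * (Real.log p / p + 4 * (1 / (p : ℝ) ^ (3 / 2 : ℝ))) := by
            rw [log_factorial_eq]
            refine sum_le_sum fun p hp => ?_
            have hpp := Nat.prime_of_mem_primesLE hp
            have hp1 : (1 : ℝ) < p := by exact_mod_cast hpp.one_lt
            have hl : 0 ≤ Real.log p := Real.log_natCast_nonneg p
            have hv : (n.factorial.factorization p : ℝ) ≤ n / ((p : ℝ) - 1) := by
              have h2 : ((n.factorial.factorization p : ℕ) : ℝ) ≤ ((n / (p - 1) : ℕ) : ℝ) := by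
                exact_mod_cast Nat.factorization_factorial_le_div_pred hpp n
              have h3 : ((n / (p - 1) : ℕ) : ℝ) ≤ (n : ℝ) / ((p - 1 : ℕ) : ℝ) := Nat.cast_div_le
              rw [Nat.cast_sub hpp.one_le, Nat.cast_one] at h3
              exact h2.trans h3
            calc (n.factorial.factorization p : ℝ) * Real.log p
                ≤ n / ((p : ℝ) - 1) * Real.log p := mul_le_mul_of_nonneg_right hv hl
              _ = n * (Real.log p / ((p : ℝ) - 1)) := by ring
              _ ≤ _ := mul_le_mul_of_nonneg_left (prime_power_tail_le hpp.two_le) hn'.le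
        _ = n * (logSum n + 4 * ∑ p ∈ primesLE n, 1 / (p : ℝ) ^ (3 / 2 : ℝ)) := by
            rw [← mul_sum, sum_add_distrib, ← mul_sum, logSum]
        _ ≤ _ := by
            have := hs.sum_le_tsum (primesLE n) (fun i _ => by positivity)
            gcongr
    have h2 := log_factorial_ge n hn
    have : n * (Real.log n - 1) ≤ n * (logSum n + 4 * B) := by linarith
    linarith [le_of_mul_le_mul_left this hn']
  rw [abs_le]
  constructor <;> linarith

/-- One step of the partial summation, with `a = log n`, `b = log (n + 1)`. -/
lemma log_ratio_step {a b : ℝ} (ha : 0 < a) (hab : a ≤ b) (hb : b - a ≤ 1) :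
    |(b - a) / b - (Real.log b - Real.log a)| ≤ 1 / a - 1 / b := by
  have hb0 : 0 < b := by linarith
  have h1 : Real.log b - Real.log a ≤ b / a - 1 := by
    rw [← Real.log_div hb0.ne' ha.ne']
    exact Real.log_le_sub_one_of_pos (by positivity)
  have h2 : 1 - a / b ≤ Real.log b - Real.log a := by
    rw [← Real.log_div hb0.ne' ha.ne']
    have := Real.one_sub_inv_le_log_of_pos (x := b / a) (by positivity)
    rwa [inv_div] at this
  have h3 : (b - a) / b = 1 - a / b := by field_simp
  have h4 : b / a - 1 - (1 - a / b) = (b - a) * (1 / a - 1 / b) := by field_simp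
  have h5 : 0 ≤ 1 / a - 1 / b := sub_nonneg.2 (one_div_le_one_div_of_le ha hab)
  rw [h3, abs_le]
  constructor <;> nlinarith

lemma recipSum_succ (n : ℕ) (hn : 1 ≤ n) :
    recipSum (n + 1) - recipSum n = (logSum (n + 1) - logSum n) / Real.log ((n + 1 : ℕ) : ℝ) := by
  have hl : 0 < Real.log ((n + 1 : ℕ) : ℝ) := Real.log_pos (by exact_mod_cast (by omega))
  simp only [recipSum, logSum, Nat.primesLE_succ]
  split_ifs
  · rw [sum_insert (Nat.notMem_primesLE n), sum_insert (Nat.notMem_primesLE n)]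
    field_simp
    ring
  · simp

/-- Mertens' second theorem in the form `∑_{p ≤ n} 1 / p = log log n + O(1)`. -/
lemma exists_recipSum_bound :
    ∃ K : ℝ, ∀ n : ℕ, 2 ≤ n → |recipSum n - Real.log (Real.log n)| ≤ K := by
  obtain ⟨C, hC⟩ := exists_logSum_bound
  have hC0 : 0 ≤ C := (abs_nonneg _).trans (hC 1 le_rfl)
  have hl2 : 0 < Real.log 2 := Real.log_pos (by norm_num)
  -- Partial summation, as an induction: subtracting `(logSum n - log n) / log n` leaves
  -- increments of size `(1 + C) (1 / log n - 1 / log (n + 1))`, which telescope.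
  let F : ℕ → ℝ := fun n =>
    recipSum n - Real.log (Real.log n) - (logSum n - Real.log n) / Real.log n
  have key : ∀ n : ℕ, 2 ≤ n →
      |F n| ≤ |F 2| + (1 + C) * (1 / Real.log 2 - 1 / Real.log n) := by
    intro n hn
    induction n, hn using Nat.le_induction with
    | base => simp
    | succ n hn ih =>
      have hnR : (2 : ℝ) ≤ n := by exact_mod_cast hn
      set a := Real.log n with ha
      set b := Real.log ((n + 1 : ℕ) : ℝ) with hb
      have ha0 : 0 < a := Real.log_pos (by linarith)
      have hab : a ≤ b := Real.log_le_log (by linarith) (by push_cast; linarith)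
      have hb0 : 0 < b := by linarith
      have hba : b - a ≤ 1 := by
        rw [ha, hb, ← Real.log_div (by positivity) (by positivity)]
        refine (Real.log_le_sub_one_of_pos (by positivity)).trans ?_
        push_cast
        rw [add_div, div_self (by positivity)]
        have : 1 / (n : ℝ) ≤ 1 := by rw [div_le_one (by linarith)]; linarith
        linarith
      have hstep := log_ratio_step ha0 hab hba
      have hsucc := recipSum_succ n (by omega)
      have hinc : F (n + 1) - F n =
          ((b - a) / b - (Real.log b - Real.log a)) + (logSum n - a) * (1 / a - 1 / b) := by
        have : F (n + 1) - F n = (recipSum (n + 1) - recipSum n)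
            - (Real.log b - Real.log a)
            - ((logSum (n + 1) - b) / b - (logSum n - a) / a) := by
          simp only [F, ← ha, ← hb]; ring
        rw [this, hsucc, ← hb]
        field_simp
        ring
      have h5 : 0 ≤ 1 / a - 1 / b := sub_nonneg.2 (one_div_le_one_div_of_le ha0 hab)
      have hR : |(logSum n - a) * (1 / a - 1 / b)| ≤ C * (1 / a - 1 / b) := by
        rw [abs_mul, abs_of_nonneg h5]
        exact mul_le_mul_of_nonneg_right (hC n (by omega)) h5
      have hF : |F (n + 1)| ≤ |F n| + |F (n + 1) - F n| := by
        have := abs_add_le (F n) (F (n + 1) - F n)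
        rwa [add_sub_cancel] at this
      have hI : |F (n + 1) - F n| ≤ (1 / a - 1 / b) + C * (1 / a - 1 / b) := by
        rw [hinc]
        exact (abs_add_le _ _).trans (add_le_add hstep hR)
      linarith
  refine ⟨|F 2| + (1 + C) * (1 / Real.log 2) + C / Real.log 2, fun n hn => ?_⟩
  have hnR : (2 : ℝ) ≤ n := by exact_mod_cast hn
  have hln : Real.log 2 ≤ Real.log n := Real.log_le_log (by norm_num) hnR
  have hln0 : 0 < Real.log n := by linarith
  have h1 := key n hn
  have h2 : |(logSum n - Real.log n) / Real.log n| ≤ C / Real.log 2 := by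
    rw [abs_div, abs_of_pos hln0]
    exact div_le_div₀ hC0 (hC n (by omega)) hl2 hln
  have h3 : recipSum n - Real.log (Real.log n) =
      F n + (logSum n - Real.log n) / Real.log n := by simp only [F]; ring
  have h4 : 0 ≤ (1 + C) * (1 / Real.log n) := by positivity
  rw [h3]
  refine (abs_add_le _ _).trans ?_
  linarith

/-! ### Variance of the truncated prime divisor count -/

/-- The centred indicator `1_{p ∣ n} - 1 / p`. -/
noncomputable def centred (p n : ℕ) : ℝ := (if p ∣ n then 1 else 0) - 1 / (p : ℝ)

lemma abs_count_sub_le (N d : ℕ) :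
    |∑ n ∈ Icc 1 N, (if d ∣ n then (1 : ℝ) else 0) - N / d| ≤ 1 := by
  have hcard : ∑ n ∈ Icc 1 N, (if d ∣ n then (1 : ℝ) else 0) = ((N / d : ℕ) : ℝ) := by
    rw [sum_boole, show Icc 1 N = Ioc 0 N from rfl, Nat.Ioc_filter_dvd_card_eq_div]
  have h1 : ((N / d : ℕ) : ℝ) ≤ (N : ℝ) / d := Nat.cast_div_le
  have h2 : (N : ℝ) / d < (N / d : ℕ) + 1 := by
    rw [← Nat.floor_div_eq_div (K := ℝ)]; exact Nat.lt_floor_add_one _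
  rw [hcard, abs_le]
  constructor <;> linarith

/-- Distinct primes are almost uncorrelated: the covariance sum is bounded, uniformly in `N`. -/
lemma abs_cov_le_of_ne (N : ℕ) {p q : ℕ} (hp : p.Prime) (hq : q.Prime) (hpq : p ≠ q) :
    |∑ n ∈ Icc 1 N, centred p n * centred q n| ≤ 2 := by
  have hp2 : (2 : ℝ) ≤ p := by exact_mod_cast hp.two_le
  have hq2 : (2 : ℝ) ≤ q := by exact_mod_cast hq.two_le
  have hP := abs_count_sub_le N p
  have hQ := abs_count_sub_le N q
  have hPQ := abs_count_sub_le N (p * q)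
  set cp := ∑ n ∈ Icc 1 N, (if p ∣ n then (1 : ℝ) else 0) with hcp
  set cq := ∑ n ∈ Icc 1 N, (if q ∣ n then (1 : ℝ) else 0) with hcq
  set cpq := ∑ n ∈ Icc 1 N, (if p * q ∣ n then (1 : ℝ) else 0) with hcpq
  have hterm : ∀ n, centred p n * centred q n =
      (if p * q ∣ n then (1 : ℝ) else 0) - 1 / q * (if p ∣ n then (1 : ℝ) else 0)
        - 1 / p * (if q ∣ n then (1 : ℝ) else 0) + 1 / p * (1 / q) := by
    intro n
    have hdvd : p * q ∣ n ↔ p ∣ n ∧ q ∣ n :=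
      ⟨fun h => ⟨(dvd_mul_right p q).trans h, (dvd_mul_left q p).trans h⟩,
        fun h => ((Nat.coprime_primes hp hq).2 hpq).mul_dvd_of_dvd_of_dvd h.1 h.2⟩
    simp only [centred, hdvd]
    by_cases h1 : p ∣ n <;> by_cases h2 : q ∣ n <;> simp [h1, h2] <;> ring
  have hsum : ∑ n ∈ Icc 1 N, centred p n * centred q n =
      (cpq - N / ((p * q : ℕ) : ℝ)) - 1 / q * (cp - N / p) - 1 / p * (cq - N / q) := by
    simp only [hterm, sum_add_distrib, sum_sub_distrib, ← mul_sum, ← hcp, ← hcq, ← hcpq]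
    simp only [sum_const, Nat.card_Icc, Nat.add_sub_cancel, nsmul_eq_mul]
    push_cast
    field_simp
    ring
  have hip : 1 / (p : ℝ) ≤ 1 / 2 := one_div_le_one_div_of_le (by norm_num) hp2
  have hiq : 1 / (q : ℝ) ≤ 1 / 2 := one_div_le_one_div_of_le (by norm_num) hq2
  have h1 : |1 / (q : ℝ) * (cp - N / p)| ≤ 1 / 2 * 1 := by
    rw [abs_mul, abs_of_nonneg (by positivity : (0 : ℝ) ≤ 1 / q)]
    gcongr
  have h2 : |1 / (p : ℝ) * (cq - N / q)| ≤ 1 / 2 * 1 := by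
    rw [abs_mul, abs_of_nonneg (by positivity : (0 : ℝ) ≤ 1 / p)]
    gcongr
  rw [hsum]
  rw [abs_le] at *
  constructor <;> linarith [h1.1, h1.2, h2.1, h2.2, hPQ.1, hPQ.2]

/-- The diagonal terms have main part `N / p`; the error `N / p ^ 2` is harmless because
`∑ 1 / p ^ 2` converges. -/
lemma abs_cov_self_sub_le (N : ℕ) {p : ℕ} (hp : p.Prime) :
    |∑ n ∈ Icc 1 N, centred p n * centred p n - N * (1 / (p : ℝ))| ≤
      2 + N * (1 / (p : ℝ) ^ 2) := by
  have hp2 : (2 : ℝ) ≤ p := by exact_mod_cast hp.two_le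
  have hP := abs_count_sub_le N p
  set cp := ∑ n ∈ Icc 1 N, (if p ∣ n then (1 : ℝ) else 0) with hcp
  have hterm : ∀ n, centred p n * centred p n =
      (1 - 2 / p) * (if p ∣ n then (1 : ℝ) else 0) + 1 / (p : ℝ) ^ 2 := by
    intro n
    simp only [centred]
    split_ifs
    · field_simp; ring
    · field_simp; ring
  have hsum : ∑ n ∈ Icc 1 N, centred p n * centred p n - N * (1 / (p : ℝ)) =
      (1 - 2 / p) * (cp - N / p) - N * (1 / (p : ℝ) ^ 2) := by
    simp only [hterm, sum_add_distrib, ← mul_sum, ← hcp]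
    simp only [sum_const, Nat.card_Icc, Nat.add_sub_cancel, nsmul_eq_mul]
    field_simp
    ring
  have h2p : 2 / (p : ℝ) ≤ 1 := by rw [div_le_one (by linarith)]; exact hp2
  have h2p0 : 0 ≤ 2 / (p : ℝ) := by positivity
  have h1 : |(1 - 2 / (p : ℝ)) * (cp - N / p)| ≤ 1 * 1 := by
    rw [abs_mul, abs_of_nonneg (by linarith : (0 : ℝ) ≤ 1 - 2 / p)]
    gcongr
    linarith
  have h3 : 0 ≤ N * (1 / (p : ℝ) ^ 2) := by positivity
  rw [hsum]
  refine (abs_sub _ _).trans ?_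
  rw [abs_of_nonneg h3]
  linarith

/-- Turán's variance computation for the primes up to `√N`. The truncation makes the number of
pairs `(p, q)` at most `N`, so that the bounded covariance errors add up to `O(N)`. -/
lemma exists_truncated_variance_bound :
    ∃ B : ℝ, ∀ N : ℕ,
      |∑ n ∈ Icc 1 N, (∑ p ∈ primesLE N.sqrt, centred p n) ^ 2 - N * recipSum N.sqrt|
        ≤ B * N := by
  have hs : Summable (fun n : ℕ => 1 / (n : ℝ) ^ 2) :=
    Real.summable_one_div_nat_pow.2 (by norm_num)
  refine ⟨2 + ∑' n : ℕ, 1 / (n : ℝ) ^ 2, fun N => ?_⟩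
  set P := primesLE N.sqrt with hP
  have hcard : ((#P : ℕ) : ℝ) * #P ≤ N := by
    have h1 : #P ≤ N.sqrt := by
      rw [hP, Nat.primesLE_eq_filter_Icc_one]
      exact (card_filter_le _ _).trans (by simp)
    exact_mod_cast (Nat.mul_le_mul h1 h1).trans N.sqrt_le
  have hexp : ∑ n ∈ Icc 1 N, (∑ p ∈ P, centred p n) ^ 2 - N * recipSum N.sqrt =
      ∑ p ∈ P, ∑ q ∈ P, (∑ n ∈ Icc 1 N, centred p n * centred q n
        - if p = q then N * (1 / (p : ℝ)) else 0) := by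
    simp only [sum_sub_distrib, sum_ite_eq]
    congr 1
    · simp only [sq, sum_mul_sum]
      rw [sum_comm]
      exact sum_congr rfl fun p _ => sum_comm
    · rw [recipSum, mul_sum]
      exact sum_congr rfl fun p hp => by simp [hp]
  have hbd : ∀ p ∈ P, ∀ q ∈ P, |∑ n ∈ Icc 1 N, centred p n * centred q n
        - if p = q then N * (1 / (p : ℝ)) else 0| ≤
        2 + if p = q then N * (1 / (p : ℝ) ^ 2) else 0 := by
    intro p hp q hq
    have hpp := Nat.prime_of_mem_primesLE hp
    have hqq := Nat.prime_of_mem_primesLE hq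
    split_ifs with h
    · subst h; exact abs_cov_self_sub_le N hpp
    · simpa using abs_cov_le_of_ne N hpp hqq h
  rw [hexp]
  calc _ ≤ ∑ p ∈ P, ∑ q ∈ P, (2 + if p = q then N * (1 / (p : ℝ) ^ 2) else 0) :=
        (abs_sum_le_sum_abs _ _).trans (sum_le_sum fun p hp =>
          (abs_sum_le_sum_abs _ _).trans (sum_le_sum fun q hq => hbd p hp q hq))
    _ = 2 * ((#P : ℕ) * #P) + N * ∑ p ∈ P, 1 / (p : ℝ) ^ 2 := by
        simp only [sum_add_distrib, sum_ite_eq, sum_const, nsmul_eq_mul]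
        rw [mul_sum]
        congr 1
        · ring
        · exact sum_congr rfl fun p hp => by simp [hp]
    _ ≤ 2 * N + N * ∑' n : ℕ, 1 / (n : ℝ) ^ 2 := by
        have := hs.sum_le_tsum P (fun i _ => by positivity)
        gcongr
    _ = _ := by ring

/-- An integer `n ≤ N` has at most one prime factor exceeding `√N`. -/
lemma abs_omega_sub_truncated_le {N n : ℕ} (hn : n ∈ Icc 1 N) :
    |(n.primeFactors.card : ℝ) -
      (∑ p ∈ primesLE N.sqrt, centred p n + recipSum N.sqrt)| ≤ 1 := by
  have hn' := Finset.mem_Icc.1 hn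
  have hS : ∑ p ∈ primesLE N.sqrt, centred p n + recipSum N.sqrt =
      (#{p ∈ n.primeFactors | p ≤ N.sqrt} : ℝ) := by
    simp only [centred, sum_sub_distrib, recipSum, sub_add_cancel]
    rw [sum_boole]
    congr 2
    ext p
    simp only [mem_filter, Nat.mem_primesLE, Nat.mem_primeFactors]
    constructor
    · rintro ⟨⟨h1, h2⟩, h3⟩; exact ⟨⟨h2, h3, by omega⟩, h1⟩
    · rintro ⟨⟨h2, h3, _⟩, h1⟩; exact ⟨⟨h1, h2⟩, h3⟩
  have hbig : #{p ∈ n.primeFactors | ¬ p ≤ N.sqrt} ≤ 1 := by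
    rw [card_le_one]
    intro p hp q hq
    simp only [mem_filter, Nat.mem_primeFactors, not_le] at hp hq
    by_contra hne
    have hdvd : p * q ∣ n :=
      ((Nat.coprime_primes hp.1.1 hq.1.1).2 hne).mul_dvd_of_dvd_of_dvd hp.1.2.1 hq.1.2.1
    have h1 : p * q ≤ n := Nat.le_of_dvd (by omega) hdvd
    have h2 : (N.sqrt + 1) * (N.sqrt + 1) ≤ p * q := Nat.mul_le_mul hp.2 hq.2
    have h3 := Nat.lt_succ_sqrt N
    simp only [Nat.succ_eq_add_one] at h3
    omega
  have hsplit := card_filter_add_card_filter_not (s := n.primeFactors) (fun p => p ≤ N.sqrt)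
  have hsplit' : (n.primeFactors.card : ℝ) = #{p ∈ n.primeFactors | p ≤ N.sqrt}
      + #{p ∈ n.primeFactors | ¬ p ≤ N.sqrt} := by exact_mod_cast hsplit.symm
  have hbig_cast : (#{p ∈ n.primeFactors | ¬ p ≤ N.sqrt} : ℝ) ≤ 1 := by exact_mod_cast hbig
  rw [hS, hsplit', add_sub_cancel_left, abs_of_nonneg (by positivity)]
  exact hbig_cast

/-! ### Passage to `ω` and `log log N` -/

/-- Truncating the prime sum at `√N` shifts `log log N` by a bounded amount only. -/
lemma exists_recipSum_sqrt_bound :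
    ∃ K : ℝ, ∀ N : ℕ, 4 ≤ N → |recipSum N.sqrt - Real.log (Real.log N)| ≤ K := by
  obtain ⟨K, hK⟩ := exists_recipSum_bound
  refine ⟨K + Real.log 4, fun N hN => ?_⟩
  have hy : 2 ≤ N.sqrt := Nat.le_sqrt.2 (by omega)
  have hyR : (2 : ℝ) ≤ N.sqrt := by exact_mod_cast hy
  have hyN : (N.sqrt : ℝ) ≤ N := by exact_mod_cast N.sqrt_le_self
  have hly : 0 < Real.log N.sqrt := Real.log_pos (by linarith)
  have h1 : Real.log N.sqrt ≤ Real.log N := Real.log_le_log (by linarith) hyN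
  have h2 : Real.log N ≤ 4 * Real.log N.sqrt := by
    have h3 : (N : ℝ) ≤ (N.sqrt : ℝ) ^ 4 := by
      have h4 : N ≤ (N.sqrt + 1) * (N.sqrt + 1) := (Nat.lt_succ_sqrt N).le
      have h5 : (N : ℝ) ≤ (N.sqrt + 1) * (N.sqrt + 1) := by exact_mod_cast h4
      have h6 : (N.sqrt : ℝ) + 1 ≤ (N.sqrt : ℝ) ^ 2 := by nlinarith
      nlinarith
    have := Real.log_le_log (by linarith) h3
    rwa [Real.log_pow] at this
  have h3 : Real.log (Real.log N.sqrt) ≤ Real.log (Real.log N) := Real.log_le_log hly h1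
  have h4 : Real.log (Real.log N) ≤ Real.log 4 + Real.log (Real.log N.sqrt) := by
    rw [← Real.log_mul (by norm_num) hly.ne']
    exact Real.log_le_log (by linarith) h2
  have h5 := hK _ hy
  rw [abs_le] at *
  constructor <;> linarith [h5.1, h5.2, Real.log_nonneg (by norm_num : (1 : ℝ) ≤ 4)]

/-- A shift of size at most `K` changes a square `X ^ 2` by a small multiple of `X ^ 2`
plus a constant. -/
lemma abs_sq_sub_sq_le {X Y K η : ℝ} (hη : 0 < η) (h : |Y - X| ≤ K) :
    |Y ^ 2 - X ^ 2| ≤ η * X ^ 2 + K ^ 2 / η + K ^ 2 := by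
  have hK : 0 ≤ K := (abs_nonneg _).trans h
  have h1 : |Y ^ 2 - X ^ 2| ≤ 2 * (|X| * K) + K ^ 2 := by
    have : Y ^ 2 - X ^ 2 = 2 * (X * (Y - X)) + (Y - X) ^ 2 := by ring
    rw [this]
    refine (abs_add_le _ _).trans ?_
    rw [abs_mul, abs_mul, abs_two, abs_pow]
    gcongr
  have h2 : 2 * (|X| * K) ≤ η * X ^ 2 + K ^ 2 / η := by
    have h3 : η * X ^ 2 + K ^ 2 / η - 2 * (|X| * K) = (η * |X| - K) ^ 2 / η := by
      rw [← sq_abs X]; field_simp; ring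
    have : 0 ≤ (η * |X| - K) ^ 2 / η := by positivity
    linarith
  linarith

/-- A quantitative form of the variance asymptotics, with a free parameter `η`. -/
lemma exists_mean_square_bound :
    ∃ C : ℝ, ∀ N : ℕ, 4 ≤ N → ∀ η : ℝ, 0 < η →
      |(1 : ℝ) / N * ∑ n ∈ Icc 1 N, ((n.primeFactors.card : ℝ) - Real.log (Real.log N)) ^ 2
        - Real.log (Real.log N)| ≤ η * (Real.log (Real.log N) + C) + C / η + C := by
  obtain ⟨B, hB⟩ := exists_truncated_variance_bound
  obtain ⟨K, hK⟩ := exists_recipSum_sqrt_bound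
  have hK0 : 0 ≤ K := (abs_nonneg _).trans (hK 4 le_rfl)
  have hB0 : 0 ≤ B := by simpa using (abs_nonneg _).trans (hB 1)
  refine ⟨B + K + (1 + K) ^ 2, fun N hN η hη => ?_⟩
  have hN0 : (0 : ℝ) < N := by exact_mod_cast (by omega : 0 < N)
  set L := Real.log (Real.log N) with hL
  set A := recipSum N.sqrt with hA
  have hAL := hK N hN
  set V := ∑ n ∈ Icc 1 N, (∑ p ∈ primesLE N.sqrt, centred p n) ^ 2 with hV
  have hVb : |V - N * A| ≤ B * N := hB N
  set W := ∑ n ∈ Icc 1 N, ((n.primeFactors.card : ℝ) - L) ^ 2 with hW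
  have hWV : |W - V| ≤ η * V + N * ((1 + K) ^ 2 / η + (1 + K) ^ 2) := by
    rw [hW, hV, ← sum_sub_distrib]
    calc _ ≤ ∑ n ∈ Icc 1 N, (η * (∑ p ∈ primesLE N.sqrt, centred p n) ^ 2
          + ((1 + K) ^ 2 / η + (1 + K) ^ 2)) := by
          refine (abs_sum_le_sum_abs _ _).trans (sum_le_sum fun n hn => ?_)
          rw [← add_assoc]
          refine abs_sq_sub_sq_le hη ?_
          have h1 := abs_omega_sub_truncated_le hn
          rw [← hA] at h1
          rw [abs_le] at *
          constructor <;> linarith [h1.1, h1.2, hAL.1, hAL.2]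
      _ = _ := by
          rw [sum_add_distrib, ← mul_sum, sum_const, Nat.card_Icc, nsmul_eq_mul]
          simp
  have hmV : |V / N - L| ≤ B + K := by
    have h1 : |V / N - A| ≤ B := by
      have : V / N - A = (V - N * A) / N := by field_simp
      rw [this, abs_div, abs_of_pos hN0, div_le_iff₀ hN0]
      exact hVb
    have := abs_add_le (V / N - A) (A - L)
    rw [sub_add_sub_cancel] at this
    linarith
  have hmW : |W / N - V / N| ≤ η * (V / N) + ((1 + K) ^ 2 / η + (1 + K) ^ 2) := by
    rw [← sub_div, abs_div, abs_of_pos hN0, div_le_iff₀ hN0]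
    have : (η * (V / N) + ((1 + K) ^ 2 / η + (1 + K) ^ 2)) * N =
        η * V + N * ((1 + K) ^ 2 / η + (1 + K) ^ 2) := by field_simp
    rw [this]
    exact hWV
  have hVle : V / N ≤ L + (B + K) := by linarith [(abs_le.1 hmV).2]
  have htri : |W / N - L| ≤ |W / N - V / N| + |V / N - L| := abs_sub_le _ _ _
  have hη1 : η * (V / N) ≤ η * (L + (B + K + (1 + K) ^ 2)) := by
    gcongr
    linarith [sq_nonneg (1 + K)]
  have hη2 : (1 + K) ^ 2 / η ≤ (B + K + (1 + K) ^ 2) / η := by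
    gcongr
    linarith
  rw [one_div, inv_mul_eq_div]
  linarith

end TuranOmega

/-- Turán-type second-moment estimate: the variance of the number of distinct prime
factors of a uniform random integer in `[1, N]` is asymptotic to `log log N`.
Here `ω(n) = n.primeFactors.card`. -/
theorem variance_omega_asymptotic :
    Tendsto
      (fun N : ℕ =>
        ((1 : ℝ) / N *
            ∑ n ∈ Finset.Icc 1 N,
              ((n.primeFactors.card : ℝ) - Real.log (Real.log N)) ^ 2) /
          Real.log (Real.log N))
      atTop (nhds 1) := by
  obtain ⟨C, hC⟩ := TuranOmega.exists_mean_square_bound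
  have hL : Tendsto (fun N : ℕ => Real.log (Real.log N)) atTop atTop :=
    Real.tendsto_log_atTop.comp (Real.tendsto_log_atTop.comp tendsto_natCast_atTop_atTop)
  have hinv : Tendsto (fun N : ℕ => (Real.log (Real.log N))⁻¹) atTop (nhds 0) :=
    hL.inv_tendsto_atTop
  have hsq : Tendsto (fun N : ℕ => (√(Real.log (Real.log N)))⁻¹) atTop (nhds 0) :=
    (Real.tendsto_sqrt_atTop.comp hL).inv_tendsto_atTop
  have hlim : Tendsto (fun N : ℕ =>
      (√(Real.log (Real.log N)))⁻¹ * (1 + C * (Real.log (Real.log N))⁻¹)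
        + C * (√(Real.log (Real.log N)))⁻¹ + C * (Real.log (Real.log N))⁻¹) atTop (nhds 0) := by
    have := ((hsq.mul ((hinv.const_mul C).const_add 1)).add (hsq.const_mul C)).add
      (hinv.const_mul C)
    simpa using this
  rw [tendsto_iff_norm_sub_tendsto_zero]
  refine squeeze_zero' (Eventually.of_forall fun N => norm_nonneg _) ?_ hlim
  filter_upwards [eventually_ge_atTop 4, hL.eventually_gt_atTop 0] with N hN hpos
  -- `η = 1 / √(log log N)` balances the two error terms involving `η`.
  have hs : 0 < √(Real.log (Real.log N)) := Real.sqrt_pos.2 hpos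
  have h := hC N hN (√(Real.log (Real.log N)))⁻¹ (by positivity)
  have hss := Real.mul_self_sqrt hpos.le
  set L := Real.log (Real.log N) with hLdef
  set s := √L with hsdef
  rw [Real.norm_eq_abs, div_sub_one hpos.ne', abs_div, abs_of_pos hpos, div_le_iff₀ hpos]
  refine h.trans (le_of_eq ?_)
  rw [← hss]
  field_simp
end

section
/- The Hardy–Ramanujan theorem: for every ε > 0, the proportion of integers n in [3, N] satisfying |ω(n) − log log n| ≥ ε·log log n tends to 0 as N → ∞. Equivalently, ω(n) has normal order log log n: almost all integers n satisfy |ω(n) − log log n| < ε·log log n. -/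
open Filter

/-!
The proof is Turán's second-moment argument. Let `P(N) = ∑_{p ≤ N} 1/p`. Writing `ω(n)` as the sum
over primes `p ≤ N` of the indicator of `p ∣ n`, and counting multiples of `p` and of `pq` up to
`N`, gives `∑_{n ≤ N} ω(n) ≥ N P(N) - N` and `∑_{n ≤ N} ω(n)² ≤ N P(N)² + N P(N)`, whence
`∑_{n ≤ N} (ω(n) - P(N))² ≤ 3 N P(N)` (`turan`). By Chebyshev's inequality at most
`3 N P(N) / T²` of the integers `n ≤ N` deviate from `P(N)` by `T` or more.

It remains to know that `P(N) ~ log log N`, which needs less than Mertens' theorem.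
* Lower bound: `log (N + 1) ≤ ∑_{m ≤ N} 1/m ≤ ∏_{p ≤ N} (1 - 1/p)⁻¹ ≤ exp (P(N) + O(1))`.
* Upper bound: for `s > 1`, `exp (∑_{p ≤ N} p^{-s}) ≤ ∏_{p ≤ N} (1 - p^{-s})⁻¹ ≤ ζ(s)`, and
  `ζ(s) ≤ 2 / (s - 1)` near `1`. Taking `s = 1 + η / log N` costs only a factor `e^η` in replacing
  `1/p` by `p^{-s}` for `p ≤ N`, so `P(N) ≤ e^η (log log N + log (2/η))` for every fixed `η > 0`.

Finally, for `√N < n ≤ N` the quantity `log log n` is within `log 2` of `log log N`, and the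
remaining `n ≤ √N` have density zero.
-/

/-! ### The sum of reciprocals of primes -/

/-- The sum `∑ 1/p` over the primes `p ≤ N` (`primesBelow` is strict, hence the `N + 1`). -/
noncomputable def primeRecip (N : ℕ) : ℝ := ∑ p ∈ (N + 1).primesBelow, (p : ℝ)⁻¹

/-- The completely multiplicative function `n ↦ n ^ (-s)`, for real `s`, as a monoid homomorphism:
the form in which the Euler product lemmas take it. -/
noncomputable def invRpowHom (s : ℝ) : ℕ →* ℝ where
  toFun n := ((n : ℝ) ^ s)⁻¹
  map_one' := by simp
  map_mul' a b := by
    rw [Nat.cast_mul, Real.mul_rpow (Nat.cast_nonneg a) (Nat.cast_nonneg b), mul_inv]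

lemma invRpowHom_lt_one {s : ℝ} (hs : 0 < s) {p : ℕ} (hp : p.Prime) :
    ‖invRpowHom s p‖ < 1 := by
  have h1 : (1 : ℝ) < (p : ℝ) ^ s := Real.one_lt_rpow (by exact_mod_cast hp.one_lt) hs
  change ‖((p : ℝ) ^ s)⁻¹‖ < 1
  rw [Real.norm_of_nonneg (by positivity)]
  exact inv_lt_one_of_one_lt₀ h1

/-- Every `m ≤ N` is `(N + 1)`-smooth, so the Euler product over `p ≤ N` dominates the harmonic
sum up to `N`. -/
lemma log_le_eulerProd (N : ℕ) :
    Real.log (N + 1) ≤ ∏ p ∈ (N + 1).primesBelow, (1 - (p : ℝ)⁻¹)⁻¹ := by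
  have h := (EulerProduct.summable_and_hasSum_smoothNumbers_prod_primesBelow_geometric
    (f := invRpowHom 1) (fun hp => invRpowHom_lt_one one_pos hp) (N + 1)).2
  have e : ∀ n : ℕ, invRpowHom 1 n = (n : ℝ)⁻¹ := fun n => by
    change ((n : ℝ) ^ (1 : ℝ))⁻¹ = _
    rw [Real.rpow_one]
  simp only [e] at h
  have hmem : ∀ m ∈ Finset.Icc 1 N, m ∈ (N + 1).smoothNumbers := fun m hm => by
    rw [Finset.mem_Icc] at hm
    exact Nat.mem_smoothNumbers_of_lt hm.1 (Nat.lt_succ_of_le hm.2)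
  have hle := sum_le_hasSum ((Finset.Icc 1 N).subtype (· ∈ (N + 1).smoothNumbers))
    (fun i _ => by positivity) h
  rw [Finset.sum_subtype_of_mem (fun n : ℕ => (n : ℝ)⁻¹) hmem] at hle
  refine le_trans ?_ hle
  have := log_add_one_le_harmonic N
  rw [harmonic_eq_sum_Icc] at this
  push_cast at this
  exact this

/-- Lower half of Mertens' second theorem, from the factorwise bound
`(1 - 1/p)⁻¹ ≤ exp (1/p + 2/p²)`. -/
lemma exists_loglog_le_primeRecip :
    ∃ C : ℝ, ∀ N : ℕ, 1 ≤ N → Real.log (Real.log (N + 1)) ≤ primeRecip N + C := by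
  have hsum : Summable (fun n : ℕ => 2 * (((n : ℝ) ^ 2)⁻¹)) :=
    (Real.summable_nat_pow_inv.2 one_lt_two).mul_left 2
  refine ⟨∑' n : ℕ, 2 * (((n : ℝ) ^ 2)⁻¹), fun N hN => ?_⟩
  have hfac : ∀ p ∈ (N + 1).primesBelow,
      (1 - (p : ℝ)⁻¹)⁻¹ ≤ Real.exp ((p : ℝ)⁻¹ + 2 * (((p : ℝ) ^ 2)⁻¹)) := by
    intro p hp
    have h2 : (2 : ℝ) ≤ p := by exact_mod_cast (Nat.prime_of_mem_primesBelow hp).two_le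
    refine le_trans ?_ (Real.add_one_le_exp _)
    have h3 : (p : ℝ)⁻¹ ≤ 1 / 2 := by
      rw [one_div]; exact inv_anti₀ two_pos h2
    have h4 : 0 < (p : ℝ)⁻¹ := by positivity
    rw [← inv_pow]
    set x := (p : ℝ)⁻¹
    rw [inv_le_iff_one_le_mul₀ (by linarith)]
    nlinarith [mul_nonneg (sq_nonneg x) (by linarith : 0 ≤ 1 - 2 * x)]
  have hprod : Real.log (N + 1) ≤
      Real.exp (primeRecip N + ∑' n : ℕ, 2 * (((n : ℝ) ^ 2)⁻¹)) := by
    refine (log_le_eulerProd N).trans ?_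
    refine (Finset.prod_le_prod (fun p hp => ?_) hfac).trans ?_
    · have h1 : (1 : ℝ) ≤ p := by
        exact_mod_cast (Nat.prime_of_mem_primesBelow hp).one_lt.le
      have := inv_le_one_of_one_le₀ h1
      exact inv_nonneg.2 (by linarith)
    · rw [← Real.exp_sum, Finset.sum_add_distrib]
      have := hsum.sum_le_tsum (N + 1).primesBelow (fun i _ => by positivity)
      exact Real.exp_le_exp.2 (by unfold primeRecip; linarith)
  have hpos : 0 < Real.log ((N : ℝ) + 1) :=
    Real.log_pos (by have : (1 : ℝ) ≤ N := by exact_mod_cast hN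
                     linarith)
  calc _ ≤ _ := Real.log_le_log hpos hprod
    _ = _ := Real.log_exp _

/-- The logarithm of the Euler product for `ζ(s)` dominates the prime sum, since
`exp x ≤ (1 - x)⁻¹` for `x < 1`. -/
lemma sum_primes_rpow_le {s : ℝ} (hs : 1 < s) (N : ℕ) :
    ∑ p ∈ N.primesBelow, ((p : ℝ) ^ s)⁻¹ ≤ Real.log (∑' n : ℕ, 1 / (n : ℝ) ^ s) := by
  have hsum : Summable (invRpowHom s) := Real.summable_nat_rpow_inv.2 hs
  have h := EulerProduct.prod_primesBelow_geometric_eq_tsum_smoothNumbers hsum N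
  have hle : ∑' m : N.smoothNumbers, invRpowHom s m ≤ ∑' n : ℕ, 1 / (n : ℝ) ^ s := by
    have e : (fun n : ℕ => 1 / (n : ℝ) ^ s) = invRpowHom s := by
      funext n; exact one_div _
    rw [e]
    exact Summable.tsum_subtype_le (invRpowHom s) _
      (fun n => inv_nonneg.2 (Real.rpow_nonneg (Nat.cast_nonneg n) s)) hsum
  rw [← Real.log_exp (∑ p ∈ N.primesBelow, ((p : ℝ) ^ s)⁻¹)]
  refine Real.log_le_log (Real.exp_pos _) (le_trans ?_ hle)
  rw [← h, Real.exp_sum]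
  refine Finset.prod_le_prod (fun _ _ => (Real.exp_pos _).le) fun p hp => ?_
  have h1 := invRpowHom_lt_one (zero_lt_one.trans hs) (Nat.prime_of_mem_primesBelow hp)
  have h2 := (abs_lt.1 h1).2
  change Real.exp (invRpowHom s p) ≤ _
  rw [le_inv_comm₀ (Real.exp_pos _) (by linarith), ← Real.exp_neg]
  have := Real.add_one_le_exp (-(invRpowHom s p))
  linarith

lemma tendsto_log_nat : Tendsto (fun N : ℕ => Real.log N) atTop atTop :=
  Real.tendsto_log_atTop.comp tendsto_natCast_atTop_atTop

lemma tendsto_loglog_nat : Tendsto (fun N : ℕ => Real.log (Real.log N)) atTop atTop :=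
  Real.tendsto_log_atTop.comp tendsto_log_nat

/-- The upper bound for `primeRecip N`, obtained from `sum_primes_rpow_le` at
`s = 1 + η / log N`. -/
lemma eventually_primeRecip_le {η : ℝ} (hη : 0 < η) :
    ∀ᶠ N : ℕ in atTop,
      primeRecip N ≤ Real.exp η * (Real.log (2 / η) + Real.log (Real.log N)) := by
  have hz : ∀ᶠ s : ℝ in nhdsWithin 1 (Set.Ioi 1),
      (s - 1) * ∑' n : ℕ, 1 / (n : ℝ) ^ s < 2 :=
    tendsto_sub_mul_tsum_nat_rpow.eventually (gt_mem_nhds one_lt_two)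
  have hs : Tendsto (fun N : ℕ => 1 + η / Real.log N) atTop (nhdsWithin 1 (Set.Ioi 1)) := by
    refine tendsto_nhdsWithin_iff.2 ⟨?_, ?_⟩
    · simpa using (tendsto_const_nhds (x := (1 : ℝ))).add (tendsto_log_nat.const_div_atTop η)
    · filter_upwards [tendsto_log_nat.eventually_gt_atTop 0] with N hN
      have : 0 < η / Real.log N := by positivity
      simpa using this
  filter_upwards [hs.eventually hz, tendsto_log_nat.eventually_gt_atTop 0,
    eventually_ge_atTop 1] with N hN hlog hN1
  have hq : 0 < η / Real.log N := by positivity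
  set s := 1 + η / Real.log N with hsdef
  have hs1 : 1 < s := by linarith
  have hzeta : ∑' n : ℕ, 1 / (n : ℝ) ^ s ≤ 2 / η * Real.log N := by
    have e : s - 1 = η / Real.log N := by rw [hsdef]; ring
    rw [e, div_mul_eq_mul_div, div_lt_iff₀ hlog] at hN
    rw [div_mul_eq_mul_div, le_div_iff₀ hη]
    linarith
  have hzpos : 0 < ∑' n : ℕ, 1 / (n : ℝ) ^ s :=
    (Real.summable_one_div_nat_rpow.2 hs1).tsum_pos (fun n => by positivity) 1 (by simp)
  have hterm : ∀ p ∈ (N + 1).primesBelow,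
      (p : ℝ)⁻¹ ≤ Real.exp η * ((p : ℝ) ^ s)⁻¹ := by
    intro p hp
    have hp0 : (0 : ℝ) < p := by exact_mod_cast (Nat.prime_of_mem_primesBelow hp).pos
    have hpN : (p : ℝ) ≤ N := by
      exact_mod_cast Nat.le_of_lt_succ (Nat.lt_of_mem_primesBelow hp)
    have hpow : (p : ℝ) ^ (η / Real.log N) ≤ Real.exp η := by
      rw [Real.rpow_def_of_pos hp0]
      refine Real.exp_le_exp.2 ?_
      calc Real.log p * (η / Real.log N) ≤ Real.log N * (η / Real.log N) := by
            gcongr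
        _ = η := by field_simp
    rw [hsdef, Real.rpow_add hp0, Real.rpow_one, mul_inv]
    have hpp : 0 < (p : ℝ) ^ (η / Real.log N) := Real.rpow_pos_of_pos hp0 _
    calc (p : ℝ)⁻¹ = (p : ℝ)⁻¹ * ((p : ℝ) ^ (η / Real.log N) *
          ((p : ℝ) ^ (η / Real.log N))⁻¹) := by rw [mul_inv_cancel₀ hpp.ne', mul_one]
      _ ≤ (p : ℝ)⁻¹ * (Real.exp η * ((p : ℝ) ^ (η / Real.log N))⁻¹) := by gcongr
      _ = _ := by ring
  calc primeRecip N ≤ ∑ p ∈ (N + 1).primesBelow, Real.exp η * ((p : ℝ) ^ s)⁻¹ :=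
        Finset.sum_le_sum hterm
    _ = Real.exp η * ∑ p ∈ (N + 1).primesBelow, ((p : ℝ) ^ s)⁻¹ := by rw [Finset.mul_sum]
    _ ≤ Real.exp η * Real.log (2 / η * Real.log N) := by
        gcongr
        exact (sum_primes_rpow_le hs1 _).trans (Real.log_le_log hzpos hzeta)
    _ = _ := by rw [Real.log_mul (by positivity) hlog.ne']

/-- `primeRecip N` is asymptotic to `log log N`. -/
lemma eventually_abs_primeRecip_sub_le {δ : ℝ} (hδ : 0 < δ) :
    ∀ᶠ N : ℕ in atTop,
      |primeRecip N - Real.log (Real.log N)| ≤ δ * Real.log (Real.log N) := by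
  obtain ⟨C, hC⟩ := exists_loglog_le_primeRecip
  obtain ⟨η, hη, hηδ⟩ : ∃ η : ℝ, 0 < η ∧ Real.exp η ≤ 1 + δ / 2 :=
    ⟨Real.log (1 + δ / 2), Real.log_pos (by linarith),
      (Real.exp_log (by linarith)).le⟩
  have hL := tendsto_loglog_nat
  filter_upwards [eventually_primeRecip_le hη, eventually_ge_atTop 2,
    hL.eventually_ge_atTop (C / δ),
    hL.eventually_ge_atTop (Real.exp η * Real.log (2 / η) / (δ / 2)),
    hL.eventually_ge_atTop 0] with N h1 hN h2 h3 h4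
  rw [div_le_iff₀ hδ] at h2
  rw [div_le_iff₀ (by positivity)] at h3
  have hN2 : (2 : ℝ) ≤ N := by exact_mod_cast hN
  have h5 : Real.log (Real.log N) ≤ Real.log (Real.log (N + 1)) :=
    Real.log_le_log (Real.log_pos (by linarith)) (Real.log_le_log (by linarith) (by linarith))
  have h6 := hC N (by omega)
  rw [abs_le]
  constructor
  · linarith
  · nlinarith [mul_le_mul_of_nonneg_right hηδ h4]

/-! ### Turán's inequality -/

lemma card_Icc_dvd (N d : ℕ) : ((Finset.Icc 1 N).filter (d ∣ ·)).card = N / d := by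
  rw [← Nat.card_multiples' N d]
  congr 1
  ext k
  simp only [Finset.mem_filter, Finset.mem_Icc, Finset.mem_range, Nat.succ_eq_add_one]
  constructor
  · rintro ⟨⟨h, h'⟩, h''⟩; exact ⟨by omega, by omega, h''⟩
  · rintro ⟨h, h', h''⟩; exact ⟨⟨by omega, by omega⟩, h''⟩

lemma card_primeFactors_eq_sum {N n : ℕ} (hn : n ∈ Finset.Icc 1 N) :
    (n.primeFactors.card : ℝ) = ∑ p ∈ (N + 1).primesBelow, if p ∣ n then (1 : ℝ) else 0 := by
  rw [Finset.sum_boole]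
  congr 2
  rw [Finset.mem_Icc] at hn
  ext p
  simp only [Nat.mem_primeFactors, Finset.mem_filter, Nat.mem_primesBelow]
  constructor
  · rintro ⟨h1, h2, h3⟩
    exact ⟨⟨by have := Nat.le_of_dvd (by omega) h2; omega, h1⟩, h2⟩
  · rintro ⟨⟨_, h1⟩, h2⟩
    exact ⟨h1, h2, by omega⟩

/-- First moment of `ω`: each of the at most `N` primes `p ≤ N` loses at most `1` in replacing
`⌊N / p⌋` by `N / p`. -/
lemma sum_omega_ge (N : ℕ) :
    N * primeRecip N - N ≤ ∑ n ∈ Finset.Icc 1 N, (n.primeFactors.card : ℝ) := by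
  rw [Finset.sum_congr rfl fun n hn => card_primeFactors_eq_sum hn, Finset.sum_comm]
  simp only [Finset.sum_boole, card_Icc_dvd]
  have hcard : ((N + 1).primesBelow.card : ℝ) ≤ N := by
    have : (N + 1).primesBelow ⊆ Finset.Icc 1 N := fun p hp => by
      have h1 := (Nat.prime_of_mem_primesBelow hp).pos
      have h2 := Nat.lt_of_mem_primesBelow hp
      rw [Finset.mem_Icc]; omega
    have := Finset.card_le_card this
    rw [Nat.card_Icc] at this
    exact_mod_cast this
  have hterm : ∀ p ∈ (N + 1).primesBelow, (N : ℝ) * (p : ℝ)⁻¹ - 1 ≤ ((N / p : ℕ) : ℝ) := by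
    intro p _
    have h := Nat.lt_floor_add_one ((N : ℝ) / p)
    rw [Nat.floor_div_natCast, Nat.floor_natCast] at h
    rw [← div_eq_mul_inv]; linarith
  have := Finset.sum_le_sum hterm
  rw [Finset.sum_sub_distrib, ← Finset.mul_sum, Finset.sum_const, nsmul_eq_mul, mul_one] at this
  unfold primeRecip
  linarith

/-- Second moment of `ω`: the pairs of distinct primes contribute at most `N * primeRecip N ^ 2`
and the diagonal at most `N * primeRecip N`. -/
lemma sum_omega_sq_le (N : ℕ) :
    ∑ n ∈ Finset.Icc 1 N, (n.primeFactors.card : ℝ) ^ 2 ≤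
      N * primeRecip N ^ 2 + N * primeRecip N := by
  have e : ∑ n ∈ Finset.Icc 1 N, (n.primeFactors.card : ℝ) ^ 2 =
      ∑ p ∈ (N + 1).primesBelow, ∑ q ∈ (N + 1).primesBelow, ∑ n ∈ Finset.Icc 1 N,
        (if p ∣ n then (1 : ℝ) else 0) * (if q ∣ n then (1 : ℝ) else 0) := by
    rw [Finset.sum_congr rfl fun n hn => by
      rw [card_primeFactors_eq_sum hn, sq, Finset.sum_mul_sum], Finset.sum_comm]
    exact Finset.sum_congr rfl fun p _ => Finset.sum_comm
  have hpq : ∀ p ∈ (N + 1).primesBelow, ∀ q ∈ (N + 1).primesBelow,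
      ∑ n ∈ Finset.Icc 1 N, (if p ∣ n then (1 : ℝ) else 0) * (if q ∣ n then (1 : ℝ) else 0) ≤
        N * ((p : ℝ)⁻¹ * (q : ℝ)⁻¹) + if p = q then (N : ℝ) * (p : ℝ)⁻¹ else 0 := by
    intro p hp q hq
    have hp' := Nat.prime_of_mem_primesBelow hp
    have hq' := Nat.prime_of_mem_primesBelow hq
    by_cases h : p = q
    · subst h
      have : ∀ n ∈ Finset.Icc 1 N,
          (if p ∣ n then (1 : ℝ) else 0) * (if p ∣ n then (1 : ℝ) else 0) =
            if p ∣ n then (1 : ℝ) else 0 := fun n _ => by split_ifs <;> simp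
      rw [Finset.sum_congr rfl this, Finset.sum_boole, card_Icc_dvd, if_pos rfl]
      have h1 : ((N / p : ℕ) : ℝ) ≤ (N : ℝ) / p := Nat.cast_div_le
      have h2 : 0 ≤ (N : ℝ) * ((p : ℝ)⁻¹ * (p : ℝ)⁻¹) := by positivity
      rw [div_eq_mul_inv] at h1
      linarith
    · have : ∀ n ∈ Finset.Icc 1 N,
          (if p ∣ n then (1 : ℝ) else 0) * (if q ∣ n then (1 : ℝ) else 0) =
            if p * q ∣ n then (1 : ℝ) else 0 := fun n _ => by
        have hc : p * q ∣ n ↔ p ∣ n ∧ q ∣ n :=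
          ⟨fun h => ⟨dvd_of_mul_right_dvd h, dvd_of_mul_left_dvd h⟩,
            fun ⟨h1, h2⟩ => Nat.Coprime.mul_dvd_of_dvd_of_dvd
              ((Nat.coprime_primes hp' hq').2 h) h1 h2⟩
        simp only [hc]
        split_ifs <;> simp_all
      rw [Finset.sum_congr rfl this, Finset.sum_boole, card_Icc_dvd, if_neg h, add_zero]
      have h1 : ((N / (p * q) : ℕ) : ℝ) ≤ (N : ℝ) / ((p * q : ℕ) : ℝ) := Nat.cast_div_le
      rw [← mul_inv, ← div_eq_mul_inv]
      exact_mod_cast h1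
  rw [e]
  refine (Finset.sum_le_sum fun p hp => Finset.sum_le_sum fun q hq => hpq p hp q hq).trans ?_
  refine le_of_eq ?_
  simp only [Finset.sum_add_distrib, Finset.sum_ite_eq, ← Finset.mul_sum]
  rw [← Finset.sum_mul, Finset.sum_congr rfl fun p hp => if_pos hp, ← Finset.mul_sum]
  unfold primeRecip
  ring

lemma primeRecip_nonneg (N : ℕ) : 0 ≤ primeRecip N :=
  Finset.sum_nonneg fun _ _ => by positivity

/-- Turán's inequality, with `primeRecip N` as the mean. -/
lemma turan (N : ℕ) :
    ∑ n ∈ Finset.Icc 1 N, ((n.primeFactors.card : ℝ) - primeRecip N) ^ 2 ≤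
      3 * N * primeRecip N := by
  have h1 := sum_omega_ge N
  have h2 := sum_omega_sq_le N
  have h3 := primeRecip_nonneg N
  have e : ∑ n ∈ Finset.Icc 1 N, ((n.primeFactors.card : ℝ) - primeRecip N) ^ 2 =
      ∑ n ∈ Finset.Icc 1 N, (n.primeFactors.card : ℝ) ^ 2 -
        2 * primeRecip N * ∑ n ∈ Finset.Icc 1 N, (n.primeFactors.card : ℝ) +
        N * primeRecip N ^ 2 := by
    rw [Finset.mul_sum, ← Finset.sum_sub_distrib]
    have : (N : ℝ) * primeRecip N ^ 2 = ∑ n ∈ Finset.Icc 1 N, primeRecip N ^ 2 := by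
      simp
    rw [this, ← Finset.sum_add_distrib]
    exact Finset.sum_congr rfl fun n _ => by ring
  rw [e]
  nlinarith [mul_le_mul_of_nonneg_left h1 h3]

/-! ### Normal order -/

/-- Chebyshev's inequality applied to `turan`. -/
lemma card_deviation_le (N : ℕ) {T : ℝ} (hT : 0 < T) :
    (((Finset.Icc 1 N).filter fun n : ℕ =>
      T ≤ |(n.primeFactors.card : ℝ) - primeRecip N|).card : ℝ) ≤
      3 * N * primeRecip N / T ^ 2 := by
  rw [le_div_iff₀ (by positivity)]
  refine le_trans ?_ (turan N)
  rw [← nsmul_eq_mul, ← Finset.sum_const]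
  refine (Finset.sum_le_sum fun n hn => ?_).trans
    (Finset.sum_le_sum_of_subset_of_nonneg (Finset.filter_subset _ _)
      fun n _ _ => sq_nonneg _)
  rw [← sq_abs (_ - _)]
  exact pow_le_pow_left₀ hT.le (Finset.mem_filter.1 hn).2 2

open scoped Classical in
/-- Explicit decaying bound for the exceptional proportion: `1 / √N` accounts for `n ≤ √N`, and the
other term for `√N < n ≤ N`, where a deviation `ε log log n` from `log log n` forces a deviation
`(ε / 2) log log N` from `primeRecip N`. -/
lemma eventually_card_le {ε : ℝ} (hε : 0 < ε) :
    ∀ᶠ N : ℕ in atTop,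
      (((Finset.Icc 3 N).filter fun n : ℕ =>
                ε * Real.log (Real.log n) ≤
                  |(n.primeFactors.card : ℝ) - Real.log (Real.log n)|).card : ℝ) / N ≤
        1 / Real.sqrt N + 24 / ε ^ 2 / Real.log (Real.log N) := by
  have hL := tendsto_loglog_nat
  filter_upwards [eventually_abs_primeRecip_sub_le (δ := min 1 (ε / 4)) (by positivity),
    eventually_ge_atTop 9, hL.eventually_gt_atTop 0,
    hL.eventually_ge_atTop ((ε * Real.log 2 + Real.log 2) / (ε / 4))] with N hP hN hL0 hL1
  rw [div_le_iff₀ (by positivity)] at hL1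
  set L := Real.log (Real.log N) with hLdef
  have hN0 : (0 : ℝ) < N := by exact_mod_cast (by omega : 0 < N)
  have hP1 : |primeRecip N - L| ≤ ε / 4 * L :=
    hP.trans (mul_le_mul_of_nonneg_right (min_le_right _ _) hL0.le)
  have hP2 : primeRecip N ≤ 2 * L := by
    have := (le_abs_self _).trans
      (hP.trans (mul_le_mul_of_nonneg_right (min_le_left _ _) hL0.le))
    linarith
  have hT : 0 < ε / 2 * L := by positivity
  have hsub : ((Finset.Icc 3 N).filter fun n : ℕ =>
      ε * Real.log (Real.log n) ≤ |(n.primeFactors.card : ℝ) - Real.log (Real.log n)|) ⊆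
      Finset.Icc 1 (Nat.sqrt N) ∪ ((Finset.Icc 1 N).filter fun n : ℕ =>
        ε / 2 * L ≤ |(n.primeFactors.card : ℝ) - primeRecip N|) := by
    intro n hn
    rw [Finset.mem_filter, Finset.mem_Icc] at hn
    obtain ⟨⟨hn3, hnN⟩, hdev⟩ := hn
    rw [Finset.mem_union]
    by_cases hs : n ≤ Nat.sqrt N
    · exact Or.inl (Finset.mem_Icc.2 ⟨by omega, hs⟩)
    right
    rw [Finset.mem_filter, Finset.mem_Icc]
    refine ⟨⟨by omega, hnN⟩, ?_⟩
    have hn0 : (3 : ℝ) ≤ n := by exact_mod_cast hn3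
    have hnN' : (n : ℝ) ≤ N := by exact_mod_cast hnN
    have hlogn : 0 < Real.log n := Real.log_pos (by linarith)
    have hNsq : (N : ℝ) ≤ (n : ℝ) ^ 2 := by
      have := Nat.sqrt_lt'.1 (not_le.1 hs)
      exact_mod_cast this.le
    have hup : Real.log (Real.log n) ≤ L :=
      Real.log_le_log hlogn (Real.log_le_log (by linarith) hnN')
    have hlow : L ≤ Real.log 2 + Real.log (Real.log n) := by
      rw [← Real.log_mul two_ne_zero hlogn.ne']
      refine Real.log_le_log (Real.log_pos (by linarith)) ?_
      calc Real.log N ≤ Real.log ((n : ℝ) ^ 2) := Real.log_le_log hN0 hNsq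
        _ = 2 * Real.log n := by rw [Real.log_pow]; norm_num
    have htri : |(n.primeFactors.card : ℝ) - Real.log (Real.log n)| ≤
        |(n.primeFactors.card : ℝ) - primeRecip N| + |primeRecip N - L| +
          |L - Real.log (Real.log n)| := by
      have h1 := abs_sub_le (n.primeFactors.card : ℝ) (primeRecip N) (Real.log (Real.log n))
      have h2 := abs_sub_le (primeRecip N) L (Real.log (Real.log n))
      linarith
    rw [abs_of_nonneg (by linarith : 0 ≤ L - Real.log (Real.log n))] at htri
    have hεl : ε * L ≤ ε * (Real.log 2 + Real.log (Real.log n)) :=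
      mul_le_mul_of_nonneg_left hlow hε.le
    linarith
  have hcard := (Finset.card_le_card hsub).trans (Finset.card_union_le _ _)
  rw [Nat.card_Icc, Nat.add_sub_cancel] at hcard
  have hcard' : (((Finset.Icc 3 N).filter fun n : ℕ =>
      ε * Real.log (Real.log n) ≤
        |(n.primeFactors.card : ℝ) - Real.log (Real.log n)|).card : ℝ) ≤
      Real.sqrt N + 3 * N * primeRecip N / (ε / 2 * L) ^ 2 := by
    refine le_trans (Nat.cast_le.2 hcard) ?_
    push_cast
    exact add_le_add Real.nat_sqrt_le_real_sqrt (card_deviation_le N hT)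
  calc _ ≤ (Real.sqrt N + 3 * N * (2 * L) / (ε / 2 * L) ^ 2) / N := by
        refine div_le_div_of_nonneg_right (hcard'.trans ?_) hN0.le
        gcongr
    _ = Real.sqrt N / N + 24 / ε ^ 2 / L := by
        field_simp
        ring
    _ = _ := by rw [Real.sqrt_div_self']

open scoped Classical in
/-- The Hardy–Ramanujan theorem: for every `ε > 0`, the proportion of integers
`n ∈ [3, N]` with `|ω(n) − log log n| ≥ ε · log log n` tends to `0` as `N → ∞`.
Here `ω(n) = n.primeFactors.card`. -/
theorem hardy_ramanujan :
    ∀ ε : ℝ, 0 < ε →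
      Tendsto
        (fun N : ℕ =>
          (((Finset.Icc 3 N).filter fun n : ℕ =>
                ε * Real.log (Real.log n) ≤
                  |(n.primeFactors.card : ℝ) - Real.log (Real.log n)|).card : ℝ) / N)
        atTop (nhds 0) := by
  intro ε hε
  refine tendsto_of_tendsto_of_tendsto_of_le_of_le' tendsto_const_nhds ?_
    (Eventually.of_forall fun N => by positivity) (eventually_card_le hε)
  have h1 : Tendsto (fun N : ℕ => 1 / Real.sqrt N) atTop (nhds 0) :=
    (Real.tendsto_sqrt_atTop.comp tendsto_natCast_atTop_atTop).const_div_atTop 1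
  simpa using h1.add (tendsto_loglog_nat.const_div_atTop (24 / ε ^ 2))
end

section
/- The Erdős–Kac theorem: for every real number a, the proportion (1/N)·#{n : 1 ≤ n ≤ N and ω(n) − log log N ≤ a·√(log log N)} tends, as N → ∞, to the standard Gaussian distribution function Φ(a) = (1/√(2π))·∫_{−∞}^{a} e^{−t²/2} dt. That is, for X uniform on [1,N], the normalized quantity (ω(X) − log log N)/√(log log N) converges in distribution to the standard normal distribution N(0,1). -/
/-!
Write `L = log log N`, `K = L^(1/4)`, `y = exp (log N / K)`, and let `P` be the set of primes up to
`y`, with `A = ∑_{p ∈ P} 1/p`. The proof computes the limit of the characteristic function of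
`(ω(n) - L) / √L` for `n` uniform on `[1, N]` and concludes with Lévy's continuity theorem. With
`θ = t / √L`, four comparisons lead from this characteristic function to `exp (-t² / 2)`.

* *Truncation.* An integer `n ≤ N` has at most `log N / log y = K = o(√L)` prime factors exceeding
  `y`, and Mertens' second theorem (`exists_abs_sum_prime_inv_sub_loglog_le`) gives
  `A = L + O(1 + log K)`. Hence `ω(n) - L` may be replaced by `S(n) = ω_P(n) - A`, where `ω_P`
  counts the prime divisors lying in `P` (`exists_truncation`).
* *Independent model.* Let `D = ∏_{p ∈ P} p`. For `n` uniform on `[1, D]` the events `p ∣ n` are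
  exactly independent with probabilities `1/p`. The `j`-th moment of `S` on `[1, N]` differs from
  the one on `[1, D]` by at most `(2 |P|)^j / N` (`abs_avg_pow_sub_le`), which tends to `0` since
  `|P| ≤ y = N^{o(1)}`. Taylor's formula for `exp (iθS)`, with a remainder controlled by the
  exponential moments of `S` on `[1, D]`, turns this into closeness of characteristic functions
  (`norm_avg_exp_sub_le`).
* *Poisson approximation.* On `[1, D]` the characteristic function is the product of the factors
  `1 + (exp (iθ) - 1) / p`, up to centring, and replacing each factor by
  `exp ((exp (iθ) - 1) / p)` costs `O(θ² ∑ 1/p²)` in total (`norm_avg_prod_sub_le`).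
* *Gaussian limit.* As `θ → 0` and `θ² A → t²`, the centred Poisson characteristic function
  `exp ((exp (iθ) - 1 - iθ) A)` tends to `exp (-t² / 2)` (`tendsto_exp_poisson`).
-/

open Filter MeasureTheory

/-! ### Mertens' theorems -/

/-- The upper half of Mertens' first theorem: `∑_{p ≤ n} ⌊n/p⌋ log p ≤ log n!`, and the error made by
removing the integer parts is at most Chebyshev's `θ(n) ≤ n log 4`. -/
theorem sum_log_div_prime_le (n : ℕ) (hn : 1 ≤ n) :
    ∑ p ∈ Nat.primesLE n, Real.log p / p ≤ Real.log n + Real.log 4 := by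
  have hn0 : (0 : ℝ) < n := by exact_mod_cast hn
  have hfac : Real.log (n.factorial : ℕ) =
      ∑ p ∈ Nat.primesLE n, (n.factorial.factorization p : ℝ) * Real.log p := by
    rw [Real.log_nat_eq_sum_factorization]
    refine Finsupp.sum_of_support_subset _ ?_ _ (by simp)
    intro p hp
    rw [Nat.support_factorization, Nat.mem_primeFactors] at hp
    exact Nat.mem_primesLE.2 ⟨(hp.1.dvd_factorial).1 hp.2.1, hp.1⟩
  have h1 : ∑ p ∈ Nat.primesLE n, (n : ℝ) * (Real.log p / p) ≤
      ∑ p ∈ Nat.primesLE n, ((n.factorial.factorization p : ℝ) * Real.log p + Real.log p) := by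
    refine Finset.sum_le_sum fun p hp => ?_
    obtain ⟨hpn, hpp⟩ := Nat.mem_primesLE.1 hp
    have hp0 : (0 : ℝ) < p := by exact_mod_cast hpp.pos
    have hlog : 0 ≤ Real.log p := Real.log_natCast_nonneg p
    have h2 : n / p ≤ n.factorial.factorization p := by
      rw [Nat.factorization_factorial hpp (b := Nat.log p n + 2) (by lia)]
      have := Finset.single_le_sum (f := fun i => n / p ^ i) (s := Finset.Ico 1 (Nat.log p n + 2))
        (fun i _ => Nat.zero_le _) (a := 1) (by simp)
      simpa using this
    have h3 : (n : ℝ) / p ≤ n.factorial.factorization p + 1 := by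
      have h4 : (n : ℝ) / p < (n / p : ℕ) + 1 := by
        rw [div_lt_iff₀ hp0]
        have := Nat.lt_div_mul_add (a := n) hpp.pos
        have h5 : n < (n / p + 1) * p := by lia
        exact_mod_cast h5
      have h6 : ((n / p : ℕ) : ℝ) ≤ n.factorial.factorization p := by exact_mod_cast h2
      linarith
    calc (n : ℝ) * (Real.log p / p) = (n / p) * Real.log p := by ring
      _ ≤ (n.factorial.factorization p + 1) * Real.log p := by gcongr
      _ = _ := by ring
  rw [Finset.sum_add_distrib, ← hfac, ← Finset.mul_sum, ← Chebyshev.theta_eq_sum_primesLE_log] at h1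
  have h2 := Chebyshev.theta_le_log4_mul_x hn0.le
  have h3 : Real.log (n.factorial : ℕ) ≤ n * Real.log n := by
    rw [← Real.log_pow]
    refine Real.log_le_log (by exact_mod_cast n.factorial_pos) ?_
    exact_mod_cast Nat.factorial_le_pow n
  have h4 : (n : ℝ) * ∑ p ∈ Nat.primesLE n, Real.log p / p ≤ n * (Real.log n + Real.log 4) := by
    linarith
  exact le_of_mul_le_mul_left h4 hn0

/-- The lower half of Mertens' first theorem: the exponent of `p` in `n!` is at most `n / (p - 1)`, and
`∑ log p / (p (p - 1))` converges. -/
theorem exists_le_sum_log_div_prime : ∃ C : ℝ, ∀ n : ℕ, 1 ≤ n →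
    Real.log n - C ≤ ∑ p ∈ Nat.primesLE n, Real.log p / p := by
  have hsum : Summable fun m : ℕ => 4 * (1 / (m : ℝ) ^ (3 / 2 : ℝ)) :=
    (Real.summable_one_div_nat_rpow.2 (by norm_num)).mul_left 4
  refine ⟨1 + ∑' m : ℕ, 4 * (1 / (m : ℝ) ^ (3 / 2 : ℝ)), fun n hn => ?_⟩
  have hn0 : (0 : ℝ) < n := by exact_mod_cast hn
  have hfac : Real.log (n.factorial : ℕ) =
      ∑ p ∈ Nat.primesLE n, (n.factorial.factorization p : ℝ) * Real.log p := by
    rw [Real.log_nat_eq_sum_factorization]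
    refine Finsupp.sum_of_support_subset _ ?_ _ (by simp)
    intro p hp
    rw [Nat.support_factorization, Nat.mem_primeFactors] at hp
    exact Nat.mem_primesLE.2 ⟨(hp.1.dvd_factorial).1 hp.2.1, hp.1⟩
  have h1 : ∑ p ∈ Nat.primesLE n, (n.factorial.factorization p : ℝ) * Real.log p ≤
      ∑ p ∈ Nat.primesLE n, (n : ℝ) * (Real.log p / p + 4 * (1 / (p : ℝ) ^ (3 / 2 : ℝ))) := by
    refine Finset.sum_le_sum fun p hp => ?_
    obtain ⟨hpn, hpp⟩ := Nat.mem_primesLE.1 hp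
    have hp2 : (2 : ℝ) ≤ p := by exact_mod_cast hpp.two_le
    have hp0 : (0 : ℝ) < p := by linarith
    have hp1 : (0 : ℝ) < p - 1 := by linarith
    have hlog : 0 ≤ Real.log p := Real.log_natCast_nonneg p
    have h2 : (n.factorial.factorization p : ℝ) ≤ n / (p - 1) := by
      have h3 : (n.factorial.factorization p : ℝ) ≤ (n / (p - 1) : ℕ) := by
        exact_mod_cast Nat.factorization_factorial_le_div_pred hpp n
      refine h3.trans (Nat.cast_div_le.trans ?_)
      rw [Nat.cast_sub hpp.one_le, Nat.cast_one]
    have h4 : Real.log p ≤ 2 * (p : ℝ) ^ (1 / 2 : ℝ) := by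
      have := Real.log_le_rpow_div hp0.le (show (0 : ℝ) < 1 / 2 by norm_num)
      linarith
    have h5 : (p : ℝ) ^ (3 / 2 : ℝ) * (p : ℝ) ^ (1 / 2 : ℝ) = p ^ 2 := by
      rw [← Real.rpow_add hp0]; norm_num
    have h6 : (0 : ℝ) < (p : ℝ) ^ (3 / 2 : ℝ) := by positivity
    have h7 : Real.log p / (p - 1) ≤ Real.log p / p + 4 * (1 / (p : ℝ) ^ (3 / 2 : ℝ)) := by
      have h8 : Real.log p / (p - 1) - Real.log p / p = Real.log p / (p * (p - 1)) := by
        field_simp; ring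
      have h9 : Real.log p / (p * (p - 1)) ≤ 4 * (1 / (p : ℝ) ^ (3 / 2 : ℝ)) := by
        rw [mul_one_div, div_le_div_iff₀ (by positivity) h6]
        calc Real.log p * (p : ℝ) ^ (3 / 2 : ℝ)
            ≤ 2 * (p : ℝ) ^ (1 / 2 : ℝ) * (p : ℝ) ^ (3 / 2 : ℝ) := by gcongr
          _ = 2 * p ^ 2 := by rw [← h5]; ring
          _ ≤ 4 * (p * (p - 1)) := by nlinarith
      linarith
    calc (n.factorial.factorization p : ℝ) * Real.log p ≤ n / (p - 1) * Real.log p := by gcongr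
      _ = n * (Real.log p / (p - 1)) := by ring
      _ ≤ _ := by gcongr
  rw [← hfac, ← Finset.mul_sum, Finset.sum_add_distrib] at h1
  have h2 : n * Real.log n - n ≤ Real.log (n.factorial : ℕ) := by
    have h3 := Stirling.le_log_factorial_stirling (n := n) (by lia)
    have h4 : 0 ≤ Real.log n := Real.log_natCast_nonneg n
    have h5 : 0 ≤ Real.log (2 * Real.pi) := Real.log_nonneg (by linarith [Real.pi_gt_three])
    linarith
  have h3 := hsum.sum_le_tsum (Nat.primesLE n) (fun i _ => by positivity)
  have h4 : (n : ℝ) * (Real.log n - 1) ≤ n * (∑ p ∈ Nat.primesLE n, Real.log p / p +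
      ∑ p ∈ Nat.primesLE n, 4 * (1 / (p : ℝ) ^ (3 / 2 : ℝ))) := by linarith
  have := le_of_mul_le_mul_left h4 hn0
  linarith

/-- Summation by parts for a sequence with bounded partial sums against a decreasing weight. -/
theorem abel_bound {a g : ℕ → ℝ} {C : ℝ} (hG : ∀ n, |∑ i ∈ Finset.range n, a i| ≤ C)
    (hg : ∀ n, 2 ≤ n → g (n + 1) ≤ g n) (n : ℕ) (hn : 2 ≤ n) :
    |∑ i ∈ Finset.Ico 2 n, a i * g i - (∑ i ∈ Finset.range n, a i) * g n| ≤
      C * |g 2| + C * (g 2 - g n) := by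
  induction n, hn using Nat.le_induction with
  | base =>
    simp only [Finset.Ico_self, Finset.sum_empty, zero_sub, abs_neg, abs_mul, sub_self, mul_zero,
      add_zero]
    gcongr
    exact hG 2
  | succ n hn ih =>
    have h1 : ∑ i ∈ Finset.Ico 2 (n + 1), a i * g i -
        (∑ i ∈ Finset.range (n + 1), a i) * g (n + 1) =
        (∑ i ∈ Finset.Ico 2 n, a i * g i - (∑ i ∈ Finset.range n, a i) * g n) +
        (∑ i ∈ Finset.range (n + 1), a i) * (g n - g (n + 1)) := by
      rw [Finset.sum_Ico_succ_top hn, Finset.sum_range_succ]; ring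
    rw [h1]
    refine (abs_add_le _ _).trans ?_
    rw [abs_mul, abs_of_nonneg (sub_nonneg.2 (hg n hn))]
    have := mul_le_mul_of_nonneg_right (hG (n + 1)) (sub_nonneg.2 (hg n hn))
    linarith

/-- The increments of `log log` are sandwiched between consecutive values of `1 / (n log n)`. -/
theorem loglog_step {n : ℕ} (hn : 2 ≤ n) :
    Real.log (Real.log (n + 1 : ℕ)) - Real.log (Real.log n) ≤ 1 / (n * Real.log n) ∧
    1 / ((n + 1 : ℕ) * Real.log (n + 1 : ℕ)) ≤
      Real.log (Real.log (n + 1 : ℕ)) - Real.log (Real.log n) := by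
  have key : ∀ u v : ℝ, 0 < u → 0 < v → Real.log u - Real.log v ≤ (u - v) / v ∧
      (u - v) / u ≤ Real.log u - Real.log v := by
    intro u v hu hv
    rw [← Real.log_div hu.ne' hv.ne']
    have h1 := Real.log_le_sub_one_of_pos (div_pos hu hv)
    have h2 := Real.one_sub_inv_le_log_of_pos (div_pos hu hv)
    constructor
    · rwa [sub_div, div_self hv.ne']
    · rwa [sub_div, div_self hu.ne', ← inv_div]
  have hn2 : (2 : ℝ) ≤ n := by exact_mod_cast hn
  have hl : 0 < Real.log n := Real.log_pos (by linarith)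
  have hl' : 0 < Real.log (n + 1 : ℕ) := Real.log_pos (by push_cast; linarith)
  obtain ⟨h1, -⟩ := key _ _ hl' hl
  obtain ⟨-, h2⟩ := key _ _ hl' hl
  obtain ⟨h3, h4⟩ := key (n + 1 : ℕ) n (by positivity) (by positivity)
  have e : ((n + 1 : ℕ) : ℝ) - n = 1 := by push_cast; ring
  rw [e] at h3 h4
  constructor
  · refine h1.trans ?_
    rw [← div_div]
    gcongr
  · refine le_trans ?_ h2
    rw [← div_div]
    gcongr

/-- Mertens' second theorem, with an unspecified bounded error: partial summation of Mertens' first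
theorem against `1 / log`. -/
theorem exists_abs_sum_prime_inv_sub_loglog_le : ∃ C : ℝ, ∀ n : ℕ, 2 ≤ n →
    |∑ p ∈ Nat.primesLE n, 1 / (p : ℝ) - Real.log (Real.log n)| ≤ C := by
  obtain ⟨C₁, hC₁⟩ := exists_le_sum_log_div_prime
  -- The partial sums of `a` are bounded by Mertens' first theorem and the asymptotics of the
  -- harmonic numbers, while `a i * g i` is `1/i` at primes minus `1 / (i log i)`.
  set a : ℕ → ℝ := fun i => (if i.Prime then Real.log i / i else 0) - 1 / i with ha
  set g : ℕ → ℝ := fun i => 1 / Real.log i with hg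
  have hsplit : ∀ (n : ℕ) (f : ℕ → ℝ), ∑ i ∈ Finset.range (n + 1), (if i.Prime then f i else 0) =
      ∑ p ∈ Nat.primesLE n, f p := by
    intro n f
    rw [← Finset.sum_filter]
    refine Finset.sum_congr ?_ fun _ _ => rfl
    ext p
    simp [Nat.mem_primesLE]
  have hharm : ∀ n : ℕ, ∑ i ∈ Finset.range (n + 1), 1 / (i : ℝ) = harmonic n := by
    intro n
    rw [Finset.sum_range_succ']
    simp [harmonic]
  have hG : ∃ C, ∀ n, |∑ i ∈ Finset.range n, a i| ≤ C := by
    refine ⟨|C₁| + 1 + Real.log 4, fun n => ?_⟩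
    have hl4 : 0 ≤ Real.log 4 := Real.log_nonneg (by norm_num)
    have h0 := abs_nonneg C₁
    rcases n with _ | n
    · simp; positivity
    rcases Nat.eq_zero_or_pos n with rfl | hn
    · simp [ha]; positivity
    rw [ha, Finset.sum_sub_distrib, hsplit, hharm]
    have h1 := sum_log_div_prime_le n hn
    have h2 := hC₁ n hn
    have h3 := harmonic_le_one_add_log n
    have h4 := log_add_one_le_harmonic n
    have h5 : Real.log n ≤ Real.log (n + 1 : ℕ) :=
      Real.log_le_log (by exact_mod_cast hn) (by push_cast; linarith)
    have h6 := le_abs_self C₁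
    rw [abs_le]
    constructor <;> linarith
  obtain ⟨C, hC⟩ := hG
  have hC0 : 0 ≤ C := (abs_nonneg _).trans (hC 0)
  have hlog2 : 0 < Real.log 2 := Real.log_pos (by norm_num)
  have hganti : ∀ m n, 2 ≤ m → m ≤ n → g n ≤ g m := by
    intro m n hm hmn
    have : (2 : ℝ) ≤ m := by exact_mod_cast hm
    have h1 : 0 < Real.log m := Real.log_pos (by linarith)
    exact one_div_le_one_div_of_le h1 (Real.log_le_log (by linarith) (by exact_mod_cast hmn))
  have hT : ∀ n, 2 ≤ n → |∑ i ∈ Finset.Ico 2 n, a i * g i| ≤ 3 * C * g 2 := by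
    intro n hn
    have h1 := abel_bound hC (fun n hn => hganti n (n + 1) hn n.le_succ) n hn
    have hgn : 0 ≤ g n := by
      simp only [hg]
      exact div_nonneg zero_le_one (Real.log_natCast_nonneg n)
    have hg2 : 0 ≤ g 2 := hgn.trans (hganti 2 n le_rfl hn)
    rw [abs_of_nonneg hg2] at h1
    have h2 : |(∑ i ∈ Finset.range n, a i) * g n| ≤ C * g n := by
      rw [abs_mul, abs_of_nonneg hgn]
      gcongr
      exact hC n
    have h3 := mul_nonneg hC0 hg2
    rw [abs_le] at *
    constructor <;> nlinarith
  have hU1 : ∀ n : ℕ, 2 ≤ n → Real.log (Real.log n) - Real.log (Real.log 2) ≤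
      ∑ i ∈ Finset.Ico 2 n, 1 / (i * Real.log i : ℝ) := by
    intro n hn
    induction n, hn using Nat.le_induction with
    | base => simp
    | succ n hn ih =>
      rw [Finset.sum_Ico_succ_top hn]
      linarith [(loglog_step hn).1]
  have hU2 : ∀ n : ℕ, 2 ≤ n → ∑ i ∈ Finset.Ico 2 (n + 1), 1 / (i * Real.log i : ℝ) ≤
      Real.log (Real.log n) - Real.log (Real.log 2) + 1 / (2 * Real.log 2) := by
    intro n hn
    induction n, hn using Nat.le_induction with
    | base => simp
    | succ n hn ih =>
      rw [Finset.sum_Ico_succ_top (by lia)]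
      linarith [(loglog_step hn).2]
  refine ⟨3 * C * g 2 + |Real.log (Real.log 2)| + 1 / (2 * Real.log 2), fun n hn => ?_⟩
  have e : ∑ i ∈ Finset.Ico 2 (n + 1), a i * g i = ∑ p ∈ Nat.primesLE n, 1 / (p : ℝ) -
      ∑ i ∈ Finset.Ico 2 (n + 1), 1 / (i * Real.log i : ℝ) := by
    rw [← hsplit n (fun p => 1 / (p : ℝ)), Finset.range_eq_Ico,
      ← Finset.sum_Ico_consecutive _ (Nat.zero_le 2) (by lia : 2 ≤ n + 1)]
    have h0 : ∑ i ∈ Finset.Ico (0 : ℕ) 2, (if i.Prime then 1 / (i : ℝ) else 0) = 0 := by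
      refine Finset.sum_eq_zero fun i hi => ?_
      rw [if_neg]
      intro hp
      have := hp.two_le
      simp at hi
      lia
    rw [h0, zero_add, ← Finset.sum_sub_distrib]
    refine Finset.sum_congr rfl fun i hi => ?_
    have hi2 : (2 : ℝ) ≤ i := by exact_mod_cast (Finset.mem_Ico.1 hi).1
    have hl : 0 < Real.log i := Real.log_pos (by linarith)
    simp only [ha, hg]
    split_ifs <;> field_simp
    ring
  have h1 := hT (n + 1) (by lia)
  rw [e] at h1
  have h2 := hU1 (n + 1) (by lia)
  have h3 := hU2 n hn
  have hn2 : (2 : ℝ) ≤ n := by exact_mod_cast hn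
  have h4 : Real.log (Real.log n) ≤ Real.log (Real.log (n + 1 : ℕ)) := by
    refine Real.log_le_log (Real.log_pos (by linarith)) (Real.log_le_log (by linarith) ?_)
    push_cast; linarith
  have h5 := abs_le.1 (le_refl |Real.log (Real.log 2)|)
  have h6 : 0 < 1 / (2 * Real.log 2) := by positivity
  rw [abs_le] at h1 ⊢
  constructor <;> linarith [h1.1, h1.2, h5.1, h5.2]

/-! ### Averages over intervals of integers and the independent model -/

/-- The average of `f` over the integers `1, …, N`, with value `0` for `N = 0`. The values may lie in
any field, since both real and complex averages are needed. -/
noncomputable def avg {K : Type*} [Field K] (N : ℕ) (f : ℕ → K) : K :=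
  (∑ n ∈ Finset.Ioc 0 N, f n) / N

/-- The number of elements of `P` dividing `n`; for `P` a set of primes this is `ω(n)` restricted to
prime divisors in `P`. -/
def omegaOn (P : Finset ℕ) (n : ℕ) : ℕ := (P.filter (· ∣ n)).card

/-- The sum of the reciprocals of the elements of `P`, which is the mean of `omegaOn P` when the events
`p ∣ n` have probability `1/p`. -/
noncomputable def recip (P : Finset ℕ) : ℝ := ∑ p ∈ P, 1 / (p : ℝ)

/-- Expansion of `∏_{p ∈ P} (1 + (x - 1) 1_{p ∣ n})` over subsets of `P`. -/
theorem pow_omegaOn {K : Type*} [Field K] {P : Finset ℕ} (hP : ∀ p ∈ P, p.Prime) (x : K) (n : ℕ) :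
    x ^ omegaOn P n = ∑ T ∈ P.powerset, (x - 1) ^ T.card * (if (∏ p ∈ T, p) ∣ n then 1 else 0) := by
  have h1 : x ^ omegaOn P n = ∏ p ∈ P, (1 + if p ∣ n then x - 1 else 0) := by
    rw [omegaOn, ← Finset.prod_const, Finset.prod_filter]
    refine Finset.prod_congr rfl fun p _ => ?_
    split_ifs <;> ring
  rw [h1, Finset.prod_one_add]
  refine Finset.sum_congr rfl fun T hT => ?_
  have hTP := Finset.mem_powerset.1 hT
  by_cases h : (∏ p ∈ T, p) ∣ n
  · rw [if_pos h, mul_one, ← Finset.prod_const]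
    exact Finset.prod_congr rfl fun p hp => if_pos ((Finset.dvd_prod_of_mem _ hp).trans h)
  · rw [if_neg h, mul_zero]
    have : ∃ p ∈ T, ¬ p ∣ n := by
      by_contra! hall
      exact h (Finset.prod_primes_dvd n (fun p hp => (hP p (hTP hp)).prime) hall)
    obtain ⟨p, hp, hpn⟩ := this
    exact Finset.prod_eq_zero hp (if_neg hpn)

theorem sum_dvd {K : Type*} [Field K] (N d : ℕ) :
    ∑ n ∈ Finset.Ioc 0 N, (if d ∣ n then (1 : K) else 0) = (N / d : ℕ) := by
  rw [Finset.sum_boole, Nat.Ioc_filter_dvd_card_eq_div]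

/-- The probability generating function of `omegaOn P` on `[1, ∏ p]` factors, which expresses the exact
independence of the events `p ∣ n` over a full period. -/
theorem avg_pow_omegaOn {K : Type*} [Field K] [CharZero K] {P : Finset ℕ}
    (hP : ∀ p ∈ P, p.Prime) (x : K) :
    avg (∏ p ∈ P, p) (fun n => x ^ omegaOn P n) = ∏ p ∈ P, (1 + (x - 1) / p) := by
  have hD : ((∏ p ∈ P, p : ℕ) : K) ≠ 0 := by
    rw [Nat.cast_ne_zero]
    exact (Finset.prod_pos fun p hp => (hP p hp).pos).ne'
  rw [Finset.prod_one_add, avg, div_eq_iff hD, Finset.sum_mul]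
  simp_rw [pow_omegaOn hP]
  rw [Finset.sum_comm]
  refine Finset.sum_congr rfl fun T hT => ?_
  have hTP := Finset.mem_powerset.1 hT
  have hT0 : ((∏ p ∈ T, p : ℕ) : K) ≠ 0 := by
    rw [Nat.cast_ne_zero]
    exact (Finset.prod_pos fun p hp => (hP p (hTP hp)).pos).ne'
  rw [← Finset.mul_sum, sum_dvd, Nat.cast_div (Finset.prod_dvd_prod_of_subset _ _ _ hTP) hT0,
    Finset.prod_div_distrib, Finset.prod_const, ← Nat.cast_prod]
  field_simp

theorem avg_dvd_sub {N D d : ℕ} (hN : 0 < N) (hD : 0 < D) (hd : d ∣ D) :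
    |avg N (fun n => if d ∣ n then (1 : ℝ) else 0) -
      avg D (fun n => if d ∣ n then (1 : ℝ) else 0)| ≤ 1 / N := by
  have hd0 : 0 < d := Nat.pos_of_dvd_of_pos hd hD
  have hN' : (0 : ℝ) < N := by exact_mod_cast hN
  have hD' : (0 : ℝ) < D := by exact_mod_cast hD
  have hd' : (0 : ℝ) < d := by exact_mod_cast hd0
  rw [avg, avg, sum_dvd, sum_dvd, Nat.cast_div hd hd'.ne']
  have e : ((N / d : ℕ) : ℝ) / N - D / d / D = ((N / d : ℕ) - (N : ℝ) / d) / N := by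
    field_simp
  rw [e, abs_div, abs_of_pos hN']
  gcongr
  have h1 : ((N / d : ℕ) : ℝ) ≤ N / d := Nat.cast_div_le
  have h2 : (N : ℝ) / d < (N / d : ℕ) + 1 := by
    rw [div_lt_iff₀ hd']
    have := Nat.lt_div_mul_add (a := N) hd0
    have h5 : N < (N / d + 1) * d := by lia
    exact_mod_cast h5
  rw [abs_le]
  constructor <;> linarith

theorem omegaOn_sub_recip (P : Finset ℕ) (n : ℕ) :
    (omegaOn P n : ℝ) - recip P = ∑ p ∈ P, ((if p ∣ n then (1 : ℝ) else 0) - 1 / p) := by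
  rw [Finset.sum_sub_distrib, Finset.sum_boole, omegaOn, recip]

/-- Moments of `omegaOn P - recip P` restricted to the multiples of `d`, compared between `[1, N]` and
a multiple `D` of all elements of `P`. The restriction to multiples of `d` makes the induction on
`j` work: expanding one factor of the power replaces `d` by `lcm d p`. -/
theorem abs_avg_dvd_mul_pow_sub_le {P : Finset ℕ} {N D : ℕ} (hN : 0 < N) (hD : 0 < D)
    (hP : ∀ p ∈ P, p ∣ D) (j : ℕ) : ∀ d, d ∣ D →
    |avg N (fun n => (if d ∣ n then (1 : ℝ) else 0) * ((omegaOn P n : ℝ) - recip P) ^ j) -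
      avg D (fun n => (if d ∣ n then (1 : ℝ) else 0) * ((omegaOn P n : ℝ) - recip P) ^ j)| ≤
      (2 * P.card : ℝ) ^ j / N := by
  induction j with
  | zero =>
    intro d hd
    simpa using avg_dvd_sub hN hD hd
  | succ j ih =>
    intro d hd
    have expand : ∀ M : ℕ,
        avg M (fun n => (if d ∣ n then (1 : ℝ) else 0) * ((omegaOn P n : ℝ) - recip P) ^ (j + 1)) =
        ∑ p ∈ P, (avg M (fun n => (if d.lcm p ∣ n then (1 : ℝ) else 0) *
            ((omegaOn P n : ℝ) - recip P) ^ j) -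
          1 / p * avg M (fun n => (if d ∣ n then (1 : ℝ) else 0) *
            ((omegaOn P n : ℝ) - recip P) ^ j)) := by
      intro M
      simp only [avg, mul_div_assoc', Finset.mul_sum, ← sub_div, ← Finset.sum_sub_distrib]
      rw [← Finset.sum_div, Finset.sum_comm]
      congr 1
      refine Finset.sum_congr rfl fun n _ => ?_
      rw [pow_succ, ← mul_assoc]
      nth_rw 2 [omegaOn_sub_recip]
      rw [Finset.mul_sum]
      refine Finset.sum_congr rfl fun p _ => ?_
      by_cases h1 : d ∣ n <;> by_cases h2 : p ∣ n <;> simp [h1, h2, Nat.lcm_dvd_iff]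
      · ring
      · ring
    rw [expand, expand, ← Finset.sum_sub_distrib]
    refine (Finset.abs_sum_le_sum_abs _ _).trans ?_
    have hb : ∀ p ∈ P, |avg N (fun n => (if d.lcm p ∣ n then (1 : ℝ) else 0) *
            ((omegaOn P n : ℝ) - recip P) ^ j) -
          1 / p * avg N (fun n => (if d ∣ n then (1 : ℝ) else 0) *
            ((omegaOn P n : ℝ) - recip P) ^ j) -
          (avg D (fun n => (if d.lcm p ∣ n then (1 : ℝ) else 0) *
            ((omegaOn P n : ℝ) - recip P) ^ j) -
          1 / p * avg D (fun n => (if d ∣ n then (1 : ℝ) else 0) *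
            ((omegaOn P n : ℝ) - recip P) ^ j))| ≤ 2 * ((2 * P.card : ℝ) ^ j / N) := by
      intro p hp
      have h1 := ih (d.lcm p) (Nat.lcm_dvd hd (hP p hp))
      have h2 := ih d hd
      set u := (2 * P.card : ℝ) ^ j / N
      have hp0 : (1 : ℝ) ≤ p := by exact_mod_cast Nat.pos_of_dvd_of_pos (hP p hp) hD
      have hp1 : 1 / (p : ℝ) ≤ 1 := by rw [div_le_one (by linarith)]; exact hp0
      have hp2 : 0 ≤ 1 / (p : ℝ) := by positivity
      generalize avg N (fun n => (if d.lcm p ∣ n then (1 : ℝ) else 0) *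
            ((omegaOn P n : ℝ) - recip P) ^ j) = a at *
      generalize avg D (fun n => (if d.lcm p ∣ n then (1 : ℝ) else 0) *
            ((omegaOn P n : ℝ) - recip P) ^ j) = b at *
      generalize avg N (fun n => (if d ∣ n then (1 : ℝ) else 0) *
            ((omegaOn P n : ℝ) - recip P) ^ j) = a' at *
      generalize avg D (fun n => (if d ∣ n then (1 : ℝ) else 0) *
            ((omegaOn P n : ℝ) - recip P) ^ j) = b' at *
      have e : a - 1 / p * a' - (b - 1 / p * b') = (a - b) - 1 / p * (a' - b') := by ring
      rw [e]
      refine (abs_sub _ _).trans ?_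
      rw [abs_mul, abs_of_nonneg hp2]
      have := mul_le_mul hp1 h2 (abs_nonneg _) zero_le_one
      linarith
    refine (Finset.sum_le_sum hb).trans_eq ?_
    rw [Finset.sum_const, nsmul_eq_mul]
    ring

theorem abs_avg_pow_sub_le {P : Finset ℕ} {N D : ℕ} (hN : 0 < N) (hD : 0 < D)
    (hP : ∀ p ∈ P, p ∣ D) (j : ℕ) :
    |avg N (fun n => ((omegaOn P n : ℝ) - recip P) ^ j) -
      avg D (fun n => ((omegaOn P n : ℝ) - recip P) ^ j)| ≤ (2 * P.card : ℝ) ^ j / N := by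
  simpa using abs_avg_dvd_mul_pow_sub_le hN hD hP j 1 (one_dvd _)

theorem avg_mono {N : ℕ} {f g : ℕ → ℝ} (h : ∀ n, f n ≤ g n) : avg N f ≤ avg N g := by
  unfold avg
  gcongr
  exact h _

/-- Exponential moments of the independent model. -/
theorem avg_exp_le {P : Finset ℕ} (hP : ∀ p ∈ P, p.Prime) {r : ℝ} (hr : |r| ≤ 1) :
    avg (∏ p ∈ P, p) (fun n => Real.exp (r * ((omegaOn P n : ℝ) - recip P))) ≤
      Real.exp (r ^ 2 * recip P) := by
  have e : (fun n => Real.exp (r * ((omegaOn P n : ℝ) - recip P))) =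
      fun n => Real.exp r ^ omegaOn P n * Real.exp (-r * recip P) := by
    funext n
    rw [← Real.exp_nat_mul, ← Real.exp_add]
    ring_nf
  rw [e, avg, ← Finset.sum_mul, mul_div_right_comm]
  change avg _ _ * _ ≤ _
  rw [avg_pow_omegaOn hP]
  have h1 : ∏ p ∈ P, (1 + (Real.exp r - 1) / p) ≤ ∏ p ∈ P, Real.exp ((r + r ^ 2) * (1 / p)) := by
    refine Finset.prod_le_prod (fun p hp => ?_) fun p hp => ?_
    · have hp1 : (1 : ℝ) ≤ p := by exact_mod_cast (hP p hp).one_le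
      have : 1 + (Real.exp r - 1) / p = (p - 1 + Real.exp r) / p := by field_simp; ring
      rw [this]
      have := Real.exp_pos r
      apply div_nonneg <;> linarith
    · have h2 := Real.norm_exp_sub_one_sub_id_le (x := r) hr
      rw [Real.norm_eq_abs, abs_le, Real.norm_eq_abs, sq_abs] at h2
      have h3 : (Real.exp r - 1) / p ≤ (r + r ^ 2) * (1 / p) := by
        rw [mul_one_div]
        gcongr
        linarith [h2.2]
      linarith [Real.add_one_le_exp ((r + r ^ 2) * (1 / p : ℝ))]
  rw [← Real.exp_sum, ← Finset.mul_sum] at h1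
  calc _ ≤ Real.exp ((r + r ^ 2) * recip P) * Real.exp (-r * recip P) := by
        gcongr
        exact h1
    _ = _ := by rw [← Real.exp_add]; ring_nf

/-- Even moments of the independent model, from `x^{2k} / (2k)! ≤ e^x + e^{-x}` at
`x = 2 r (omegaOn P n - recip P)`. -/
theorem avg_pow_le {P : Finset ℕ} (hP : ∀ p ∈ P, p.Prime) {r : ℝ} (hr : |2 * r| ≤ 1) (k : ℕ) :
    avg (∏ p ∈ P, p) (fun n => (r * ((omegaOn P n : ℝ) - recip P)) ^ (2 * k) / (2 * k).factorial) ≤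
      (1 / 4) ^ k * (2 * Real.exp (4 * r ^ 2 * recip P)) := by
  have hpt : ∀ n, (r * ((omegaOn P n : ℝ) - recip P)) ^ (2 * k) / (2 * k).factorial ≤
      (1 / 4) ^ k * (Real.exp (2 * r * ((omegaOn P n : ℝ) - recip P)) +
        Real.exp (-(2 * r) * ((omegaOn P n : ℝ) - recip P))) := by
    intro n
    set x := 2 * r * ((omegaOn P n : ℝ) - recip P) with hx
    have e : r * ((omegaOn P n : ℝ) - recip P) = (1 / 2) * x := by rw [hx]; ring
    have e2 : -(2 * r) * ((omegaOn P n : ℝ) - recip P) = -x := by rw [hx]; ring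
    rw [e, e2, mul_pow, pow_mul (1 / 2 : ℝ), mul_div_assoc]
    have h1 := Real.pow_div_factorial_le_exp _ (abs_nonneg x) (2 * k)
    rw [Even.pow_abs ⟨k, by ring⟩] at h1
    have h2 : Real.exp |x| ≤ Real.exp x + Real.exp (-x) := by
      rcases abs_cases x with ⟨h, _⟩ | ⟨h, _⟩ <;> rw [h] <;>
        linarith [Real.exp_pos x, Real.exp_pos (-x)]
    norm_num
    linarith
  refine (avg_mono hpt).trans ?_
  have h1 := avg_exp_le hP hr
  have h2 := avg_exp_le hP (r := -(2 * r)) (by rwa [abs_neg])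
  have e : avg (∏ p ∈ P, p) (fun n => (1 / 4 : ℝ) ^ k *
      (Real.exp (2 * r * ((omegaOn P n : ℝ) - recip P)) +
        Real.exp (-(2 * r) * ((omegaOn P n : ℝ) - recip P)))) = (1 / 4) ^ k *
      (avg (∏ p ∈ P, p) (fun n => Real.exp (2 * r * ((omegaOn P n : ℝ) - recip P))) +
       avg (∏ p ∈ P, p) (fun n => Real.exp (-(2 * r) * ((omegaOn P n : ℝ) - recip P)))) := by
    unfold avg
    rw [← Finset.mul_sum, Finset.sum_add_distrib]
    ring
  rw [e]
  gcongr
  rw [show (2 * r) ^ 2 = 4 * r ^ 2 by ring] at h1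
  rw [show (-(2 * r)) ^ 2 = 4 * r ^ 2 by ring] at h2
  linarith

/-! ### Estimates for the characteristic function -/

/-- Taylor's formula along a unit imaginary direction, by induction on `n`: the derivative of the
remainder of order `n + 1` is `c` times the remainder of order `n`. -/
theorem norm_exp_sub_taylor_aux {c : ℂ} (hc : c.re = 0) (hc1 : ‖c‖ = 1) (n : ℕ) :
    ∀ x : ℝ, 0 ≤ x →
      ‖Complex.exp (c * x) - ∑ j ∈ Finset.range n, (c * x) ^ j / (j.factorial : ℂ)‖ ≤
        x ^ n / n.factorial := by
  induction n with
  | zero =>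
    intro x _
    simp [Complex.norm_exp, hc]
  | succ n ih =>
    intro x hx
    have hderiv : ∀ y : ℝ, HasDerivAt (fun y : ℝ => Complex.exp (c * y) -
        ∑ j ∈ Finset.range (n + 1), (c * y) ^ j / (j.factorial : ℂ))
        (c * (Complex.exp (c * y) - ∑ j ∈ Finset.range n, (c * y) ^ j / (j.factorial : ℂ))) y := by
      intro y
      have h0 : HasDerivAt (fun y : ℝ => c * (y : ℂ)) c y := by
        simpa using (Complex.ofRealCLM.hasDerivAt (x := y)).const_mul c
      have h1 := h0.cexp
      have h2 : HasDerivAt (fun y : ℝ => ∑ j ∈ Finset.range (n + 1),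
          (c * (y : ℂ)) ^ j / (j.factorial : ℂ))
          (∑ j ∈ Finset.range (n + 1), (j * (c * (y : ℂ)) ^ (j - 1) * c) / (j.factorial : ℂ)) y := by
        refine HasDerivAt.fun_sum fun j _ => ?_
        exact (h0.fun_pow j).div_const _
      refine (h1.sub h2).congr_deriv ?_
      rw [Finset.sum_range_succ', mul_sub, Finset.mul_sum]
      simp only [Nat.cast_zero, zero_mul, zero_div, add_zero, Nat.add_sub_cancel]
      congr 1
      · ring
      refine Finset.sum_congr rfl fun j _ => ?_
      have h3 : (j.factorial : ℂ) ≠ 0 := by exact_mod_cast j.factorial_ne_zero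
      have h4 : ((j : ℂ) + 1) ≠ 0 := by exact_mod_cast j.succ_ne_zero
      rw [Nat.factorial_succ]
      push_cast
      field_simp
    have hB : ∀ y : ℝ, HasDerivAt (fun y : ℝ => y ^ (n + 1) / ((n + 1).factorial : ℝ))
        (y ^ n / n.factorial) y := by
      intro y
      refine ((hasDerivAt_pow (n + 1) y).div_const _).congr_deriv ?_
      have h3 : (n.factorial : ℝ) ≠ 0 := by exact_mod_cast n.factorial_ne_zero
      rw [Nat.factorial_succ]
      push_cast
      field_simp
    refine image_norm_le_of_norm_deriv_right_le_deriv_boundary (a := 0) (b := x)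
      (fun y _ => (hderiv y).continuousAt.continuousWithinAt)
      (fun y _ => (hderiv y).hasDerivWithinAt) ?_ hB ?_ ⟨hx, le_rfl⟩
    · rw [Finset.sum_range_succ']
      simp
    · intro y hy
      rw [norm_mul, hc1, one_mul]
      exact ih y hy.1

theorem norm_exp_mul_I_sub_taylor (n : ℕ) (x : ℝ) :
    ‖Complex.exp (x * Complex.I) - ∑ j ∈ Finset.range n, (x * Complex.I) ^ j / (j.factorial : ℂ)‖ ≤
      |x| ^ n / n.factorial := by
  rcases le_total 0 x with hx | hx
  · have := norm_exp_sub_taylor_aux (c := Complex.I) (by simp) (by simp) n x hx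
    rw [abs_of_nonneg hx]
    simpa only [mul_comm Complex.I] using this
  · have := norm_exp_sub_taylor_aux (c := -Complex.I) (by simp) (by simp) n (-x) (by linarith)
    rw [abs_of_nonpos hx]
    have e : -Complex.I * ((-x : ℝ) : ℂ) = x * Complex.I := by push_cast; ring
    simpa only [e] using this

theorem norm_prod_sub_prod_le {ι : Type*} [DecidableEq ι] (s : Finset ι) {f g : ι → ℂ}
    (hf : ∀ i ∈ s, ‖f i‖ ≤ 1) (hg : ∀ i ∈ s, ‖g i‖ ≤ 1) :
    ‖∏ i ∈ s, f i - ∏ i ∈ s, g i‖ ≤ ∑ i ∈ s, ‖f i - g i‖ := by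
  induction s using Finset.induction_on with
  | empty => simp
  | insert a s ha ih =>
    rw [Finset.prod_insert ha, Finset.prod_insert ha, Finset.sum_insert ha]
    have e : f a * ∏ i ∈ s, f i - g a * ∏ i ∈ s, g i =
        (f a - g a) * ∏ i ∈ s, f i + g a * (∏ i ∈ s, f i - ∏ i ∈ s, g i) := by ring
    rw [e]
    refine (norm_add_le _ _).trans ?_
    rw [norm_mul, norm_mul]
    have h1 : ‖∏ i ∈ s, f i‖ ≤ 1 := by
      rw [norm_prod]
      exact Finset.prod_le_one (fun _ _ => norm_nonneg _)
        fun i hi => hf i (Finset.mem_insert_of_mem hi)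
    have h2 := ih (fun i hi => hf i (Finset.mem_insert_of_mem hi))
      (fun i hi => hg i (Finset.mem_insert_of_mem hi))
    have h3 := hg a (Finset.mem_insert_self a s)
    exact add_le_add (mul_le_of_le_one_right (norm_nonneg _) h1)
      ((mul_le_of_le_one_left (norm_nonneg _) h3).trans h2)

theorem norm_exp_mul_I_sub_one_le (θ : ℝ) : ‖Complex.exp (θ * Complex.I) - 1‖ ≤ |θ| := by
  simpa using norm_exp_mul_I_sub_taylor 1 θ

/-- Poisson approximation of the characteristic function of the independent model. -/
theorem norm_avg_prod_sub_le {P : Finset ℕ} (hP : ∀ p ∈ P, p.Prime) {θ : ℝ} (hθ : |θ| ≤ 1) :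
    ‖avg (∏ p ∈ P, p) (fun n => Complex.exp (θ * ((omegaOn P n : ℝ) - recip P : ℝ) * Complex.I)) -
      Complex.exp ((Complex.exp (θ * Complex.I) - 1 - θ * Complex.I) * recip P)‖ ≤
      θ ^ 2 * ∑' n : ℕ, 1 / (n : ℝ) ^ 2 := by
  set z := Complex.exp (θ * Complex.I) with hz
  have hz1 : ‖z‖ = 1 := Complex.norm_exp_ofReal_mul_I θ
  have hzθ : ‖z - 1‖ ≤ |θ| := norm_exp_mul_I_sub_one_le θ
  have hzre : z.re ≤ 1 := (Complex.re_le_norm z).trans hz1.le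
  -- `u` is the centring factor shared by both sides.
  set u := Complex.exp (-(θ * recip P : ℝ) * Complex.I) with hu
  have hu1 : ‖u‖ = 1 := by
    rw [hu, ← Complex.ofReal_neg]
    exact Complex.norm_exp_ofReal_mul_I _
  have e1 : avg (∏ p ∈ P, p)
      (fun n => Complex.exp (θ * ((omegaOn P n : ℝ) - recip P : ℝ) * Complex.I)) =
      (∏ p ∈ P, (1 + (z - 1) / p)) * u := by
    rw [← avg_pow_omegaOn hP, avg, avg, div_mul_eq_mul_div, Finset.sum_mul]
    congr 1
    refine Finset.sum_congr rfl fun n _ => ?_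
    rw [hz, hu, ← Complex.exp_nat_mul, ← Complex.exp_add]
    congr 1
    push_cast
    ring
  have e2 : Complex.exp ((z - 1 - θ * Complex.I) * recip P) =
      (∏ p ∈ P, Complex.exp ((z - 1) / p)) * u := by
    rw [← Complex.exp_sum, hu, ← Complex.exp_add, recip]
    congr 1
    push_cast
    simp only [div_eq_mul_inv, one_mul, ← Finset.mul_sum]
    ring
  rw [e1, e2, ← sub_mul, norm_mul, hu1, mul_one]
  refine (norm_prod_sub_prod_le P ?_ ?_).trans ?_
  · intro p hp
    have hp1 : (1 : ℝ) ≤ p := by exact_mod_cast (hP p hp).one_le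
    have hp0 : (p : ℂ) ≠ 0 := by exact_mod_cast (hP p hp).ne_zero
    have e : 1 + (z - 1) / p = ((p - 1 : ℝ) + z) / p := by
      push_cast
      field_simp
      ring
    rw [e, norm_div, Complex.norm_natCast, div_le_one (by linarith)]
    refine (norm_add_le _ _).trans ?_
    rw [Complex.norm_real, hz1, Real.norm_eq_abs, abs_of_nonneg (by linarith)]
    linarith
  · intro p hp
    rw [Complex.norm_exp, Real.exp_le_one_iff, Complex.div_natCast_re]
    refine div_nonpos_of_nonpos_of_nonneg ?_ (by positivity)
    simp only [Complex.sub_re, Complex.one_re]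
    linarith
  · have hs : Summable fun n : ℕ => 1 / (n : ℝ) ^ 2 :=
      Real.summable_one_div_nat_pow.2 (by norm_num)
    refine le_trans ?_ (mul_le_mul_of_nonneg_left
      (hs.sum_le_tsum P (fun i _ => by positivity)) (sq_nonneg θ))
    rw [Finset.mul_sum]
    refine Finset.sum_le_sum fun p hp => ?_
    have hp1 : (1 : ℝ) ≤ p := by exact_mod_cast (hP p hp).one_le
    have hw : ‖(z - 1) / p‖ ≤ |θ| / p := by
      rw [norm_div, Complex.norm_natCast]
      gcongr
    have hw1 : ‖(z - 1) / p‖ ≤ 1 := hw.trans (by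
      rw [div_le_one (by linarith)]; linarith)
    rw [← norm_neg]
    have e : -(1 + (z - 1) / p - Complex.exp ((z - 1) / p)) =
      Complex.exp ((z - 1) / p) - 1 - (z - 1) / p := by ring
    rw [e]
    refine (Complex.norm_exp_sub_one_sub_id_le hw1).trans ?_
    calc ‖(z - 1) / p‖ ^ 2 ≤ (|θ| / p) ^ 2 := by gcongr
      _ = _ := by rw [div_pow, sq_abs]; ring

theorem norm_avg_le {N : ℕ} {f : ℕ → ℂ} {g : ℕ → ℝ} (h : ∀ n ∈ Finset.Ioc 0 N, ‖f n‖ ≤ g n) :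
    ‖avg N f‖ ≤ avg N g := by
  rw [avg, avg, norm_div, Complex.norm_natCast]
  gcongr
  exact (norm_sum_le _ _).trans (Finset.sum_le_sum h)

theorem avg_sub {K : Type*} [Field K] (N : ℕ) (f g : ℕ → K) :
    avg N (fun n => f n - g n) = avg N f - avg N g := by
  simp only [avg, Finset.sum_sub_distrib, sub_div]

/-- Comparison of the characteristic functions on `[1, N]` and in the independent model. The exponential
is replaced by its Taylor polynomial of degree `2k - 1`; the first error term collects the
differences of the moments, the second one the Taylor remainders. -/
theorem norm_avg_exp_sub_le {P : Finset ℕ} (hP : ∀ p ∈ P, p.Prime) {N : ℕ} (hN : 0 < N) {θ : ℝ}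
    (hθ : |2 * θ| ≤ 1) (k : ℕ) :
    ‖avg N (fun n => Complex.exp (θ * ((omegaOn P n : ℝ) - recip P : ℝ) * Complex.I)) -
      avg (∏ p ∈ P, p)
        (fun n => Complex.exp (θ * ((omegaOn P n : ℝ) - recip P : ℝ) * Complex.I))‖ ≤
      (2 * k + 1) * (((P.card : ℝ) + 1) ^ (2 * k) / N) +
        4 * Real.exp (4 * (θ ^ 2 * recip P)) * (1 / 4) ^ k := by
  set D := ∏ p ∈ P, p with hD
  have hD0 : 0 < D := Finset.prod_pos fun p hp => (hP p hp).pos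
  set S : ℕ → ℝ := fun n => (omegaOn P n : ℝ) - recip P with hS
  have hdisc : ∀ j, |avg N (fun n => S n ^ j) - avg D (fun n => S n ^ j)| ≤
      (2 * P.card : ℝ) ^ j / N :=
    abs_avg_pow_sub_le hN hD0 fun p hp => Finset.dvd_prod_of_mem _ hp
  set B := ((P.card : ℝ) + 1) ^ (2 * k) / N with hB
  have hterm : ∀ j, j ≤ 2 * k → |θ| ^ j / j.factorial * ((2 * P.card : ℝ) ^ j / N) ≤ B := by
    intro j hj
    have h1 : |θ| * (2 * P.card) ≤ P.card := by
      have : |θ| * 2 ≤ 1 := by rw [abs_mul, abs_two] at hθ; linarith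
      nlinarith [Nat.cast_nonneg (α := ℝ) P.card]
    have h2 : |θ| ^ j / j.factorial ≤ |θ| ^ j :=
      div_le_self (by positivity) (by exact_mod_cast j.factorial_pos)
    calc |θ| ^ j / j.factorial * ((2 * P.card : ℝ) ^ j / N)
        ≤ |θ| ^ j * ((2 * P.card : ℝ) ^ j / N) := by gcongr
      _ = (|θ| * (2 * P.card)) ^ j / N := by rw [mul_pow]; ring
      _ ≤ ((P.card : ℝ) + 1) ^ j / N := by gcongr; linarith
      _ ≤ B := by
        rw [hB]
        gcongr
        linarith [Nat.cast_nonneg (α := ℝ) P.card]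
  set T : ℕ → ℂ := fun n => ∑ j ∈ Finset.range (2 * k), (θ * (S n : ℝ) * Complex.I) ^ j / (j.factorial : ℂ)
    with hT
  set E : ℕ → ℂ := fun n => Complex.exp (θ * (S n : ℝ) * Complex.I) with hE
  set R : ℕ → ℝ := fun n => (θ * S n) ^ (2 * k) / (2 * k).factorial with hR
  have hET : ∀ n, ‖E n - T n‖ ≤ R n := by
    intro n
    have := norm_exp_mul_I_sub_taylor (2 * k) (θ * S n)
    rw [Even.pow_abs ⟨k, by ring⟩] at this
    simpa [hE, hT, hR] using this
  have hcast : ∀ M j, avg M (fun n => ((S n : ℝ) : ℂ) ^ j) = ((avg M (fun n => S n ^ j) : ℝ) : ℂ) := by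
    intro M j
    simp [avg]
  have hTavg : ∀ M, avg M T = ∑ j ∈ Finset.range (2 * k),
      (θ * Complex.I) ^ j / (j.factorial : ℂ) * ((avg M (fun n => S n ^ j) : ℝ) : ℂ) := by
    intro M
    simp_rw [← hcast]
    simp only [avg, hT, mul_div_assoc', Finset.mul_sum]
    rw [← Finset.sum_div, Finset.sum_comm]
    congr 1
    refine Finset.sum_congr rfl fun j _ => Finset.sum_congr rfl fun n _ => ?_
    rw [mul_right_comm, mul_pow]
    ring
  have hTT : ‖avg N T - avg D T‖ ≤ 2 * k * B := by
    rw [hTavg, hTavg, ← Finset.sum_sub_distrib]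
    refine (norm_sum_le _ _).trans ?_
    have : ∀ j ∈ Finset.range (2 * k), ‖(θ * Complex.I) ^ j / (j.factorial : ℂ) *
        ((avg N (fun n => S n ^ j) : ℝ) : ℂ) - (θ * Complex.I) ^ j / (j.factorial : ℂ) *
        ((avg D (fun n => S n ^ j) : ℝ) : ℂ)‖ ≤ B := by
      intro j hj
      rw [← mul_sub, ← Complex.ofReal_sub, norm_mul, Complex.norm_real, norm_div, norm_pow,
        norm_mul, Complex.norm_I, mul_one, Complex.norm_real, Complex.norm_natCast,
        Real.norm_eq_abs, Real.norm_eq_abs]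
      refine le_trans ?_ (hterm j (Finset.mem_range.1 hj).le)
      gcongr
      exact hdisc j
    refine (Finset.sum_le_sum this).trans_eq ?_
    simp
  have hRD : avg D R ≤ (1 / 4) ^ k * (2 * Real.exp (4 * (θ ^ 2 * recip P))) := by
    have := avg_pow_le hP hθ k
    rwa [mul_assoc 4] at this
  have hRN : avg N R ≤ avg D R + B := by
    have e : ∀ M, avg M R = θ ^ (2 * k) / (2 * k).factorial * avg M (fun n => S n ^ (2 * k)) := by
      intro M
      simp only [avg, hR, mul_div_assoc', Finset.mul_sum]
      congr 1
      refine Finset.sum_congr rfl fun n _ => ?_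
      rw [mul_pow]
      ring
    have h1 := hterm (2 * k) le_rfl
    rw [Even.pow_abs ⟨k, by ring⟩] at h1
    have h2 : 0 ≤ θ ^ (2 * k) / (2 * k).factorial := by
      rw [pow_mul]
      positivity
    have h3 := mul_le_mul_of_nonneg_left ((le_abs_self _).trans (hdisc (2 * k))) h2
    rw [e, e]
    linarith
  have h1 : ‖avg N E - avg N T‖ ≤ avg N R := by
    rw [← avg_sub]
    exact norm_avg_le fun n _ => hET n
  have h2 : ‖avg D E - avg D T‖ ≤ avg D R := by
    rw [← avg_sub]
    exact norm_avg_le fun n _ => hET n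
  have e : avg N E - avg D E = (avg N E - avg N T) + (avg N T - avg D T) - (avg D E - avg D T) := by
    ring
  rw [e]
  refine (norm_sub_le _ _).trans ?_
  have h3 := norm_add_le (avg N E - avg N T) (avg N T - avg D T)
  linarith

/-! ### Truncation to small primes -/

/-- A nonzero `n` has at most `log n / log y` prime factors exceeding `y`, as their product
divides `n`. -/
theorem card_primeFactors_sub_omegaOn_le {m n : ℕ} (hn : n ≠ 0) {y : ℝ} (hy : 1 < y)
    (hm : y < m + 1) :
    |(n.primeFactors.card : ℝ) - omegaOn (Nat.primesLE m) n| ≤ Real.log n / Real.log y := by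
  set Q := n.primeFactors.filter fun p => ¬ p ≤ m with hQ
  have e1 : (Nat.primesLE m).filter (· ∣ n) = n.primeFactors.filter fun p => p ≤ m := by
    ext p
    simp only [Finset.mem_filter, Nat.mem_primesLE, Nat.mem_primeFactors]
    tauto
  have e2 : (n.primeFactors.card : ℝ) - omegaOn (Nat.primesLE m) n = Q.card := by
    rw [omegaOn, e1, hQ, ← Finset.card_filter_add_card_filter_not (s := n.primeFactors) (fun p => p ≤ m)]
    push_cast
    ring
  rw [e2, abs_of_nonneg (by positivity), le_div_iff₀ (Real.log_pos hy), ← Real.log_pow]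
  have hy0 : 0 < y := by linarith
  refine Real.log_le_log (by positivity) ?_
  have h1 : y ^ Q.card ≤ ∏ p ∈ Q, (p : ℝ) := by
    rw [← Finset.prod_const]
    refine Finset.prod_le_prod (fun _ _ => hy0.le) fun p hp => ?_
    have : m + 1 ≤ p := by
      have := (Finset.mem_filter.1 hp).2
      lia
    have : ((m : ℝ) + 1) ≤ p := by exact_mod_cast this
    linarith
  have h2 : ∏ p ∈ Q, p ≤ n := Nat.le_of_dvd (Nat.pos_of_ne_zero hn)
    ((Finset.prod_dvd_prod_of_subset _ _ _ (Finset.filter_subset _ _)).trans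
      (Nat.prod_primeFactors_dvd n))
  refine h1.trans ?_
  rw [← Nat.cast_prod]
  exact Nat.cast_le.2 h2

/-- The truncation of `ω` to small primes. The sets `P N` are so small that `|P N|` is `N^{o(1)}`, yet
the neglected prime factors number at most `κ N = o(√(log log N))` and the mean changes by
`o(√(log log N))`. -/
theorem exists_truncation : ∃ (P : ℕ → Finset ℕ) (κ : ℕ → ℝ), (∀ N, ∀ p ∈ P N, p.Prime) ∧
    Tendsto (fun N : ℕ => (recip (P N) - Real.log (Real.log N)) / √(Real.log (Real.log N)))
      atTop (nhds 0) ∧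
    (∀ j : ℕ, Tendsto (fun N : ℕ => (((P N).card : ℝ) + 1) ^ j / N) atTop (nhds 0)) ∧
    (∀ᶠ N : ℕ in atTop, ∀ n ∈ Finset.Ioc 0 N,
      |(n.primeFactors.card : ℝ) - omegaOn (P N) n| ≤ κ N) ∧
    Tendsto (fun N : ℕ => κ N / √(Real.log (Real.log N))) atTop (nhds 0) := by
  obtain ⟨C, hC⟩ := exists_abs_sum_prime_inv_sub_loglog_le
  have hlogN : Tendsto (fun N : ℕ => Real.log N) atTop atTop :=
    Real.tendsto_log_atTop.comp tendsto_natCast_atTop_atTop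
  have hL : Tendsto (fun N : ℕ => Real.log (Real.log N)) atTop atTop :=
    Real.tendsto_log_atTop.comp hlogN
  set K : ℕ → ℝ := fun N => √√(Real.log (Real.log N)) with hK
  have hKt : Tendsto K atTop atTop :=
    Real.tendsto_sqrt_atTop.comp (Real.tendsto_sqrt_atTop.comp hL)
  have hK2 : ∀ N : ℕ, √(Real.log (Real.log N)) = K N ^ 2 := fun N =>
    (Real.sq_sqrt (Real.sqrt_nonneg _)).symm
  have hK4 : ∀ᶠ N : ℕ in atTop, Real.log (Real.log N) = K N ^ 4 := by
    filter_upwards [hL.eventually_ge_atTop 0] with N hN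
    rw [show 4 = 2 * 2 by rfl, pow_mul, ← hK2, Real.sq_sqrt hN]
  set y : ℕ → ℝ := fun N => Real.exp (Real.log N / K N) with hy
  have hlogy : ∀ N : ℕ, Real.log (y N) = Real.log N / K N := fun N => Real.log_exp _
  -- This holds because `log N = exp (K ^ 4)`.
  have hylarge : ∀ᶠ N : ℕ in atTop, K N ≤ Real.log N / K N := by
    filter_upwards [hK4, hKt.eventually_ge_atTop 1, hlogN.eventually_gt_atTop 0] with N h4 h1 h0
    rw [le_div_iff₀ (by linarith), ← Real.exp_log h0, h4]
    have := Real.add_one_le_exp (K N ^ 4)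
    have h2 : K N ^ 2 ≤ K N ^ 4 := pow_le_pow_right₀ h1 (by norm_num)
    nlinarith
  have hsmall : ∀ c : ℝ, Tendsto (fun N => c / K N) atTop (nhds 0) := fun c =>
    hKt.const_div_atTop c
  refine ⟨fun N => Nat.primesLE ⌊y N⌋₊, K, fun N p hp => (Nat.mem_primesLE.1 hp).2, ?_, ?_, ?_, ?_⟩
  · refine squeeze_zero_norm' ?_ (hsmall (|C| + Real.log 2 + 1))
    filter_upwards [hylarge, hK4, hKt.eventually_ge_atTop 2, hlogN.eventually_gt_atTop 0]
      with N h1 h4 h2 h0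
    have hK0 : 0 < K N := by linarith
    have hy2 : 2 ≤ y N := by
      have := Real.add_one_le_exp (Real.log N / K N)
      simp only [hy]
      linarith
    have hm2 : 2 ≤ ⌊y N⌋₊ := Nat.le_floor (by exact_mod_cast hy2)
    have hmert := hC _ hm2
    set m := ⌊y N⌋₊
    have hm2' : (2 : ℝ) ≤ m := by exact_mod_cast hm2
    have hmy : (m : ℝ) ≤ y N := Nat.floor_le (by linarith)
    have hym : y N ≤ (m : ℝ) ^ 2 := by
      have := Nat.lt_floor_add_one (y N)
      change y N < m + 1 at this
      nlinarith
    have hlm : 0 < Real.log m := Real.log_pos (by linarith)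
    have a1 : Real.log m ≤ Real.log (y N) := Real.log_le_log (by linarith) hmy
    have a2 : Real.log (y N) ≤ 2 * Real.log m := by
      have := Real.log_le_log (by linarith) hym
      rwa [Real.log_pow] at this
    have b1 : Real.log (Real.log m) ≤ Real.log (Real.log (y N)) := Real.log_le_log hlm a1
    have b2 : Real.log (Real.log (y N)) ≤ Real.log 2 + Real.log (Real.log m) := by
      rw [← Real.log_mul (by norm_num) hlm.ne']
      exact Real.log_le_log (by linarith) a2
    have b3 : Real.log (Real.log (y N)) = Real.log (Real.log N) - Real.log (K N) := by
      rw [hlogy, Real.log_div h0.ne' hK0.ne']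
    have b4 : Real.log (K N) ≤ K N := (Real.log_le_sub_one_of_pos hK0).trans (by linarith)
    have b5 : 0 ≤ Real.log (K N) := Real.log_nonneg (by linarith)
    have hl2 : 0 ≤ Real.log 2 := Real.log_nonneg (by norm_num)
    have c1 : |recip (Nat.primesLE m) - Real.log (Real.log N)| ≤ |C| + Real.log 2 + K N := by
      rw [← recip] at hmert
      rw [abs_le] at hmert ⊢
      constructor <;> linarith [le_abs_self C, neg_abs_le C]
    rw [hK2, norm_div, Real.norm_eq_abs, Real.norm_eq_abs, abs_of_pos (a := K N ^ 2) (by positivity),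
      div_le_div_iff₀ (by positivity) hK0]
    have c2 : |C| + Real.log 2 + K N ≤ (|C| + Real.log 2 + 1) * K N := by
      nlinarith [abs_nonneg C]
    nlinarith [mul_le_mul_of_nonneg_right (c1.trans c2) hK0.le]
  · intro j
    have hlim : Tendsto (fun N : ℕ => Real.exp (-(Real.log N / 2))) atTop (nhds 0) :=
      Real.tendsto_exp_neg_atTop_nhds_zero.comp (hlogN.atTop_div_const (by norm_num))
    refine squeeze_zero' (Eventually.of_forall fun N => div_nonneg (pow_nonneg (by linarith [Nat.cast_nonneg (α := ℝ) (Nat.primesLE ⌊y N⌋₊).card]) _) (Nat.cast_nonneg _)) ?_ hlim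
    filter_upwards [hylarge, hKt.eventually_ge_atTop 2, hKt.eventually_ge_atTop (4 * j),
      hlogN.eventually_gt_atTop 0, eventually_gt_atTop 0] with N h1 h2 h4 h0 hN
    have hK0 : 0 < K N := by linarith
    have hy2 : 2 ≤ y N := by
      have := Real.add_one_le_exp (Real.log N / K N)
      simp only [hy]
      linarith
    -- `(2 y) ^ j` is absorbed by `y ^ (2 j) = N ^ (2 j / K)`, which is at most `√N` once `K ≥ 4 j`.
    have hcard : (((Nat.primesLE ⌊y N⌋₊).card : ℝ) + 1) ≤ y N ^ 2 := by
      have h5 : (Nat.primesLE ⌊y N⌋₊).card ≤ ⌊y N⌋₊ := by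
        have : Nat.primesLE ⌊y N⌋₊ ⊆ Finset.Ioc 0 ⌊y N⌋₊ := fun p hp => by
          have := Nat.mem_primesLE.1 hp
          exact Finset.mem_Ioc.2 ⟨this.2.pos, this.1⟩
        simpa using Finset.card_le_card this
      have h6 : ((Nat.primesLE ⌊y N⌋₊).card : ℝ) ≤ y N :=
        (by exact_mod_cast h5 : ((Nat.primesLE ⌊y N⌋₊).card : ℝ) ≤ (⌊y N⌋₊ : ℝ)).trans
          (Nat.floor_le (by linarith))
      nlinarith
    have hN0 : (0 : ℝ) < N := by exact_mod_cast hN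
    calc (((Nat.primesLE ⌊y N⌋₊).card : ℝ) + 1) ^ j / N ≤ (y N ^ 2) ^ j / N := by
          have := Nat.cast_nonneg (α := ℝ) (Nat.primesLE ⌊y N⌋₊).card
          exact div_le_div_of_nonneg_right (pow_le_pow_left₀ (by linarith) hcard j) hN0.le
      _ = Real.exp ((2 * j) * (Real.log N / K N) - Real.log N) := by
        rw [Real.exp_sub, Real.exp_log hN0, ← pow_mul, hy]
        congr 1
        rw [← Real.exp_nat_mul]
        push_cast
        rfl
      _ ≤ _ := by
        rw [Real.exp_le_exp]
        have : (2 * j) * (Real.log N / K N) ≤ Real.log N / 2 := by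
          rw [mul_div_assoc', div_le_div_iff₀ hK0 (by norm_num)]
          nlinarith
        linarith
  · filter_upwards [hylarge, hKt.eventually_ge_atTop 2, hlogN.eventually_gt_atTop 0]
      with N h1 h2 h0 n hn
    rw [Finset.mem_Ioc] at hn
    have hy1 : 1 < y N := by
      have := Real.add_one_le_exp (Real.log N / K N)
      simp only [hy]
      linarith
    refine (card_primeFactors_sub_omegaOn_le hn.1.ne' hy1 (Nat.lt_floor_add_one _)).trans ?_
    rw [hlogy]
    have hn0 : (0 : ℝ) < n := by exact_mod_cast hn.1
    have hnN : Real.log n ≤ Real.log N := Real.log_le_log hn0 (by exact_mod_cast hn.2)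
    have hK0 : 0 < K N := by linarith
    rw [div_div_eq_mul_div, div_le_iff₀ h0]
    nlinarith
  · refine (hsmall 1).congr' ?_
    filter_upwards [hKt.eventually_gt_atTop 0] with N h0
    rw [hK2]
    field_simp

/-! ### Convergence of characteristic functions -/

theorem norm_exp_mul_I_sub_exp_mul_I_le (u v : ℝ) :
    ‖Complex.exp (u * Complex.I) - Complex.exp (v * Complex.I)‖ ≤ |u - v| := by
  have e : Complex.exp (u * Complex.I) - Complex.exp (v * Complex.I) =
      (Complex.exp ((u - v : ℝ) * Complex.I) - 1) * Complex.exp (v * Complex.I) := by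
    rw [sub_mul, one_mul, ← Complex.exp_add]
    congr 2
    push_cast
    ring
  rw [e, norm_mul, Complex.norm_exp_ofReal_mul_I, mul_one]
  exact norm_exp_mul_I_sub_one_le _

/-- The characteristic function of a centred Poisson variable of parameter `A`, scaled by `θ`, tends to
that of a Gaussian of variance `lim θ² A`. -/
theorem tendsto_exp_poisson {θ A : ℕ → ℝ} {t : ℝ} (hθ : Tendsto θ atTop (nhds 0))
    (hA : Tendsto (fun N => θ N ^ 2 * A N) atTop (nhds (t ^ 2))) :
    Tendsto (fun N => Complex.exp ((Complex.exp (θ N * Complex.I) - 1 - θ N * Complex.I) * A N))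
      atTop (nhds (Complex.exp (-(t ^ 2 / 2)))) := by
  refine (Complex.continuous_exp.tendsto _).comp ?_
  have h1 : Tendsto (fun N => (Complex.exp (θ N * Complex.I) - 1 - θ N * Complex.I +
      (θ N : ℂ) ^ 2 / 2) * A N) atTop (nhds 0) := by
    have hlim : Tendsto (fun N => |θ N| / 6 * |θ N ^ 2 * A N|) atTop (nhds 0) := by
      simpa using (hθ.abs.div_const 6).mul hA.abs
    refine squeeze_zero_norm (fun N => ?_) hlim
    have h3 := norm_exp_mul_I_sub_taylor 3 (θ N)
    have e : ∑ j ∈ Finset.range 3, (θ N * Complex.I) ^ j / (j.factorial : ℂ) =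
        1 + θ N * Complex.I - (θ N : ℂ) ^ 2 / 2 := by
      simp [Finset.sum_range_succ, mul_pow]
      ring
    rw [e] at h3
    have e2 : Complex.exp (θ N * Complex.I) - 1 - θ N * Complex.I + (θ N : ℂ) ^ 2 / 2 =
      Complex.exp (θ N * Complex.I) - (1 + θ N * Complex.I - (θ N : ℂ) ^ 2 / 2) := by ring
    rw [norm_mul, e2, Complex.norm_real, Real.norm_eq_abs]
    refine (mul_le_mul_of_nonneg_right h3 (abs_nonneg _)).trans_eq ?_
    have h5 : |θ N| ^ 3 = |θ N| * θ N ^ 2 := by rw [pow_succ', sq_abs]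
    rw [abs_mul, abs_of_nonneg (sq_nonneg (θ N)), h5]
    norm_num [Nat.factorial]
    ring
  have h2 : Tendsto (fun N => -(((θ N ^ 2 * A N : ℝ) : ℂ) / 2)) atTop (nhds (-((t ^ 2 : ℝ) / 2))) :=
    (((Complex.continuous_ofReal.tendsto _).comp hA).div_const 2).neg
  have h3 := h1.add h2
  rw [zero_add, Complex.ofReal_pow] at h3
  refine h3.congr fun N => ?_
  push_cast
  ring

/-- Pointwise convergence of the characteristic functions of `(ω(n) - log log N) / √(log log N)`. -/
theorem tendsto_avg_charFun (t : ℝ) :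
    Tendsto (fun N : ℕ => avg N (fun n => Complex.exp ((t *
      (((n.primeFactors.card : ℝ) - Real.log (Real.log N)) / √(Real.log (Real.log N))) : ℝ) *
        Complex.I))) atTop (nhds (Complex.exp (-(t ^ 2 / 2)))) := by
  obtain ⟨P, κ, hP, hA, hcard, hω, hκ⟩ := exists_truncation
  have hL : Tendsto (fun N : ℕ => Real.log (Real.log N)) atTop atTop :=
    Real.tendsto_log_atTop.comp (Real.tendsto_log_atTop.comp tendsto_natCast_atTop_atTop)
  set L : ℕ → ℝ := fun N => Real.log (Real.log N) with hLdef
  have hs : Tendsto (fun N : ℕ => √(L N)) atTop atTop := Real.tendsto_sqrt_atTop.comp hL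
  set θ : ℕ → ℝ := fun N => t / √(L N) with hθdef
  have hθ : Tendsto θ atTop (nhds 0) := hs.const_div_atTop t
  have hθA : Tendsto (fun N => θ N ^ 2 * recip (P N)) atTop (nhds (t ^ 2)) := by
    have h1 : Tendsto (fun N => t ^ 2 * ((recip (P N) - L N) / √(L N) * (1 / √(L N)) + 1))
        atTop (nhds (t ^ 2 * (0 * 0 + 1))) :=
      ((hA.mul (hs.const_div_atTop 1)).add_const 1).const_mul _
    rw [mul_zero, zero_add, mul_one] at h1
    refine h1.congr' ?_
    filter_upwards [hL.eventually_gt_atTop 0] with N h0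
    have h2 : √(L N) ^ 2 = L N := Real.sq_sqrt h0.le
    have h3 : 0 < √(L N) := Real.sqrt_pos.2 h0
    simp only [hθdef]
    generalize √(L N) = s at h2 h3 ⊢
    rw [← h2]
    field_simp
    ring
  have hθ1 : ∀ᶠ N in atTop, |2 * θ N| ≤ 1 := by
    have h1 : Tendsto (fun N => |2 * θ N|) atTop (nhds 0) := by
      simpa using (hθ.const_mul 2).abs
    exact h1.eventually_le_const one_pos
  set g : ℕ → ℕ → ℂ := fun N n =>
    Complex.exp (θ N * ((omegaOn (P N) n : ℝ) - recip (P N) : ℝ) * Complex.I) with hg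
  set f : ℕ → ℕ → ℂ := fun N n => Complex.exp ((t *
      (((n.primeFactors.card : ℝ) - L N) / √(L N)) : ℝ) * Complex.I) with hf
  set D : ℕ → ℕ := fun N => ∏ p ∈ P N, p with hD
  set E : ℕ → ℂ := fun N => Complex.exp ((Complex.exp (θ N * Complex.I) - 1 - θ N * Complex.I) *
    recip (P N)) with hE
  have H1 : Tendsto (fun N => avg N (f N) - avg N (g N)) atTop (nhds 0) := by
    have hlim : Tendsto (fun N => |t| * (κ N / √(L N) + |(recip (P N) - L N) / √(L N)|))
        atTop (nhds 0) := by
      simpa using (hκ.add hA.abs).const_mul |t|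
    refine squeeze_zero_norm' ?_ hlim
    filter_upwards [hω, hL.eventually_gt_atTop 0, eventually_gt_atTop 0] with N h1 h0 hN
    have h3 : 0 < √(L N) := Real.sqrt_pos.2 h0
    rw [← avg_sub]
    set c := |t| * (κ N / √(L N) + |(recip (P N) - L N) / √(L N)|) with hc
    have hN0 : (N : ℝ) ≠ 0 := by exact_mod_cast hN.ne'
    have hconst : avg N (fun _ => c) = c := by simp [avg, hN0]
    rw [← hconst]
    refine norm_avg_le fun n hn => ?_
    simp only [hf, hg]
    rw [← Complex.ofReal_mul]
    refine (norm_exp_mul_I_sub_exp_mul_I_le _ _).trans ?_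
    have e : t * (((n.primeFactors.card : ℝ) - L N) / √(L N)) -
        θ N * ((omegaOn (P N) n : ℝ) - recip (P N)) =
        t * (((n.primeFactors.card : ℝ) - omegaOn (P N) n) / √(L N) +
          (recip (P N) - L N) / √(L N)) := by
      simp only [hθdef]
      field_simp
      ring
    rw [e, abs_mul, hc]
    gcongr
    refine (abs_add_le _ _).trans ?_
    gcongr
    rw [abs_div, abs_of_pos h3]
    gcongr
    exact h1 n hn
  have H2 : Tendsto (fun N => avg N (g N) - avg (D N) (g N)) atTop (nhds 0) := by
    rw [Metric.tendsto_nhds]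
    intro ε hε
    set c := 4 * Real.exp (4 * (t ^ 2 + 1)) with hc
    have hpow : Tendsto (fun k : ℕ => c * (1 / 4 : ℝ) ^ k) atTop (nhds 0) := by
      simpa using (tendsto_pow_atTop_nhds_zero_of_lt_one (r := (1 / 4 : ℝ)) (by norm_num)
        (by norm_num)).const_mul c
    -- The degree `k` is fixed first, to make the Taylor remainder small uniformly in `N`.
    obtain ⟨k, hk⟩ := (hpow.eventually_lt_const (half_pos hε)).exists
    have hB : Tendsto (fun N : ℕ => (2 * k + 1) * ((((P N).card : ℝ) + 1) ^ (2 * k) / N))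
        atTop (nhds 0) := by
      simpa using (hcard (2 * k)).const_mul (2 * k + 1 : ℝ)
    filter_upwards [hB.eventually_lt_const (half_pos hε), hθ1, eventually_gt_atTop 0,
      hθA.eventually_le_const (lt_add_one _)] with N h1 h2 hN h3
    rw [dist_zero_right]
    refine (norm_avg_exp_sub_le (hP N) hN h2 k).trans_lt ?_
    have h4 : 4 * Real.exp (4 * (θ N ^ 2 * recip (P N))) * (1 / 4) ^ k ≤ c * (1 / 4) ^ k := by
      rw [hc]
      gcongr
    linarith
  have H3 : Tendsto (fun N => avg (D N) (g N) - E N) atTop (nhds 0) := by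
    have hlim : Tendsto (fun N => θ N ^ 2 * ∑' n : ℕ, 1 / (n : ℝ) ^ 2) atTop (nhds 0) := by
      have h1 := (hθ.pow 2).mul_const (∑' n : ℕ, 1 / (n : ℝ) ^ 2)
      rwa [zero_pow two_ne_zero, zero_mul] at h1
    refine squeeze_zero_norm' ?_ hlim
    filter_upwards [hθ1] with N h1
    refine norm_avg_prod_sub_le (hP N) ?_
    rw [abs_mul, abs_two] at h1
    linarith [abs_nonneg (θ N)]
  have H4 : Tendsto E atTop (nhds (Complex.exp (-(t ^ 2 / 2)))) := tendsto_exp_poisson hθ hθA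
  have h := ((H1.add H2).add H3).add H4
  rw [add_zero, add_zero, zero_add] at h
  refine h.congr fun N => ?_
  ring

/-! ### From characteristic functions to distribution functions -/

/-- The law of `n ↦ x (N + 1) n` for `n` uniform on `[1, N + 1]`. The shift by one makes this a
probability measure for every `N`. -/
noncomputable def empirical (x : ℕ → ℕ → ℝ) (N : ℕ) : Measure ℝ :=
  ∑ n ∈ Finset.Ioc 0 (N + 1), ENNReal.ofReal (1 / ((N + 1 : ℕ) : ℝ)) • Measure.dirac (x (N + 1) n)

theorem empirical_real_apply (x : ℕ → ℕ → ℝ) (N : ℕ) {s : Set ℝ} (hs : MeasurableSet s)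
    [DecidablePred (· ∈ s)] :
    (empirical x N).real s =
      (((Finset.Ioc 0 (N + 1)).filter fun n => x (N + 1) n ∈ s).card : ℝ) / ((N + 1 : ℕ) : ℝ) := by
  have h0 : (0 : ℝ) ≤ 1 / ((N + 1 : ℕ) : ℝ) := by positivity
  have h1 : empirical x N s = ∑ n ∈ Finset.Ioc 0 (N + 1),
      ENNReal.ofReal ((if x (N + 1) n ∈ s then 1 else 0) / ((N + 1 : ℕ) : ℝ)) := by
    simp only [empirical, Measure.finsetSum_apply, Measure.smul_apply, Measure.dirac_apply' _ hs,
      smul_eq_mul]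
    refine Finset.sum_congr rfl fun n _ => ?_
    by_cases h : x (N + 1) n ∈ s <;> simp [h]
  rw [Measure.real, h1, ← ENNReal.ofReal_sum_of_nonneg, ENNReal.toReal_ofReal,
    ← Finset.sum_div, Finset.sum_boole]
  · exact Finset.sum_nonneg fun n _ => by positivity
  · exact fun n _ => by positivity

instance (x : ℕ → ℕ → ℝ) (N : ℕ) : IsProbabilityMeasure (empirical x N) := by
  classical
  refine ⟨?_⟩
  have h := empirical_real_apply x N MeasurableSet.univ
  have h2 : ((N : ℝ) + 1) ≠ 0 := by positivity
  simp [h2, Measure.real, ENNReal.toReal_eq_one_iff] at h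
  exact h

theorem charFun_empirical (x : ℕ → ℕ → ℝ) (N : ℕ) (t : ℝ) :
    charFun (empirical x N) t =
      avg (N + 1) (fun n => Complex.exp ((t * x (N + 1) n : ℝ) * Complex.I)) := by
  have h0 : (0 : ℝ) ≤ 1 / ((N + 1 : ℕ) : ℝ) := by positivity
  rw [charFun_apply_real, empirical, integral_finsetSum_measure, avg, Finset.sum_div]
  · refine Finset.sum_congr rfl fun n _ => ?_
    rw [integral_smul_measure, integral_dirac, ENNReal.toReal_ofReal h0, Complex.real_smul]
    push_cast
    ring
  · intro n _
    refine Integrable.smul_measure ?_ ENNReal.ofReal_ne_top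
    exact integrable_dirac (by simp)

open ProbabilityTheory in
/-- Lévy's continuity theorem followed by the portmanteau theorem at `Set.Iic a`, whose frontier `{a}`
is a null set for the Gaussian measure. -/
theorem tendsto_cdf_of_tendsto_charFun (x : ℕ → ℕ → ℝ)
    (h : ∀ t : ℝ, Tendsto (fun N : ℕ => avg N (fun n => Complex.exp ((t * x N n : ℝ) * Complex.I)))
      atTop (nhds (Complex.exp (-(t ^ 2 / 2))))) (a : ℝ) [DecidablePred (· ∈ Set.Iic a)] :
    Tendsto (fun N : ℕ => (((Finset.Ioc 0 N).filter fun n => x N n ∈ Set.Iic a).card : ℝ) / N)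
      atTop (nhds ((√(2 * Real.pi))⁻¹ * ∫ t in Set.Iic a, Real.exp (-t ^ 2 / 2))) := by
  rw [← tendsto_add_atTop_iff_nat 1]
  set μ : ℕ → ProbabilityMeasure ℝ := fun N => ⟨empirical x N, inferInstance⟩
  set γ : ProbabilityMeasure ℝ := ⟨gaussianReal 0 1, inferInstance⟩
  have hw : Tendsto μ atTop (nhds γ) := by
    rw [ProbabilityMeasure.tendsto_iff_tendsto_charFun]
    intro t
    have e : charFun (γ : Measure ℝ) t = Complex.exp (-(t ^ 2 / 2)) := by
      change charFun (gaussianReal 0 1) t = _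
      rw [charFun_gaussianReal]
      simp
    rw [e]
    refine ((tendsto_add_atTop_iff_nat 1).2 (h t)).congr fun N => ?_
    exact (charFun_empirical x N t).symm
  have hfr : (γ : Measure ℝ) (frontier (Set.Iic a)) = 0 := by
    rw [frontier_Iic]
    change gaussianReal 0 1 {a} = 0
    have : NullSingletonClass (gaussianReal 0 1) := nullSingletonClass_gaussianReal one_ne_zero
    exact measure_singleton a
  have hm := ProbabilityMeasure.tendsto_measure_of_null_frontier_of_tendsto' hw hfr
  have hm2 := (ENNReal.tendsto_toReal (measure_ne_top _ _)).comp hm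
  have e : ((γ : Measure ℝ) (Set.Iic a)).toReal =
      (√(2 * Real.pi))⁻¹ * ∫ t in Set.Iic a, Real.exp (-t ^ 2 / 2) := by
    change (gaussianReal 0 1 (Set.Iic a)).toReal = _
    rw [gaussianReal_apply_eq_integral 0 one_ne_zero, ENNReal.toReal_ofReal, gaussianPDFReal_def,
      ← integral_const_mul]
    · simp
    · exact integral_nonneg fun _ => gaussianPDFReal_nonneg _ _ _
  rw [e] at hm2
  refine hm2.congr fun N => ?_
  exact empirical_real_apply x N measurableSet_Iic

open scoped Classical in
/-- The Erdős–Kac theorem: for every `a : ℝ`, the proportion of `n ∈ [1, N]` with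
`ω(n) − log log N ≤ a · √(log log N)` tends to the standard Gaussian distribution
function `Φ(a) = (1/√(2π)) ∫_{−∞}^{a} e^{−t²/2} dt`. Here `ω(n) = n.primeFactors.card`. -/
theorem erdos_kac :
    ∀ a : ℝ,
      Tendsto
        (fun N : ℕ =>
          (((Finset.Icc 1 N).filter fun n : ℕ =>
                (n.primeFactors.card : ℝ) - Real.log (Real.log N) ≤
                  a * Real.sqrt (Real.log (Real.log N))).card : ℝ) / N)
        atTop
        (nhds ((Real.sqrt (2 * Real.pi))⁻¹ * ∫ t in Set.Iic a, Real.exp (-t ^ 2 / 2))) := by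
  intro a
  have hL : Tendsto (fun N : ℕ => Real.log (Real.log N)) atTop atTop :=
    Real.tendsto_log_atTop.comp (Real.tendsto_log_atTop.comp tendsto_natCast_atTop_atTop)
  refine (tendsto_cdf_of_tendsto_charFun
    (fun N n => ((n.primeFactors.card : ℝ) - Real.log (Real.log N)) / √(Real.log (Real.log N)))
    tendsto_avg_charFun a).congr' ?_
  filter_upwards [hL.eventually_gt_atTop 0] with N h0
  congr 3
  ext n
  simp only [Finset.mem_filter, Finset.mem_Ioc, Finset.mem_Icc, Set.mem_Iic, Nat.succ_le_iff,
    div_le_iff₀ (Real.sqrt_pos.2 h0)]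
end

section
/- Existence of near-optimal prefix codes (Shannon code): let p₁, …, pₙ be a probability distribution with p_i > 0 for all i and ∑ p_i = 1. Then there exists a prefix-free binary code c₁, …, cₙ (pairwise distinct words, none a prefix of another) whose expected length satisfies ∑_{i=1}^{n} p_i·|c_i| < H(p) + 1, where H(p) = −∑_i p_i·log₂ p_i. -/
/-!
Give the symbol of probability `p i` a codeword of length `k i = ⌈-log₂ (p i)⌉`. Then
`2 ^ (-k i) ≤ p i`, so Kraft's sum is at most `1` and a prefix-free code with these lengths exists
(`exists_prefixFree_of_kraft`); averaging `k i < -log₂ (p i) + 1` against `p` bounds its expected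
length.

The converse of Kraft's inequality is proved greedily, assigning words in order of increasing
length. Among the `2 ^ m` words of length `m`, those extending an earlier word of length `l` number
`2 ^ (m - l)`, so a Kraft sum of the earlier lengths that is below `1` leaves a word of length `m`
free (`exists_word_avoiding`).
-/

/-- The words of length `m` which extend some `c i`, `i ∈ s`, number at most
`∑ i ∈ s, 2 ^ (m - (c i).length) < 2 ^ m`, so some word of length `m` extends none of them. -/
lemma exists_word_avoiding {ι : Type*} (s : Finset ι) (c : ι → List Bool) (m : ℕ)
    (hm : ∀ i ∈ s, (c i).length ≤ m)
    (hsum : ∑ i ∈ s, ((2 : ℝ) ^ (c i).length)⁻¹ < 1) :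
    ∃ w : List Bool, w.length = m ∧ ∀ i ∈ s, ¬ c i <+: w := by
  classical
  let all : Finset (List Bool) := Finset.univ.image (List.Vector.toList (n := m))
  let bad : Finset (List Bool) := s.biUnion fun i =>
    Finset.univ.image (fun v : List.Vector Bool (m - (c i).length) => c i ++ v.toList)
  have hall : all.card = 2 ^ m := by
    rw [Finset.card_image_of_injective _ List.Vector.toList_injective, Finset.card_univ,
      card_vector, Fintype.card_bool]
  have hbad : bad.card ≤ ∑ i ∈ s, 2 ^ (m - (c i).length) := by
    refine Finset.card_biUnion_le.trans (Finset.sum_le_sum fun i _ => ?_)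
    refine Finset.card_image_le.trans ?_
    rw [Finset.card_univ, card_vector, Fintype.card_bool]
  have hlt : ∑ i ∈ s, 2 ^ (m - (c i).length) < 2 ^ m := by
    have h : ∑ i ∈ s, (2 : ℝ) ^ (m - (c i).length) < 2 ^ m := by
      calc ∑ i ∈ s, (2 : ℝ) ^ (m - (c i).length)
          = 2 ^ m * ∑ i ∈ s, ((2 : ℝ) ^ (c i).length)⁻¹ := by
            rw [Finset.mul_sum]
            exact Finset.sum_congr rfl fun i hi => pow_sub₀ 2 two_ne_zero (hm i hi)
        _ < 2 ^ m := mul_lt_of_lt_one_right (by positivity) hsum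
    exact_mod_cast h
  obtain ⟨w, hw, hwbad⟩ :=
    Finset.exists_mem_notMem_of_card_lt_card (hall ▸ hbad.trans_lt hlt : bad.card < all.card)
  obtain ⟨v, -, rfl⟩ := Finset.mem_image.1 hw
  refine ⟨v.toList, v.toList_length, ?_⟩
  rintro i hi ⟨t, ht⟩
  refine hwbad (Finset.mem_biUnion.2 ⟨i, hi, Finset.mem_image.2 ⟨⟨t, ?_⟩, Finset.mem_univ _, ht⟩⟩)
  have hl := congrArg List.length ht
  rw [List.length_append, v.toList_length] at hl
  omega

/-- Converse of Kraft's inequality for binary codes. -/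
lemma exists_prefixFree_of_kraft {ι : Type*} (k : ι → ℕ) (s : Finset ι)
    (hk : ∑ i ∈ s, ((2 : ℝ) ^ k i)⁻¹ ≤ 1) :
    ∃ c : ι → List Bool, (∀ i ∈ s, (c i).length = k i) ∧
      ∀ i ∈ s, ∀ j ∈ s, i ≠ j → ¬ c i <+: c j := by
  classical
  induction s using Finset.induction_on_max_value k with
  | empty => exact ⟨fun _ => [], by simp, by simp⟩
  | insert a s ha hmax ih =>
    rw [Finset.sum_insert ha] at hk
    have hpos : (0 : ℝ) < (2 ^ k a)⁻¹ := by positivity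
    have hlt : ∑ i ∈ s, ((2 : ℝ) ^ k i)⁻¹ < 1 := by linarith
    obtain ⟨c, hlen, hpre⟩ := ih hlt.le
    obtain ⟨w, hw, hav⟩ := exists_word_avoiding s c (k a)
      (fun i hi => (hlen i hi).trans_le (hmax i hi))
      (by rwa [Finset.sum_congr rfl fun i hi => by rw [hlen i hi]])
    have hne : ∀ i ∈ s, i ≠ a := fun i hi h => ha (h ▸ hi)
    refine ⟨Function.update c a w, ?_, ?_⟩
    · intro i hi
      rcases Finset.mem_insert.1 hi with rfl | hi
      · simpa using hw
      · simpa [hne i hi] using hlen i hi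
    · intro i hi j hj hij
      rcases Finset.mem_insert.1 hi with rfl | his <;> rcases Finset.mem_insert.1 hj with rfl | hjs
      · exact absurd rfl hij
      · rw [Function.update_self, Function.update_of_ne (hne j hjs)]
        intro h
        -- `w` is at least as long as `c j`, so as a prefix of `c j` it would equal `c j`.
        have hwc : w = c j := h.eq_of_length_le (by rw [hw, hlen j hjs]; exact hmax j hjs)
        exact hav j hjs (hwc ▸ List.prefix_rfl)
      · rw [Function.update_self, Function.update_of_ne (hne i his)]
        exact hav i his
      · rw [Function.update_of_ne (hne i his), Function.update_of_ne (hne j hjs)]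
        exact hpre i his j hjs hij

/-- Existence of near-optimal prefix codes (Shannon code): for any probability
distribution `p` with `pᵢ > 0` and `∑ pᵢ = 1`, there is a prefix-free binary code
whose expected length is less than `H(p) + 1`, where `H(p) = −∑ᵢ pᵢ log₂ pᵢ`. -/
theorem exists_shannon_code :
    ∀ (n : ℕ) (p : Fin n → ℝ),
      (∀ i, 0 < p i) → (∑ i, p i) = 1 →
      ∃ c : Fin n → List Bool,
        Function.Injective c ∧
        (∀ i j, i ≠ j → ¬ c i <+: c j) ∧
        ∑ i, p i * (c i).length < (-∑ i, p i * Real.logb 2 (p i)) + 1 := by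
  intro n p hp hsum
  have hp1 : ∀ i, p i ≤ 1 := fun i =>
    hsum ▸ Finset.single_le_sum (fun j _ => (hp j).le) (Finset.mem_univ i)
  set k : Fin n → ℕ := fun i => ⌈-Real.logb 2 (p i)⌉₊ with hkdef
  have hkp : ∀ i, ((2 : ℝ) ^ k i)⁻¹ ≤ p i := by
    intro i
    have h : -(k i : ℝ) ≤ Real.logb 2 (p i) := neg_le.1 (Nat.le_ceil _)
    rw [Real.le_logb_iff_rpow_le one_lt_two (hp i)] at h
    rwa [Real.rpow_neg zero_le_two, Real.rpow_natCast] at h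
  obtain ⟨c, hlen, hpre⟩ := exists_prefixFree_of_kraft k Finset.univ
    ((Finset.sum_le_sum fun i _ => hkp i).trans hsum.le)
  have hpre' : ∀ i j, i ≠ j → ¬ c i <+: c j := fun i j =>
    hpre i (Finset.mem_univ i) j (Finset.mem_univ j)
  refine ⟨c, ?_, hpre', ?_⟩
  · intro i j hij
    by_contra hne
    exact hpre' i j hne (hij ▸ List.prefix_rfl)
  · have hne : (Finset.univ : Finset (Fin n)).Nonempty :=
      Finset.nonempty_of_sum_ne_zero (hsum.trans_ne one_ne_zero)
    calc ∑ i, p i * ((c i).length : ℝ)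
        < ∑ i, p i * (-Real.logb 2 (p i) + 1) := by
          refine Finset.sum_lt_sum_of_nonempty hne fun i hi => ?_
          rw [hlen i hi]
          -- `⌈x⌉₊ < x + 1` needs `0 ≤ x`, which is `p i ≤ 1` here.
          exact mul_lt_mul_of_pos_left (Nat.ceil_lt_add_one
            (neg_nonneg.2 (Real.logb_nonpos one_lt_two (hp i).le (hp1 i)))) (hp i)
      _ = (-∑ i, p i * Real.logb 2 (p i)) + 1 := by
          simp only [mul_add, mul_neg, mul_one, Finset.sum_add_distrib, Finset.sum_neg_distrib,
            hsum]
end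

section
/- Kolmogorov complexity is not computable: define K : ℕ → ℕ by letting K(n) be the least natural number e such that the partial recursive function coded by e (under the standard Gödel numbering of partial recursive codes), when run on input 0, halts with output n. (K is well defined since for every n some code computes the constant function n.) Then the function K is not computable. -/
/-! The Berry paradox. A code has at most one output at `0`, so `kolmogorovComplexity` is injective, hence
unbounded. If it were computable, Kleene's second recursion theorem would give a code `c` which
searches for the first `n` of complexity greater than its own index `encode c`. The search succeeds,
so `c` is a description of that `n`, whose complexity is then at most `encode c`: a contradiction.
The recursion theorem replaces the count of the bits needed to write down the bound. -/

/-- The Kolmogorov complexity of `n`: the least index `e` (under the standard Gödel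
numbering of partial recursive codes) such that the code with index `e`, run on
input `0`, halts with output `n`. This is well defined: the set below is nonempty
because some code computes the constant function `n`, and `sInf` on `ℕ` returns its
least element. -/
noncomputable def kolmogorovComplexity (n : ℕ) : ℕ :=
  sInf {e : ℕ | n ∈ (Denumerable.ofNat Nat.Partrec.Code e).eval 0}

open Nat.Partrec in
theorem kolmogorovComplexity_spec (n : ℕ) :
    n ∈ (Denumerable.ofNat Code (kolmogorovComplexity n)).eval 0 := by
  have h : {e : ℕ | n ∈ (Denumerable.ofNat Code e).eval 0}.Nonempty :=
    ⟨Encodable.encode (Code.const n), by simp [Code.eval_const]⟩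
  exact Nat.sInf_mem h

open Nat.Partrec in
theorem kolmogorovComplexity_le {n : ℕ} {c : Code} (h : n ∈ c.eval 0) :
    kolmogorovComplexity n ≤ Encodable.encode c :=
  Nat.sInf_le (by simpa using h)

theorem kolmogorovComplexity_injective : Function.Injective kolmogorovComplexity := by
  intro m n h
  have hm := kolmogorovComplexity_spec m
  rw [h] at hm
  exact Part.mem_unique hm (kolmogorovComplexity_spec n)

theorem exists_lt_kolmogorovComplexity (m : ℕ) : ∃ n, m < kolmogorovComplexity n := by
  obtain ⟨_, ⟨n, rfl⟩, hn⟩ :=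
    (Set.infinite_range_of_injective kolmogorovComplexity_injective).exists_gt m
  exact ⟨n, hn⟩

/-- Kolmogorov complexity is not computable. -/
theorem kolmogorovComplexity_not_computable : ¬ Computable kolmogorovComplexity := by
  intro hK
  let p (c : Nat.Partrec.Code) (n : ℕ) : Bool :=
    decide (Encodable.encode c < kolmogorovComplexity n)
  have hp : Computable₂ p :=
    (Primrec.nat_lt.decide.to_comp).comp (Computable.encode.comp Computable.fst)
      (hK.comp Computable.snd)
  have hf : Partrec₂ fun (c : Nat.Partrec.Code) (_ : ℕ) => Nat.rfind (p c) :=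
    (Partrec.rfind hp.partrec₂).comp Computable.fst
  obtain ⟨c, hc⟩ := Nat.Partrec.Code.fixed_point₂ hf
  obtain ⟨k, hk⟩ := exists_lt_kolmogorovComplexity (Encodable.encode c)
  obtain ⟨n, hn, -⟩ := Nat.rfind_min' (p := p c) (m := k) (by simpa [p] using hk)
  have hlt : Encodable.encode c < kolmogorovComplexity n := by
    simpa [p] using Nat.rfind_spec hn
  have hle : kolmogorovComplexity n ≤ Encodable.encode c :=
    kolmogorovComplexity_le (by rw [hc]; exact hn)
  exact absurd hlt hle.not_gt
end
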